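/- Let 1 ≤ q₁, q₂ ≤ ∞ and 0 < r < ∞ with 1/r = 1/q₁ + 1/q₂. Suppose a ∈ S^m_{ρ,δ}(n,2) with 0 < ρ ≤ 1, δ ≤ ρ, δ < 1, and m < n(ρ−1)[ max(1/2, 1/q₁, 1/q₂, 1 − 1/r) + (1/2)·max(1/r − 1, 0) ]. Then the bilinear pseudodifferential operator T_a(f,g)(x) = ∫∫ a(x,ξ,η) e^{i⟨x, ξ+η⟩} f̂(ξ) ĝ(η) dξ dη satisfies ‖T_a(f,g)‖_{L^r} ≤ C ‖f‖_{L^{q₁}} ‖g‖_{L^{q₂}} for all Schwartz f, g. -/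

import Mathlib

open MeasureTheory Real Complex
open scoped ENNReal NNReal RealInnerProductSpace SchwartzMap Classical

noncomputable section

/-- `ℝⁿ` as a Euclidean space. -/
abbrev En (n : ℕ) : Type := EuclideanSpace ℝ (Fin n)

/-- Partial derivative in the `i`-th coordinate direction. -/
def pd {n : ℕ} {F : Type} [NormedAddCommGroup F] [NormedSpace ℝ F]
    (i : Fin n) (f : En n → F) : En n → F :=
  fun x => fderiv ℝ f x (EuclideanSpace.single i 1)

/-- Multi-index partial derivative `∂^α`. -/
def mderiv {n : ℕ} {F : Type} [NormedAddCommGroup F] [NormedSpace ℝ F]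
    (α : Fin n → ℕ) (f : En n → F) : En n → F :=
  (List.finRange n).foldr (fun i g => (pd i)^[α i] g) f

/-- The order `|α|` of a multi-index. -/
def mdeg {n : ℕ} (α : Fin n → ℕ) : ℕ := ∑ i, α i

/-- The finite set of multi-indices `α` with every entry `≤ k` and `|α| ≤ k`;
this enumerates all multi-indices of order at most `k`. -/
def multiIdx (n k : ℕ) : Finset (Fin n → ℕ) :=
  (Fintype.piFinset fun _ : Fin n => Finset.range (k + 1)).filter fun α => mdeg α ≤ k

/-- Japanese bracket `⟨ξ⟩^t = (1+|ξ|²)^{t/2}`. -/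
def jb {n : ℕ} (ξ : En n) (t : ℝ) : ℝ := (1 + ‖ξ‖ ^ 2) ^ (t / 2)

/-- The rough amplitude class `L^p S^m_ρ`. -/
def LpSm {n : ℕ} (p : ℝ≥0∞) (m ρ : ℝ) (a : En n → En n → ℂ) : Prop :=
  (∀ x, ContDiff ℝ (⊤ : ℕ∞) (a x)) ∧
  (∀ (α : Fin n → ℕ) (ξ : En n), AEStronglyMeasurable (fun x => mderiv α (a x) ξ) volume) ∧
  ∀ α : Fin n → ℕ, ∃ C : ℝ, ∀ ξ : En n,
    eLpNorm (fun x => mderiv α (a x) ξ) p volume ≤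
      ENNReal.ofReal (C * jb ξ (m - ρ * (mdeg α : ℝ)))

/-- The seminorms `|a|_{p,m,s}` of an amplitude in `L^p S^m_ρ`. -/
def aSemi {n : ℕ} (p : ℝ≥0∞) (m ρ : ℝ) (s : ℕ) (a : En n → En n → ℂ) : ℝ≥0∞ :=
  ∑ α ∈ multiIdx n s, ⨆ ξ : En n,
    ENNReal.ofReal (jb ξ (ρ * (mdeg α : ℝ) - m)) *
      eLpNorm (fun x => mderiv α (a x) ξ) p volume

/-- The mixed derivative `∂_ξ^α ∂_x^β φ(x,ξ)`. -/
def mixedD {n : ℕ} (α β : Fin n → ℕ) (φ : En n → En n → ℝ) (x ξ : En n) : ℝ :=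
  mderiv α (fun ζ => mderiv β (fun y => φ y ζ) x) ξ

/-- The phase function class `Φ^k`. -/
def PhiClass {n : ℕ} (k : ℕ) (φ : En n → En n → ℝ) : Prop :=
  ContDiffOn ℝ (⊤ : ℕ∞) (fun q : En n × En n => φ q.1 q.2) {q | q.2 ≠ 0} ∧
  (∀ (x ξ : En n) (t : ℝ), 0 < t → φ x (t • ξ) = t * φ x ξ) ∧
  ∀ α β : Fin n → ℕ, k ≤ mdeg α + mdeg β →
    ∃ C : ℝ, ∀ (x ξ : En n), ξ ≠ 0 →
      ‖ξ‖ ^ ((mdeg α : ℝ) - 1) * |mixedD α β φ x ξ| ≤ C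

/-- The mixed Hessian matrix `[∂²φ/∂x_j∂ξ_k]`. -/
def mixHess {n : ℕ} (φ : En n → En n → ℝ) (x ξ : En n) : Matrix (Fin n) (Fin n) ℝ :=
  Matrix.of fun j k => pd j (fun y => pd k (φ y) ξ) x

/-- The strong non-degeneracy (SND) condition. -/
def SNDcond {n : ℕ} (φ : En n → En n → ℝ) : Prop :=
  ∃ c : ℝ, 0 < c ∧ ∀ (x ξ : En n), ξ ≠ 0 → c ≤ |(mixHess φ x ξ).det|

/-- The Fourier transform `f̂(ξ) = ∫ e^{-i⟨y,ξ⟩} f(y) dy`. -/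
def ft {n : ℕ} (f : En n → ℂ) (ξ : En n) : ℂ :=
  ∫ y : En n, Complex.exp (-(Complex.I * Complex.ofReal ⟪y, ξ⟫)) * f y

/-- The linear Fourier integral operator
`T_a f(x) = (2π)^{-n} ∫ e^{iφ(x,ξ)} a(x,ξ) f̂(ξ) dξ`. -/
def fio {n : ℕ} (a : En n → En n → ℂ) (φ : En n → En n → ℝ) (f : En n → ℂ)
    (x : En n) : ℂ :=
  (((2 * Real.pi) ^ n)⁻¹ : ℝ) •
    ∫ ξ : En n, Complex.exp (Complex.I * Complex.ofReal (φ x ξ)) * a x ξ * ft f ξ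

/-- The conjugate exponent `p′` of `p ∈ [1,∞]`. -/
def pconj (p : ℝ≥0∞) : ℝ≥0∞ := (1 - p⁻¹)⁻¹

/-- The order `𝔪(ρ,p,q)` from Definition 4.6. -/
def frakm (n : ℕ) (ρ : ℝ) (p q : ℝ≥0∞) : ℝ :=
  if p < 2 ∨ (2 ≤ p ∧ q < pconj p) then
    (n : ℝ) * (ρ - 1) * (min p q)⁻¹.toReal -
      (((n : ℝ) - 1) / 2) * (p⁻¹.toReal + (min p q)⁻¹.toReal)
  else if 2 ≤ q then
    (n : ℝ) * (ρ - 1) / 2 - ((n : ℝ) - 1) * (1 / 2 - q⁻¹.toReal)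
  else
    (n : ℝ) * (ρ - 1) * q⁻¹.toReal -
      (((n : ℝ) - 1) / (1 - 2 * p⁻¹.toReal)) * (q⁻¹.toReal - 1 / 2)

/-- The order `ℳ(ρ,p,q)` from Definition 4.6. -/
def scrM (n : ℕ) (ρ : ℝ) (p q : ℝ≥0∞) : ℝ :=
  (n : ℝ) * (ρ - 1) * q⁻¹.toReal -
    (((n : ℝ) - 1) / (1 + p⁻¹.toReal)) * (q⁻¹.toReal - 1 / 2)

/-- The distribution function `λ_f(s) = |{x : |f(x)| > s}|`. -/
def distFn {n : ℕ} (f : En n → ℂ) (s : ℝ) : ℝ≥0∞ := volume {x : En n | s < ‖f x‖}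

/-- The decreasing rearrangement `f*`. -/
def rearr {n : ℕ} (f : En n → ℂ) (t : ℝ) : ℝ :=
  sInf {s : ℝ | 0 ≤ s ∧ distFn f s ≤ ENNReal.ofReal t}

/-- The Lorentz space quasinorm
`‖f‖_{L^{r,q}} = (∫_0^∞ (t^{1/r} f*(t))^q dt/t)^{1/q}`. -/
def lorentzNorm {n : ℕ} (r q : ℝ≥0∞) (f : En n → ℂ) : ℝ≥0∞ :=
  (∫⁻ t in Set.Ioi (0 : ℝ),
      ENNReal.ofReal ((t ^ r⁻¹.toReal * rearr f t) ^ q.toReal / t)) ^ q⁻¹.toReal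

/-- Mixed frequency derivatives `∂_ξ^{α₁} ∂_η^{α₂} a(x,ξ,η)` of a bilinear amplitude. -/
def d2 {n : ℕ} (α₁ α₂ : Fin n → ℕ) (a : En n → En n → En n → ℂ)
    (x ξ η : En n) : ℂ :=
  mderiv α₁ (fun ζ => mderiv α₂ (fun θ => a x ζ θ) η) ξ

/-- Mixed derivatives `∂_x^β ∂_ξ^{α₁} ∂_η^{α₂} a(x,ξ,η)` of a bilinear amplitude. -/
def d3 {n : ℕ} (β α₁ α₂ : Fin n → ℕ) (a : En n → En n → En n → ℂ)
    (x ξ η : En n) : ℂ :=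
  mderiv β (fun y => d2 α₁ α₂ a y ξ η) x

/-- The bilinear product-type rough amplitude class `L^p_Π S^{(m₁,m₂)}_{(ρ₁,ρ₂)}(n,2)`. -/
def LpPiSm2 {n : ℕ} (p : ℝ≥0∞) (m₁ m₂ ρ₁ ρ₂ : ℝ) (a : En n → En n → En n → ℂ) : Prop :=
  (∀ x, ContDiff ℝ (⊤ : ℕ∞) (fun q : En n × En n => a x q.1 q.2)) ∧
  (∀ (α₁ α₂ : Fin n → ℕ) (ξ η : En n),
    AEStronglyMeasurable (fun x => d2 α₁ α₂ a x ξ η) volume) ∧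
  ∀ α₁ α₂ : Fin n → ℕ, ∃ C : ℝ, ∀ ξ η : En n,
    eLpNorm (fun x => d2 α₁ α₂ a x ξ η) p volume ≤
      ENNReal.ofReal (C * jb ξ (m₁ - ρ₁ * (mdeg α₁ : ℝ)) * jb η (m₂ - ρ₂ * (mdeg α₂ : ℝ)))

/-- The bilinear rough amplitude class `L^p S^m_ρ(n,2)`. -/
def LpSm2 {n : ℕ} (p : ℝ≥0∞) (m ρ : ℝ) (a : En n → En n → En n → ℂ) : Prop :=
  (∀ x, ContDiff ℝ (⊤ : ℕ∞) (fun q : En n × En n => a x q.1 q.2)) ∧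
  (∀ (α₁ α₂ : Fin n → ℕ) (ξ η : En n),
    AEStronglyMeasurable (fun x => d2 α₁ α₂ a x ξ η) volume) ∧
  ∀ α₁ α₂ : Fin n → ℕ, ∃ C : ℝ, ∀ ξ η : En n,
    eLpNorm (fun x => d2 α₁ α₂ a x ξ η) p volume ≤
      ENNReal.ofReal (C * (1 + ‖ξ‖ + ‖η‖) ^ (m - ρ * ((mdeg α₁ : ℝ) + (mdeg α₂ : ℝ))))

/-- The bilinear Hörmander class `S^m_{ρ,δ}(n,2)`. -/
def HormS2 {n : ℕ} (m ρ δ : ℝ) (a : En n → En n → En n → ℂ) : Prop :=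
  ContDiff ℝ (⊤ : ℕ∞) (fun q : En n × En n × En n => a q.1 q.2.1 q.2.2) ∧
  ∀ β α₁ α₂ : Fin n → ℕ, ∃ C : ℝ, ∀ x ξ η : En n,
    ‖d3 β α₁ α₂ a x ξ η‖ ≤
      C * (1 + ‖ξ‖ + ‖η‖) ^ (m - ρ * ((mdeg α₁ : ℝ) + (mdeg α₂ : ℝ)) + δ * (mdeg β : ℝ))

/-- The bilinear Fourier integral operator
`T_a(f,g)(x) = ∫∫ a(x,ξ,η) e^{iφ₁(x,ξ)+iφ₂(x,η)} f̂(ξ) ĝ(η) dξ dη`. -/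
def bfio {n : ℕ} (a : En n → En n → En n → ℂ) (φ₁ φ₂ : En n → En n → ℝ)
    (f g : En n → ℂ) (x : En n) : ℂ :=
  ∫ w : En n × En n,
    a x w.1 w.2 * Complex.exp (Complex.I * Complex.ofReal (φ₁ x w.1 + φ₂ x w.2)) *
      ft f w.1 * ft g w.2

/-- Partial derivative of a function of `N` frequency variables in the `i`-th coordinate
of the `j`-th variable. -/
def pdN {n N : ℕ} (j : Fin N) (i : Fin n) (g : (Fin N → En n) → ℂ) :
    (Fin N → En n) → ℂ :=
  fun ξ => fderiv ℝ g ξ (Pi.single j (EuclideanSpace.single i 1))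

/-- Multi-index derivative `∂_{ξ₁}^{A 1} ⋯ ∂_{ξ_N}^{A N}`. -/
def mderivN {n N : ℕ} (A : Fin N → Fin n → ℕ) (g : (Fin N → En n) → ℂ) :
    (Fin N → En n) → ℂ :=
  (List.finRange N).foldr
    (fun j h => (List.finRange n).foldr (fun i h' => (pdN j i)^[A j i] h') h) g

/-- The multilinear product-type rough amplitude class `L^p_Π S^{m⃗}_{ρ⃗}(n,N)`. -/
def LpPiSmN {n N : ℕ} (p : ℝ≥0∞) (m ρ : Fin N → ℝ)
    (a : En n → (Fin N → En n) → ℂ) : Prop :=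
  (∀ x, ContDiff ℝ (⊤ : ℕ∞) (a x)) ∧
  (∀ (A : Fin N → Fin n → ℕ) (ξ : Fin N → En n),
    AEStronglyMeasurable (fun x => mderivN A (a x) ξ) volume) ∧
  ∀ A : Fin N → Fin n → ℕ, ∃ C : ℝ, ∀ ξ : Fin N → En n,
    eLpNorm (fun x => mderivN A (a x) ξ) p volume ≤
      ENNReal.ofReal (C * ∏ j, jb (ξ j) (m j - ρ j * (mdeg (A j) : ℝ)))

/-- The multilinear rough amplitude class `L^p S^m_ρ(n,N)`. -/
def LpSmN {n N : ℕ} (p : ℝ≥0∞) (m ρ : ℝ) (a : En n → (Fin N → En n) → ℂ) : Prop :=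
  (∀ x, ContDiff ℝ (⊤ : ℕ∞) (a x)) ∧
  (∀ (A : Fin N → Fin n → ℕ) (ξ : Fin N → En n),
    AEStronglyMeasurable (fun x => mderivN A (a x) ξ) volume) ∧
  ∀ A : Fin N → Fin n → ℕ, ∃ C : ℝ, ∀ ξ : Fin N → En n,
    eLpNorm (fun x => mderivN A (a x) ξ) p volume ≤
      ENNReal.ofReal (C * (1 + ∑ j, ‖ξ j‖) ^ (m - ρ * ∑ j, (mdeg (A j) : ℝ)))

/-- The multilinear Fourier integral operator. -/
def mfio {n N : ℕ} (a : En n → (Fin N → En n) → ℂ) (φ : Fin N → En n → En n → ℝ)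
    (f : Fin N → En n → ℂ) (x : En n) : ℂ :=
  ∫ ξ : Fin N → En n,
    a x ξ * Complex.exp (Complex.I * Complex.ofReal (∑ j, φ j x (ξ j))) *
      ∏ j, ft (f j) (ξ j)

/-- The Sobolev (Bessel potential) norm `‖f‖_{H^{s,q}} = ‖ℱ^{-1}(⟨ξ⟩^s f̂)‖_{L^q}`. -/
def besselNorm {n : ℕ} (s : ℝ) (q : ℝ≥0∞) (f : En n → ℂ) : ℝ≥0∞ :=
  eLpNorm (fun x : En n =>
    (((2 * Real.pi) ^ n)⁻¹ : ℝ) •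
      ∫ ξ : En n, Complex.ofReal (jb ξ s) * ft f ξ *
        Complex.exp (Complex.I * Complex.ofReal ⟪x, ξ⟫)) q volume

/-! ### Directional derivatives and pointwise derivative bounds -/

section Calc

variable {V : Type*} [NormedAddCommGroup V] [NormedSpace ℝ V]

/-- Smoothness. -/
def Sm (f : V → ℂ) : Prop := ContDiff ℝ (⊤ : ℕ∞) f

/-- Directional derivative. -/
def dd (v : V) (f : V → ℂ) : V → ℂ := fun q => fderiv ℝ f q v

theorem Sm.dd {f : V → ℂ} (hf : Sm f) (v : V) : Sm (dd v f) := by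
  have h : ContDiff ℝ (⊤ : ℕ∞) (fderiv ℝ f) := by
    apply ContDiff.fderiv_right (m := (⊤ : ℕ∞)) hf
    simp
  exact h.clm_apply contDiff_const

theorem Sm.diff {f : V → ℂ} (hf : Sm f) : Differentiable ℝ f :=
  ContDiff.differentiable hf (by simp)

theorem Sm.continuous {f : V → ℂ} (hf : Sm f) : Continuous f := ContDiff.continuous hf

theorem Sm.mul {f g : V → ℂ} (hf : Sm f) (hg : Sm g) : Sm (fun q => f q * g q) :=
  ContDiff.mul hf hg

theorem Sm.add {f g : V → ℂ} (hf : Sm f) (hg : Sm g) : Sm (fun q => f q + g q) :=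
  ContDiff.add hf hg

theorem Sm.sub {f g : V → ℂ} (hf : Sm f) (hg : Sm g) : Sm (fun q => f q - g q) :=
  ContDiff.sub hf hg

theorem Sm.conj {f : V → ℂ} (hf : Sm f) : Sm (fun q => (starRingEnd ℂ) (f q)) :=
  Complex.conjCLE.contDiff.comp hf

theorem Sm.const_mul {f : V → ℂ} (c : ℂ) (hf : Sm f) : Sm (fun q => c * f q) :=
  ContDiff.mul contDiff_const hf

theorem dd_mul {f g : V → ℂ} (hf : Sm f) (hg : Sm g) (v : V) :
    dd v (fun q => f q * g q) = fun q => dd v f q * g q + f q * dd v g q := by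
  funext q
  simp only [dd]
  rw [fderiv_fun_mul (hf.diff q) (hg.diff q)]
  simp; ring

theorem dd_add {f g : V → ℂ} (hf : Sm f) (hg : Sm g) (v : V) :
    dd v (fun q => f q + g q) = fun q => dd v f q + dd v g q := by
  funext q
  simp only [dd]
  rw [fderiv_fun_add (hf.diff q) (hg.diff q)]
  simp

theorem dd_const_mul {f : V → ℂ} (c : ℂ) (hf : Sm f) (v : V) :
    dd v (fun q => c * f q) = fun q => c * dd v f q := by
  funext q
  simp only [dd]
  rw [fderiv_const_mul (hf.diff q)]
  simp

theorem dd_conj {f : V → ℂ} (hf : Sm f) (v : V) :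
    dd v (fun q => (starRingEnd ℂ) (f q)) = fun q => (starRingEnd ℂ) (dd v f q) := by
  funext q
  simp only [dd]
  have := (Complex.conjCLE.toContinuousLinearMap.hasFDerivAt.comp q (hf.diff q).hasFDerivAt).fderiv
  have h2 := congrArg (fun L => L v) this
  simpa [Function.comp_def] using h2

theorem dd_comm {f : V → ℂ} (hf : Sm f) (v w : V) : dd v (dd w f) = dd w (dd v f) := by
  funext q
  have h : ContDiff ℝ (⊤ : ℕ∞) (fderiv ℝ f) := by
    apply ContDiff.fderiv_right (m := (⊤ : ℕ∞)) hf
    simp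
  have hd : DifferentiableAt ℝ (fderiv ℝ f) q := (h.differentiable (by simp)) q
  have key : ∀ u z : V, dd u (dd z f) q = fderiv ℝ (fderiv ℝ f) q u z := by
    intro u z
    change fderiv ℝ (fun y => fderiv ℝ f y z) q u = _
    rw [fderiv_clm_apply hd (by fun_prop)]
    simp
  rw [key, key]
  have hs : IsSymmSndFDerivAt ℝ f q := by
    apply ContDiffAt.isSymmSndFDerivAt (n := (⊤ : ℕ∞)) (ContDiff.contDiffAt hf)
    simp only [minSmoothness_of_isRCLikeNormedField]
    exact WithTop.coe_le_coe.2 (le_top : (2 : ℕ∞) ≤ ⊤)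
  exact hs v w

/-- All directional derivatives (along the family `e`) of order at most `k` of `f` at `q`
are bounded by `B`. -/
def Bd {κ : Type*} (e : κ → V) : ℕ → ℝ → (V → ℂ) → V → Prop
  | 0, B, f, q => ‖f q‖ ≤ B
  | k + 1, B, f, q => ‖f q‖ ≤ B ∧ ∀ i, Bd e k B (dd (e i) f) q

variable {κ : Type*} {e : κ → V}

theorem Bd.le {k : ℕ} {B : ℝ} {f : V → ℂ} {q : V} (h : Bd e k B f q) : ‖f q‖ ≤ B := by
  cases k with
  | zero => exact h
  | succ k => exact h.1

theorem Bd.nonneg {k : ℕ} {B : ℝ} {f : V → ℂ} {q : V} (h : Bd e k B f q) : 0 ≤ B :=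
  (norm_nonneg _).trans h.le

theorem Bd.mono {k : ℕ} {B B' : ℝ} (hB : B ≤ B') {f : V → ℂ} {q : V} (h : Bd e k B f q) :
    Bd e k B' f q := by
  induction k generalizing f with
  | zero => exact le_trans h hB
  | succ k ih => exact ⟨h.1.trans hB, fun i => ih (h.2 i)⟩

theorem Bd.pred {k : ℕ} {B : ℝ} {f : V → ℂ} {q : V} (h : Bd e (k + 1) B f q) :
    Bd e k B f q := by
  induction k generalizing f with
  | zero => exact h.1
  | succ k ih => exact ⟨h.1, fun i => ih (h.2 i)⟩

theorem Bd.anti {k l : ℕ} (hl : l ≤ k) {B : ℝ} {f : V → ℂ} {q : V} (h : Bd e k B f q) :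
    Bd e l B f q := by
  induction k with
  | zero => obtain rfl : l = 0 := by omega
            exact h
  | succ k ih =>
    rcases Nat.lt_or_ge k l with h1 | h1
    · obtain rfl : l = k + 1 := by omega
      exact h
    · exact ih h1 h.pred

theorem Bd.add {k : ℕ} {B B' : ℝ} {f g : V → ℂ} {q : V} (hf : Sm f) (hg : Sm g)
    (h : Bd e k B f q) (h' : Bd e k B' g q) : Bd e k (B + B') (fun q => f q + g q) q := by
  induction k generalizing f g with
  | zero => exact (norm_add_le _ _).trans (add_le_add h h')
  | succ k ih =>
    refine ⟨(norm_add_le _ _).trans (add_le_add h.1 h'.1), fun i => ?_⟩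
    rw [dd_add hf hg]
    exact ih (hf.dd _) (hg.dd _) (h.2 i) (h'.2 i)

theorem Bd.mul {k : ℕ} {B B' : ℝ} {f g : V → ℂ} {q : V} (hf : Sm f) (hg : Sm g)
    (h : Bd e k B f q) (h' : Bd e k B' g q) :
    Bd e k (2 ^ k * (B * B')) (fun q => f q * g q) q := by
  have hB : 0 ≤ B := h.nonneg
  have hB' : 0 ≤ B' := h'.nonneg
  induction k generalizing f g with
  | zero =>
    simp only [Bd, norm_mul, pow_zero, one_mul]
    exact mul_le_mul h h' (norm_nonneg _) hB
  | succ k ih =>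
    refine ⟨?_, fun i => ?_⟩
    · rw [norm_mul]
      refine (mul_le_mul h.1 h'.1 (norm_nonneg _) hB).trans ?_
      have : (1 : ℝ) ≤ 2 ^ (k + 1) := one_le_pow₀ (by norm_num)
      nlinarith [mul_nonneg hB hB']
    · rw [dd_mul hf hg]
      have h1 := ih (hf.dd (e i)) hg (h.2 i) h'.pred
      have h2 := ih hf (hg.dd (e i)) h.pred (h'.2 i)
      have := Bd.add ((hf.dd (e i)).mul hg) (hf.mul (hg.dd (e i))) h1 h2
      refine this.mono (le_of_eq ?_)
      ring

theorem Bd.const_mul {k : ℕ} {B : ℝ} {f : V → ℂ} {q : V} (c : ℂ) (hf : Sm f)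
    (h : Bd e k B f q) : Bd e k (‖c‖ * B) (fun q => c * f q) q := by
  induction k generalizing f with
  | zero => simp only [Bd, norm_mul]; exact mul_le_mul_of_nonneg_left h (norm_nonneg _)
  | succ k ih =>
    refine ⟨?_, fun i => ?_⟩
    · rw [norm_mul]; exact mul_le_mul_of_nonneg_left h.1 (norm_nonneg _)
    · rw [dd_const_mul c hf]; exact ih (hf.dd _) (h.2 i)

theorem Bd.conj {k : ℕ} {B : ℝ} {f : V → ℂ} {q : V} (hf : Sm f)
    (h : Bd e k B f q) : Bd e k B (fun q => (starRingEnd ℂ) (f q)) q := by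
  induction k generalizing f with
  | zero => simpa [Bd] using h
  | succ k ih =>
    refine ⟨by simpa using h.1, fun i => ?_⟩
    rw [dd_conj hf]; exact ih (hf.dd _) (h.2 i)

theorem dd_congr {f g : V → ℂ} {q : V} (h : f =ᶠ[nhds q] g) (v : V) :
    dd v f =ᶠ[nhds q] dd v g := by
  filter_upwards [h.fderiv (𝕜 := ℝ)] with y hy
  simp [dd, hy]

theorem Bd.congr {k : ℕ} {B : ℝ} {f g : V → ℂ} {q : V} (h : f =ᶠ[nhds q] g)
    (hf : Bd e k B f q) : Bd e k B g q := by
  induction k generalizing f g with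
  | zero => simpa [Bd, ← h.eq_of_nhds] using hf
  | succ k ih =>
    refine ⟨by simpa [← h.eq_of_nhds] using hf.1, fun i => ih (dd_congr h _) (hf.2 i)⟩

theorem dd_const (c : ℂ) (v : V) : dd v (fun _ => c) = fun _ => 0 := by
  funext q; simp [dd]

theorem Bd.zero {k : ℕ} {B : ℝ} (hB : 0 ≤ B) {q : V} : Bd e k B (fun _ => 0) q := by
  induction k with
  | zero => simpa [Bd] using hB
  | succ k ih => exact ⟨by simpa using hB, fun i => by rw [dd_const]; exact ih⟩

theorem Bd.const {k : ℕ} {c : ℂ} {q : V} : Bd e k ‖c‖ (fun _ => c) q := by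
  cases k with
  | zero => simp [Bd]
  | succ k => exact ⟨le_rfl, fun i => by rw [dd_const]; exact Bd.zero (norm_nonneg _)⟩

/-- A family of scalings: composition with an affine map. -/
theorem dd_comp {W : Type*} [NormedAddCommGroup W] [NormedSpace ℝ W] {f : V → ℂ} (hf : Sm f)
    (L : W →L[ℝ] V) (p : V) (v : W) :
    dd v (fun q => f (L q + p)) = fun q => dd (L v) f (L q + p) := by
  funext q
  simp only [dd]
  have h1 : HasFDerivAt (fun q => L q + p) L q := (L.hasFDerivAt).add_const p
  have := ((hf.diff (L q + p)).hasFDerivAt.comp q h1).fderiv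
  simp only [Function.comp_def] at this
  rw [this]; simp

theorem Sm.comp {W : Type*} [NormedAddCommGroup W] [NormedSpace ℝ W] {f : V → ℂ} (hf : Sm f)
    (L : W →L[ℝ] V) (p : V) : Sm (fun q => f (L q + p)) :=
  ContDiff.comp hf (L.contDiff.add contDiff_const)

theorem dd_smul {f : V → ℂ} (c : ℝ) (v : V) : dd (c • v) f = fun q => (c : ℂ) * dd v f q := by
  funext q; simp [dd]

/-- Composition with a linear map which maps the direction family into multiples (at most one)
of the other family. -/
theorem Bd.comp {W : Type*} [NormedAddCommGroup W] [NormedSpace ℝ W] {κ' : Type*} {e' : κ' → W}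
    (L : W →L[ℝ] V) (p : V)
    (hL : ∀ i, L (e' i) = 0 ∨ ∃ j, ∃ c : ℝ, |c| ≤ 1 ∧ L (e' i) = c • e j)
    {k : ℕ} {B : ℝ} {f : V → ℂ} (hf : Sm f) {q : W}
    (h : Bd e k B f (L q + p)) : Bd e' k B (fun q => f (L q + p)) q := by
  induction k generalizing f with
  | zero => exact h
  | succ k ih =>
    refine ⟨h.1, fun i => ?_⟩
    rw [dd_comp hf]
    have hB := h.nonneg
    rcases hL i with h0 | ⟨j, c, hc, hj⟩
    · rw [h0]
      have : (fun q => dd (0 : V) f (L q + p)) = fun _ => 0 := by funext q; simp [dd]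
      rw [this]; exact Bd.zero hB
    · rw [hj, dd_smul]
      have := Bd.const_mul (c : ℂ) ((hf.dd (e j)).comp L p) (ih (hf.dd (e j)) (h.2 j))
      refine this.mono ?_
      have hc' : ‖(c : ℂ)‖ ≤ 1 := by simpa using hc
      nlinarith [norm_nonneg (c : ℂ)]

end Calc

/-! ### The symbol class and joint partial derivatives -/

section Symb

variable {n : ℕ}

/-- Phase space variables `(x, ξ, η)`. -/
abbrev E3 (n : ℕ) : Type := En n × En n × En n

/-- Standard basis. -/
def sb (i : Fin n) : En n := EuclideanSpace.single i 1

/-- direction in x -/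
def eX (i : Fin n) : E3 n := (sb i, 0, 0)
/-- direction in ξ -/
def eK (i : Fin n) : E3 n := (0, sb i, 0)
/-- direction in η -/
def eH (i : Fin n) : E3 n := (0, 0, sb i)

/-- All coordinate directions. -/
def dirs : Fin n ⊕ (Fin n ⊕ Fin n) → E3 n := Sum.elim eX (Sum.elim eK eH)

/-- Joint multi-index derivative along a family. -/
def mdl {V : Type*} [NormedAddCommGroup V] [NormedSpace ℝ V] (e : Fin n → V) (l : List (Fin n))
    (α : Fin n → ℕ) (F : V → ℂ) : V → ℂ :=
  l.foldr (fun i g => (dd (e i))^[α i] g) F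

section
variable {V : Type*} [NormedAddCommGroup V] [NormedSpace ℝ V]

theorem Sm.iter {F : V → ℂ} (hF : Sm F) (v : V) (k : ℕ) : Sm ((_root_.dd v)^[k] F) := by
  induction k with
  | zero => exact hF
  | succ k ih => rw [Function.iterate_succ_apply']; exact ih.dd v

theorem dd_iter {F : V → ℂ} (hF : Sm F) (v w : V) (k : ℕ) :
    dd w ((dd v)^[k] F) = (dd v)^[k] (dd w F) := by
  induction k with
  | zero => rfl
  | succ k ih => 
    rw [Function.iterate_succ_apply', Function.iterate_succ_apply', dd_comm (hF.iter v k), ih]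

theorem Sm.mdl {F : V → ℂ} (hF : Sm F) (e : Fin n → V) (l : List (Fin n)) (α : Fin n → ℕ) :
    Sm (mdl e l α F) := by
  induction l with
  | nil => exact hF
  | cons i l ih => exact ih.iter _ _

theorem dd_mdl {F : V → ℂ} (hF : Sm F) (e : Fin n → V) (l : List (Fin n)) (α : Fin n → ℕ) (w : V) :
    dd w (mdl e l α F) = mdl e l α (dd w F) := by
  induction l with
  | nil => rfl
  | cons i l ih =>
    change dd w ((dd (e i))^[α i] (mdl e l α F)) = (dd (e i))^[α i] (mdl e l α (dd w F))
    rw [dd_iter (hF.mdl e l α), ih]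

theorem mdl_congr (e : Fin n → V) (l : List (Fin n)) {α α' : Fin n → ℕ} (F : V → ℂ)
    (h : ∀ i ∈ l, α i = α' i) : mdl e l α F = mdl e l α' F := by
  induction l with
  | nil => rfl
  | cons i l ih =>
    change (dd (e i))^[α i] (mdl e l α F) = (dd (e i))^[α' i] (mdl e l α' F)
    rw [ih (fun j hj => h j (List.mem_cons_of_mem _ hj)), h i List.mem_cons_self]

theorem mdl_succ {F : V → ℂ} (hF : Sm F) (e : Fin n → V) (l : List (Fin n)) (hl : l.Nodup)
    (α : Fin n → ℕ) (j : Fin n) (hj : j ∈ l) :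
    mdl e l α (dd (e j) F) = mdl e l (α + Pi.single j 1) F := by
  induction l with
  | nil => simp at hj
  | cons i l ih =>
    change (dd (e i))^[α i] (mdl e l α (dd (e j) F)) =
      (dd (e i))^[(α + Pi.single j 1 : Fin n → ℕ) i] (mdl e l (α + Pi.single j 1) F)
    rw [List.nodup_cons] at hl
    by_cases hij : i = j
    · subst hij
      have h1 : mdl e l (α + Pi.single i 1) F = mdl e l α F := by
        apply mdl_congr
        intro k hk
        have : k ≠ i := fun h => hl.1 (h ▸ hk)
        simp [this]
      rw [h1, ← dd_mdl hF, ← dd_iter (hF.mdl e l α)]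
      have h2 : (α + Pi.single i 1 : Fin n → ℕ) i = α i + 1 := by simp
      rw [h2, Function.iterate_succ_apply']
    · have hj' : j ∈ l := by
        rcases List.mem_cons.1 hj with h | h
        · exact absurd h.symm hij
        · exact h
      rw [ih hl.2 hj']
      have h2 : (α + Pi.single j 1 : Fin n → ℕ) i = α i := by simp [hij]
      rw [h2]
end

/-- The slice of a joint function has the multi-index derivatives of the joint function. -/
theorem mderiv_slice {V : Type*} [NormedAddCommGroup V] [NormedSpace ℝ V] {F : V → ℂ}
    (hF : Sm F) (L : En n →L[ℝ] V) (p : V) (α : Fin n → ℕ) :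
    mderiv α (fun y => F (L y + p)) = fun y => mdl (fun i => L (sb i)) (List.finRange n) α F (L y + p) := by
  unfold mderiv
  generalize List.finRange n = l
  induction l with
  | nil => rfl
  | cons i l ih =>
    change (pd i)^[α i] _ = fun y => (dd (L (sb i)))^[α i] (mdl _ l α F) (L y + p)
    rw [ih]
    have hG := hF.mdl (fun i => L (sb i)) l α
    generalize mdl (fun i => L (sb i)) l α F = G at hG
    generalize α i = k
    induction k with
    | zero => rfl
    | succ k ihk =>
      rw [Function.iterate_succ_apply', ihk, Function.iterate_succ_apply']
      exact dd_comp (hG.iter _ k) L p (sb i)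

theorem mderiv_congr_fun {α : Fin n → ℕ} {f g : En n → ℂ} (h : ∀ y, f y = g y) :
    mderiv α f = mderiv α g := by
  rw [show f = g from funext h]

/-- Uncurrying of a symbol. -/
def unc (a : En n → En n → En n → ℂ) : E3 n → ℂ := fun q => a q.1 q.2.1 q.2.2

theorem d3_eq {a : En n → En n → En n → ℂ} (ha : Sm (unc a)) (β α₁ α₂ : Fin n → ℕ)
    (x ξ η : En n) : d3 β α₁ α₂ a x ξ η =
      mdl eX (List.finRange n) β (mdl eK (List.finRange n) α₁
        (mdl eH (List.finRange n) α₂ (unc a))) (x, ξ, η) := by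
  set l := List.finRange n
  let LX : En n →L[ℝ] E3 n := ContinuousLinearMap.inl ℝ _ _
  let LK : En n →L[ℝ] E3 n := (ContinuousLinearMap.inr ℝ _ _).comp (ContinuousLinearMap.inl ℝ _ _)
  let LH : En n →L[ℝ] E3 n := (ContinuousLinearMap.inr ℝ _ _).comp (ContinuousLinearMap.inr ℝ _ _)
  have h1 : ∀ y ζ θ, mderiv α₂ (fun θ => a y ζ θ) θ = mdl eH l α₂ (unc a) (y, ζ, θ) := by
    intro y ζ θ
    have := congrFun (mderiv_slice ha LH (y, ζ, 0) α₂) θ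
    rw [show (fun i => LH (sb i)) = eH from funext fun i => by simp [LH, eH]] at this
    simpa [unc, LH] using this
  have h2 : ∀ y ζ θ, d2 α₁ α₂ a y ζ θ = mdl eK l α₁ (mdl eH l α₂ (unc a)) (y, ζ, θ) := by
    intro y ζ θ
    unfold d2
    rw [mderiv_congr_fun (fun ζ => h1 y ζ θ)]
    have := congrFun (mderiv_slice (ha.mdl eH l α₂) LK (y, 0, θ) α₁) ζ
    rw [show (fun i => LK (sb i)) = eK from funext fun i => by simp [LK, eK]] at this
    simpa [LK] using this
  unfold d3
  rw [mderiv_congr_fun (fun y => h2 y ξ η)]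
  have := congrFun (mderiv_slice ((ha.mdl eH l α₂).mdl eK l α₁) LX (0, ξ, η) β) x
  rw [show (fun i => LX (sb i)) = eX from funext fun i => by simp [LX, eX]; rfl] at this
  simpa [LX] using this

/-- Symbol estimates in uncurried form. -/
def Hor (m ρ δ : ℝ) (F : E3 n → ℂ) : Prop :=
  Sm F ∧ ∀ β α₁ α₂ : Fin n → ℕ, ∃ C : ℝ, ∀ q : E3 n,
    ‖mdl eX (List.finRange n) β (mdl eK (List.finRange n) α₁
        (mdl eH (List.finRange n) α₂ F)) q‖ ≤
      C * (1 + ‖q.2.1‖ + ‖q.2.2‖) ^ (m - ρ * ((mdeg α₁ : ℝ) + (mdeg α₂ : ℝ)) + δ * (mdeg β : ℝ))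

theorem HormS2.hor {m ρ δ : ℝ} {a : En n → En n → En n → ℂ} (ha : HormS2 m ρ δ a) :
    Hor m ρ δ (unc a) := by
  refine ⟨ha.1, fun β α₁ α₂ => ?_⟩
  obtain ⟨C, hC⟩ := ha.2 β α₁ α₂
  refine ⟨C, fun q => ?_⟩
  have := hC q.1 q.2.1 q.2.2
  rwa [d3_eq ha.1] at this

theorem mdeg_succ (α : Fin n → ℕ) (j : Fin n) : mdeg (α + Pi.single j 1) = mdeg α + 1 := by
  simp [mdeg, Finset.sum_add_distrib]

theorem Hor.dX {m ρ δ : ℝ} {F : E3 n → ℂ} (h : Hor m ρ δ F) (i : Fin n) :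
    Hor (m + δ) ρ δ (dd (eX i) F) := by
  refine ⟨h.1.dd _, fun β α₁ α₂ => ?_⟩
  obtain ⟨C, hC⟩ := h.2 (β + Pi.single i 1) α₁ α₂
  refine ⟨C, fun q => ?_⟩
  have := hC q
  rw [← mdl_succ ((h.1.mdl _ _ _).mdl _ _ _) _ _ (List.nodup_finRange n) _ _ (List.mem_finRange i),
    dd_mdl (h.1.mdl _ _ _), dd_mdl h.1, mdeg_succ] at this
  convert this using 3
  push_cast; ring

theorem Hor.dK {m ρ δ : ℝ} {F : E3 n → ℂ} (h : Hor m ρ δ F) (i : Fin n) :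
    Hor (m - ρ) ρ δ (dd (eK i) F) := by
  refine ⟨h.1.dd _, fun β α₁ α₂ => ?_⟩
  obtain ⟨C, hC⟩ := h.2 β (α₁ + Pi.single i 1) α₂
  refine ⟨C, fun q => ?_⟩
  have := hC q
  rw [← mdl_succ (h.1.mdl _ _ _) _ _ (List.nodup_finRange n) _ _ (List.mem_finRange i),
    dd_mdl h.1, mdeg_succ] at this
  convert this using 3
  push_cast; ring

theorem Hor.dH {m ρ δ : ℝ} {F : E3 n → ℂ} (h : Hor m ρ δ F) (i : Fin n) :
    Hor (m - ρ) ρ δ (dd (eH i) F) := by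
  refine ⟨h.1.dd _, fun β α₁ α₂ => ?_⟩
  obtain ⟨C, hC⟩ := h.2 β α₁ (α₂ + Pi.single i 1)
  refine ⟨C, fun q => ?_⟩
  have := hC q
  rw [← mdl_succ h.1 _ _ (List.nodup_finRange n) _ _ (List.mem_finRange i), mdeg_succ] at this
  convert this using 3
  push_cast; ring

end Symb

/-! ### Oscillating exponentials and integration by parts -/

section Osc

variable {n : ℕ}

/-- `e^{it}` -/
def ex (t : ℝ) : ℂ := Complex.exp (Complex.I * Complex.ofReal t)

theorem norm_ex (t : ℝ) : ‖ex t‖ = 1 := by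
  unfold ex; rw [mul_comm]; exact Complex.norm_exp_ofReal_mul_I t

theorem ex_add (s t : ℝ) : ex (s + t) = ex s * ex t := by
  unfold ex; rw [← Complex.exp_add]; push_cast; ring_nf

theorem ex_zero : ex 0 = 1 := by simp [ex]

theorem ex_conj (t : ℝ) : (starRingEnd ℂ) (ex t) = ex (-t) := by
  unfold ex; rw [← Complex.exp_conj]; simp

theorem contDiff_ex : ContDiff ℝ (⊤ : ℕ∞) ex := by
  unfold ex
  exact (contDiff_const.mul Complex.ofRealCLM.contDiff).cexp

theorem continuous_ex : Continuous ex := contDiff_ex.continuous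

theorem hasDerivAt_ex (t : ℝ) : HasDerivAt ex (Complex.I * ex t) t := by
  have h1 : HasDerivAt (fun t : ℝ => Complex.I * (t : ℂ)) (Complex.I * 1) t :=
    (Complex.ofRealCLM.hasDerivAt (x := t)).const_mul Complex.I
  have := h1.cexp
  unfold ex
  convert this using 1
  ring

theorem inner_sb (i : Fin n) (θ : En n) : ⟪sb i, θ⟫ = θ i := by
  simp [sb, EuclideanSpace.inner_single_left]

theorem sm_exi (θ : En n) : Sm (fun x : En n => ex ⟪x, θ⟫) :=
  contDiff_ex.comp (contDiff_id.inner ℝ contDiff_const)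

theorem dd_exi (θ : En n) (i : Fin n) :
    dd (sb i) (fun x : En n => ex ⟪x, θ⟫) = fun x => Complex.I * (θ i : ℂ) * ex ⟪x, θ⟫ := by
  funext x
  have h1 : HasFDerivAt (fun x : En n => ⟪x, θ⟫) ((innerSL ℝ).flip θ) x :=
    ((innerSL ℝ).flip θ).hasFDerivAt
  have h2 := ((hasDerivAt_ex ⟪x, θ⟫).hasFDerivAt.comp x h1).fderiv
  unfold dd
  have h3 := congrArg (fun L => L (sb i)) h2
  simp only [Function.comp_def] at h3
  rw [h3]
  have h4 : (innerSL ℝ).flip θ (sb i) = θ i := inner_sb i θ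
  simp only [ContinuousLinearMap.comp_apply, h4, ContinuousLinearMap.toSpanSingleton_apply,
    Complex.real_smul]
  ring

theorem hcs_dd {V : Type*} [NormedAddCommGroup V] [NormedSpace ℝ V] {ψ : V → ℂ}
    (h : HasCompactSupport ψ) (v : V) : HasCompactSupport (dd v ψ) :=
  h.fderiv_apply (𝕜 := ℝ) v

theorem integral_dd {ψ : En n → ℂ} (hs : Sm ψ) (hc : HasCompactSupport ψ) (θ : En n) (i : Fin n) :
    ∫ x, dd (sb i) ψ x * ex ⟪x, θ⟫ = -(Complex.I * (θ i : ℂ)) * ∫ x, ψ x * ex ⟪x, θ⟫ := by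
  have hE := sm_exi θ
  have h0 : ∀ φ : En n → ℂ, Sm φ → HasCompactSupport φ → ∀ E : En n → ℂ, Sm E →
      Integrable (fun x => φ x * E x) := fun φ h1 h2 E h3 =>
    (h1.continuous.mul h3.continuous).integrable_of_hasCompactSupport h2.mul_right
  have := integral_mul_fderiv_eq_neg_fderiv_mul_of_integrable (μ := (volume : Measure (En n)))
    (f := ψ) (g := fun x => ex ⟪x, θ⟫) (v := sb i)
    (h0 _ (hs.dd (sb i)) (hcs_dd hc _) _ hE) (h0 _ hs hc _ (hE.dd (sb i))) (h0 _ hs hc _ hE)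
    (fun x _ => hs.diff x) (fun x _ => hE.diff x)
  have h2 : ∀ x, fderiv ℝ (fun x : En n => ex ⟪x, θ⟫) x (sb i) =
      Complex.I * (θ i : ℂ) * ex ⟪x, θ⟫ := fun x => congrFun (dd_exi θ i) x
  simp_rw [h2] at this
  change _ = - ∫ x, dd (sb i) ψ x * ex ⟪x, θ⟫ at this
  rw [neg_mul, ← integral_const_mul, ← neg_eq_iff_eq_neg, ← this]
  congr 1; funext x; ring

/-- The operator `∂_v + i c`, with `c` a function. -/
def Mo {V : Type*} [NormedAddCommGroup V] [NormedSpace ℝ V] (v : V) (c : V → ℝ) (ψ : V → ℂ) :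
    V → ℂ := fun q => dd v ψ q + Complex.I * (c q : ℂ) * ψ q

/-- The operator `1 - (∂_v + i c)^2`. -/
def Op {V : Type*} [NormedAddCommGroup V] [NormedSpace ℝ V] (v : V) (c : V → ℝ) (ψ : V → ℂ) :
    V → ℂ := fun q => ψ q - Mo v c (Mo v c ψ) q

theorem integral_Mo {ψ : En n → ℂ} (hs : Sm ψ) (hc : HasCompactSupport ψ) (θ : En n) (i : Fin n)
    (c : ℝ) :
    ∫ x, Mo (sb i) (fun _ => c) ψ x * ex ⟪x, θ⟫ =
      Complex.I * (c - θ i : ℝ) * ∫ x, ψ x * ex ⟪x, θ⟫ := by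
  have hE := sm_exi θ
  have h0 : ∀ φ : En n → ℂ, Sm φ → HasCompactSupport φ →
      Integrable (fun x => φ x * ex ⟪x, θ⟫) := fun φ h1 h2 =>
    (h1.continuous.mul hE.continuous).integrable_of_hasCompactSupport h2.mul_right
  have e1 : ∀ x, Mo (sb i) (fun _ => c) ψ x * ex ⟪x, θ⟫ =
      dd (sb i) ψ x * ex ⟪x, θ⟫ + Complex.I * c * (ψ x * ex ⟪x, θ⟫) := by
    intro x; simp only [Mo]; ring
  simp_rw [e1]
  rw [integral_add (h0 _ (hs.dd _) (hcs_dd hc _)) ((h0 _ hs hc).const_mul _),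
    integral_dd hs hc, integral_const_mul]
  push_cast; ring

theorem Sm.Mo {V : Type*} [NormedAddCommGroup V] [NormedSpace ℝ V] {v : V} {c : V → ℝ} {ψ : V → ℂ}
    (hc : ContDiff ℝ (⊤ : ℕ∞) c) (h : Sm ψ) : Sm (Mo v c ψ) :=
  ContDiff.add (h.dd v) (ContDiff.mul (contDiff_const.mul (Complex.ofRealCLM.contDiff.comp hc)) h)

theorem Sm.Op {V : Type*} [NormedAddCommGroup V] [NormedSpace ℝ V] {v : V} {c : V → ℝ} {ψ : V → ℂ}
    (hc : ContDiff ℝ (⊤ : ℕ∞) c) (h : Sm ψ) : Sm (Op v c ψ) :=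
  ContDiff.sub h ((h.Mo hc).Mo hc)

theorem hcs_Mo {V : Type*} [NormedAddCommGroup V] [NormedSpace ℝ V] {v : V} {c : V → ℝ} {ψ : V → ℂ}
    (h : HasCompactSupport ψ) : HasCompactSupport (Mo v c ψ) :=
  (hcs_dd h v).add h.mul_left

theorem hcs_Op {V : Type*} [NormedAddCommGroup V] [NormedSpace ℝ V] {v : V} {c : V → ℝ} {ψ : V → ℂ}
    (h : HasCompactSupport ψ) : HasCompactSupport (Op v c ψ) := by
  have : Op v c ψ = fun q => ψ q + -(Mo v c (Mo v c ψ) q) := by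
    funext q; simp [Op, sub_eq_add_neg]
  rw [this]
  exact h.add (hcs_Mo (hcs_Mo h)).neg

theorem integral_Op {ψ : En n → ℂ} (hs : Sm ψ) (hc : HasCompactSupport ψ) (θ : En n) (i : Fin n)
    (c : ℝ) :
    ∫ x, Op (sb i) (fun _ => c) ψ x * ex ⟪x, θ⟫ =
      ((1 + (c - θ i) ^ 2 : ℝ) : ℂ) * ∫ x, ψ x * ex ⟪x, θ⟫ := by
  have hE := sm_exi θ
  have h0 : ∀ φ : En n → ℂ, Sm φ → HasCompactSupport φ →
      Integrable (fun x => φ x * ex ⟪x, θ⟫) := fun φ h1 h2 =>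
    (h1.continuous.mul hE.continuous).integrable_of_hasCompactSupport h2.mul_right
  have e1 : ∀ x, Op (sb i) (fun _ => c) ψ x * ex ⟪x, θ⟫ =
      ψ x * ex ⟪x, θ⟫ - Mo (sb i) (fun _ => c) (Mo (sb i) (fun _ => c) ψ) x * ex ⟪x, θ⟫ := by
    intro x; simp only [Op]; ring
  have hm := hs.Mo (v := sb i) (contDiff_const (c := c))
  simp_rw [e1]
  rw [integral_sub (h0 _ hs hc) (h0 _ (hm.Mo contDiff_const) (hcs_Mo (hcs_Mo hc))),
    integral_Mo hm (hcs_Mo hc), integral_Mo hs hc]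
  have := Complex.I_sq
  push_cast
  linear_combination (-(c - (θ i:ℂ))^2 * ∫ x, ψ x * ex ⟪x, θ⟫) * this

/-- bound for `Mo`. -/
theorem Bd.Mo {V : Type*} [NormedAddCommGroup V] [NormedSpace ℝ V] {κ : Type*} {e : κ → V}
    {j : κ} {c : V → ℝ} {ψ : V → ℂ} (hc : ContDiff ℝ (⊤ : ℕ∞) c) (h : Sm ψ) {k : ℕ} {B D : ℝ} {q : V}
    (hD : Bd e k D (fun q => (c q : ℂ)) q)
    (hB : Bd e (k + 1) B ψ q) : Bd e k (B * (1 + 2 ^ k * D)) (Mo (e j) c ψ) q := by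
  have hc' : Sm (fun q => (c q : ℂ)) := Complex.ofRealCLM.contDiff.comp hc
  have h1 := hB.2 j
  have h2 := Bd.mul hc' h hD hB.pred
  have h3 := Bd.const_mul Complex.I (hc'.mul h) h2
  have h4 := Bd.add (h.dd (e j)) ((hc'.mul h).const_mul Complex.I) h1 h3
  have e1 : _root_.Mo (e j) c ψ = fun q => dd (e j) ψ q + Complex.I * ((c q : ℂ) * ψ q) := by
    funext q; simp only [_root_.Mo]; ring
  rw [e1]
  refine h4.mono (le_of_eq ?_)
  simp; ring

theorem Bd.Op {V : Type*} [NormedAddCommGroup V] [NormedSpace ℝ V] {κ : Type*} {e : κ → V}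
    {j : κ} {c : V → ℝ} {ψ : V → ℂ} (hc : ContDiff ℝ (⊤ : ℕ∞) c) (h : Sm ψ) {k : ℕ} {B D : ℝ} {q : V}
    (hD : Bd e (k + 1) D (fun q => (c q : ℂ)) q)
    (hB : Bd e (k + 2) B ψ q) :
    Bd e k (B * (1 + (1 + 2 ^ (k+1) * D) * (1 + 2 ^ k * D))) (Op (e j) c ψ) q := by
  have h1 := Bd.Mo (j := j) hc h hD hB
  have h2 := Bd.Mo (j := j) hc (h.Mo hc) hD.pred h1
  have h3 := Bd.const_mul (-1) ((h.Mo hc).Mo hc) h2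
  have h4 := Bd.add h (((h.Mo (v := e j) hc).Mo (v := e j) hc).const_mul (-1)) hB.pred.pred h3
  have e1 : _root_.Op (e j) c ψ = fun q => ψ q + -1 * (_root_.Mo (e j) c (_root_.Mo (e j) c ψ) q) := by
    funext q; simp only [_root_.Op]; ring
  rw [e1]
  refine h4.mono (le_of_eq ?_)
  simp; ring

/-! ### The weight -/

/-- The weight `∏ (1 + θ_i²)⁻¹`. -/
def wt (θ : En n) : ℝ := ∏ i, (1 + (θ i) ^ 2)⁻¹

theorem wt_pos (θ : En n) : 0 < wt θ := Finset.prod_pos fun i _ => by positivity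

theorem wt_le_one (θ : En n) : wt θ ≤ 1 :=
  Finset.prod_le_one (fun i _ => by positivity) fun i _ => inv_le_one_of_one_le₀ (by nlinarith [sq_nonneg (θ i)])

theorem wt_continuous : Continuous (wt (n := n)) := by
  unfold wt
  refine continuous_finsetProd _ fun i _ => Continuous.inv₀ (by fun_prop) fun θ => by positivity

theorem wt_integrable : Integrable (wt (n := n)) := by
  rw [← (PiLp.volume_preserving_toLp (Fin n)).integrable_comp_emb
    (MeasurableEquiv.toLp 2 (Fin n → ℝ)).measurableEmbedding]
  have := Integrable.fintype_prod (μ := fun _ : Fin n => (volume : Measure ℝ))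
    (f := fun (i : Fin n) (t : ℝ) => (1 + t ^ 2)⁻¹) (fun i => integrable_inv_one_add_sq)
  exact this

theorem wt_neg (θ : En n) : wt (-θ) = wt θ := by simp [wt]

end Osc

section Planch

variable {n : ℕ}
open scoped FourierTransform ContDiff

theorem fourier_ae {u : En n → ℂ} (h1 : Integrable u) (h2 : MemLp u 2) :
    (𝓕 u) =ᵐ[volume] ((𝓕 (h2.toLp u) : Lp ℂ 2 (volume : Measure (En n))) : En n → ℂ) := by
  have hc : Continuous (𝓕 u) := VectorFourier.fourierIntegral_continuous Real.continuous_fourierChar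
      (by exact continuous_inner) h1
  refine ae_eq_of_integral_contDiff_smul_eq hc.locallyIntegrable
    ((Lp.memLp _).locallyIntegrable (by norm_num)) fun g hg hgc => ?_
  have hg₁ : HasCompactSupport (Complex.ofRealCLM ∘ g) := hgc.comp_left rfl
  have hg₂ : ContDiff ℝ ∞ (Complex.ofRealCLM ∘ g) := by fun_prop
  set G : 𝓢(En n, ℂ) := hg₁.toSchwartzMap hg₂ with hG
  have hGx : ∀ x, G x = (g x : ℂ) := fun x => rfl
  have e1 := congrArg (fun T => T G) (Lp.fourier_toTemperedDistribution_eq (h2.toLp u))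
  simp only [TemperedDistribution.fourier_apply, Lp.toTemperedDistribution_apply] at e1
  have e2 : ∫ x, g x • ((𝓕 (h2.toLp u) : Lp ℂ 2 (volume : Measure (En n))) : En n → ℂ) x =
      ∫ x, G x • ((𝓕 (h2.toLp u) : Lp ℂ 2 (volume : Measure (En n))) : En n → ℂ) x := by
    congr 1
  rw [e2, ← e1]
  have e3 : ∫ x, (𝓕 G : 𝓢(En n, ℂ)) x • (h2.toLp u : En n → ℂ) x = ∫ x, 𝓕 (⇑G) x • u x := by
    apply integral_congr_ae
    filter_upwards [h2.coeFn_toLp] with x hx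
    rw [hx]; rfl
  rw [e3]
  have := VectorFourier.integral_fourierIntegral_smul_eq_flip (L := innerₗ (En n))
      Real.continuous_fourierChar continuous_inner (G.integrable (μ := volume)) h1
  simp only [flip_innerₗ] at this
  refine Eq.trans ?_ this.symm
  congr 1

theorem ft_eq_fourier (u : En n → ℂ) (ξ : En n) : ft u ξ = 𝓕 u ((2 * π)⁻¹ • ξ) := by
  rw [Real.fourier_eq', ft]
  congr 1; funext y
  rw [smul_eq_mul]; congr 2
  rw [inner_smul_right]
  push_cast
  have : (π : ℂ) ≠ 0 := by exact_mod_cast Real.pi_ne_zero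
  field_simp

theorem lint_smul (F : En n → ℝ≥0∞) {c : ℝ} (hc : 0 < c) :
    ∫⁻ x, F (c • x) = ENNReal.ofReal ((c ^ n)⁻¹) * ∫⁻ x, F x := by
  have h := Measure.map_addHaar_smul (volume : Measure (En n)) hc.ne'
  have h2 : ∫⁻ x, F x ∂(Measure.map (fun x => c • x) volume) = ∫⁻ x, F (c • x) :=
    (Homeomorph.smulOfNeZero c hc.ne').toMeasurableEquiv.measurableEmbedding.lintegral_map _
  rw [← h2]
  change ∫⁻ x, F x ∂(Measure.map (c • ·) volume) = _
  rw [h, lintegral_smul_measure]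
  simp [abs_of_pos hc]

theorem planch {u : En n → ℂ} (h1 : Integrable u) (h2 : MemLp u 2) :
    ∫⁻ ξ, ‖ft u ξ‖ₑ ^ 2 = ENNReal.ofReal ((2 * π) ^ n) * ∫⁻ y, ‖u y‖ₑ ^ 2 := by
  have key : ∀ v : En n → ℂ, ∫⁻ x, ‖v x‖ₑ ^ 2 = (eLpNorm v 2 volume) ^ 2 := by
    intro v
    rw [eLpNorm_eq_lintegral_rpow_enorm_toReal (by norm_num) (by norm_num)]
    rw [← ENNReal.rpow_natCast, ← ENNReal.rpow_mul]
    simp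
  have e1 : ∫⁻ ξ, ‖𝓕 u ξ‖ₑ ^ 2 = ∫⁻ y, ‖u y‖ₑ ^ 2 := by
    rw [key, key, eLpNorm_congr_ae (fourier_ae h1 h2), ← Lp.enorm_def, ← ofReal_norm,
      Lp.norm_fourier_eq, ofReal_norm, Lp.enorm_def, eLpNorm_congr_ae h2.coeFn_toLp]
  simp_rw [ft_eq_fourier]
  rw [lint_smul (fun x => ‖𝓕 u x‖ₑ ^ 2) (by positivity), e1, inv_pow, inv_inv]

theorem ft_continuous {u : En n → ℂ} (h1 : Integrable u) : Continuous (ft u) := by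
  have hc : Continuous (𝓕 u) := VectorFourier.fourierIntegral_continuous Real.continuous_fourierChar
      (by exact continuous_inner) h1
  have : ft u = fun ξ => 𝓕 u ((2 * π)⁻¹ • ξ) := funext (ft_eq_fourier u)
  rw [this]
  exact hc.comp (continuous_const_smul _)

theorem ft_le (u : En n → ℂ) (ξ : En n) : ‖ft u ξ‖ₑ ≤ ∫⁻ y, ‖u y‖ₑ := by
  refine (enorm_integral_le_lintegral_enorm _).trans (le_of_eq ?_)
  congr 1; funext y
  rw [enorm_mul]
  have : ‖Complex.exp (-(Complex.I * Complex.ofReal ⟪y, ξ⟫))‖ₑ = 1 := by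
    have h := norm_ex (-⟪y, ξ⟫)
    unfold ex at h
    rw [← ofReal_norm]
    have e : -(Complex.I * Complex.ofReal ⟪y, ξ⟫) = Complex.I * Complex.ofReal (-⟪y, ξ⟫) := by
      push_cast; ring
    rw [e, h]; simp
  rw [this, one_mul]

end Planch

section Bern

variable {n : ℕ}

/-- Local square norm of the Fourier side. -/
def NR (R : ℝ) (U : En n → ℂ) : ℝ≥0∞ := ∫⁻ ξ in Metric.closedBall (0 : En n) R, ‖U ξ‖ₑ ^ 2

theorem wt_memLp {s : ℝ≥0∞} (hs : 1 ≤ s) : MemLp (wt (n := n)) s volume := by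
  have hm : AEStronglyMeasurable (wt (n := n)) volume := wt_continuous.aestronglyMeasurable
  have hb : ∀ x, ‖wt (n := n) x‖ ≤ 1 := fun x => by
    rw [Real.norm_of_nonneg (wt_pos x).le]; exact wt_le_one x
  rcases eq_or_ne s ⊤ with rfl | hs'
  · exact memLp_top_of_bound hm 1 (Filter.Eventually.of_forall hb)
  refine ⟨hm, ?_⟩
  have hs0 : s ≠ 0 := (zero_lt_one.trans_le hs).ne'
  rw [eLpNorm_lt_top_iff_lintegral_rpow_enorm_lt_top hs0 hs']
  refine lt_of_le_of_lt (lintegral_mono fun x => ?_) wt_integrable.2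
  have h1 : ‖wt (n := n) x‖ₑ ≤ 1 := by
    rw [← ofReal_norm]; exact ENNReal.ofReal_le_one.2 (hb x)
  have h2 : (1 : ℝ) ≤ s.toReal := by
    rw [← ENNReal.toReal_one]; exact ENNReal.toReal_mono hs' hs
  calc ‖wt (n := n) x‖ₑ ^ s.toReal ≤ ‖wt (n := n) x‖ₑ ^ (1 : ℝ) :=
        ENNReal.rpow_le_rpow_of_exponent_ge h1 h2
    _ = _ := by simp

theorem lint_sq_eq (v : En n → ℂ) : ∫⁻ x, ‖v x‖ₑ ^ 2 = (eLpNorm v 2 volume) ^ 2 := by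
  rw [eLpNorm_eq_lintegral_rpow_enorm_toReal (by norm_num) (by norm_num)]
  rw [← ENNReal.rpow_natCast, ← ENNReal.rpow_mul]
  simp

theorem vol_ball (R : ℝ) (hR : 0 ≤ R) : (volume (Metric.closedBall (0 : En n) R)) =
    ENNReal.ofReal (R ^ n) * volume (Metric.closedBall (0 : En n) 1) := by
  rw [Measure.addHaar_closedBall' volume _ hR]; simp

theorem vol_ball_ne : volume (Metric.closedBall (0 : En n) 1) ≠ ⊤ :=
  measure_closedBall_lt_top.ne

theorem bern_low (q : ℝ) (hq1 : 1 ≤ q) (hq2 : q ≤ 2) : ∃ C : ℝ≥0∞, C ≠ ⊤ ∧ ∀ R : ℝ, 1 ≤ R →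
    ∀ u : En n → ℂ, Integrable u → MemLp u 2 → MemLp u (ENNReal.ofReal q) →
    NR R (ft u) ≤ C * ENNReal.ofReal (R ^ (n * (2 / q - 1))) *
      (eLpNorm u (ENNReal.ofReal q) volume) ^ 2 := by
  set b := volume (Metric.closedBall (0 : En n) 1)
  refine ⟨2 * b + 2 * ENNReal.ofReal ((2 * π) ^ n), ?_, fun R hR u h1 h2 hq => ?_⟩
  · exact ENNReal.add_ne_top.2 ⟨ENNReal.mul_ne_top (by simp) vol_ball_ne,
      ENNReal.mul_ne_top (by simp) (by simp)⟩
  have hq0 : 0 < q := by linarith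
  have hR0 : 0 < R := by linarith
  set N := eLpNorm u (ENNReal.ofReal q) volume with hN
  have hNt : N ≠ ⊤ := hq.2.ne
  have hofq : ENNReal.ofReal q ≠ 0 := by simpa using hq0
  have hNq : ∫⁻ y, ‖u y‖ₑ ^ q = N ^ q := by
    rw [hN, eLpNorm_eq_lintegral_rpow_enorm_toReal hofq (by simp), ENNReal.toReal_ofReal hq0.le,
      ← ENNReal.rpow_mul]
    simp [hq0.ne']
  rcases eq_or_ne N 0 with hN0 | hN0
  · have hu : u =ᵐ[volume] 0 := by
      rwa [hN, eLpNorm_eq_zero_iff h1.1 hofq] at hN0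
    have : ∀ ξ, ft u ξ = 0 := by
      intro ξ
      unfold ft
      rw [integral_congr_ae (g := fun _ => 0)]
      · simp
      · filter_upwards [hu] with y hy
        simp [hy]
    simp [NR, this]
  set r : ℝ≥0∞ := ENNReal.ofReal R with hr
  have hr0 : r ≠ 0 := by simpa [hr] using hR0
  have hrt : r ≠ ⊤ := by simp [hr]
  have hrp : ∀ t : ℝ, ENNReal.ofReal (R ^ t) = r ^ t := fun t => by
    rw [hr, ENNReal.ofReal_rpow_of_pos hR0]
  set a : ℝ≥0∞ := r ^ ((n : ℝ) / q) with ha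
  have ha0 : a ≠ 0 := by simp [ha, hr0, hrt]
  have hat : a ≠ ⊤ := by simp [ha, hr0, hrt]
  set Λ : ℝ≥0∞ := a * N with hΛ
  have hΛ0 : Λ ≠ 0 := mul_ne_zero ha0 hN0
  have hΛt : Λ ≠ ⊤ := ENNReal.mul_ne_top hat hNt
  have hu' := h1.1
  obtain ⟨v, hv, huv⟩ : ∃ v : En n → ℂ, StronglyMeasurable v ∧ u =ᵐ[volume] v :=
    ⟨h1.1.mk u, h1.1.stronglyMeasurable_mk, h1.1.ae_eq_mk⟩
  set S : Set (En n) := {y | Λ < ‖v y‖ₑ} with hS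
  have hSm : MeasurableSet S := measurableSet_lt measurable_const hv.measurable.enorm
  set u1 : En n → ℂ := S.indicator v with hu1
  set u2 : En n → ℂ := Sᶜ.indicator v with hu2
  have hvi : Integrable v := h1.congr huv
  have hv2 : MemLp v 2 := h2.ae_eq huv
  have hvNq : ∫⁻ y, ‖v y‖ₑ ^ q = N ^ q := by
    rw [← hNq]; apply lintegral_congr_ae; filter_upwards [huv] with y hy; rw [hy]
  have i1 : Integrable u1 := hvi.indicator hSm
  have i2 : Integrable u2 := hvi.indicator hSm.compl
  have m2 : MemLp u2 2 := hv2.indicator hSm.compl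
  have hft : ∀ ξ, ft u ξ = ft u1 ξ + ft u2 ξ := by
    intro ξ
    unfold ft
    have hcont : Continuous fun y : En n => Complex.exp (-(Complex.I * Complex.ofReal ⟪y, ξ⟫)) := by
      fun_prop
    have hbd : ∀ y : En n, ‖Complex.exp (-(Complex.I * Complex.ofReal ⟪y, ξ⟫))‖ ≤ 1 := by
      intro y
      have := norm_ex (-⟪y, ξ⟫)
      unfold ex at this
      rw [show -(Complex.I * Complex.ofReal ⟪y, ξ⟫) = Complex.I * Complex.ofReal (-⟪y, ξ⟫) by
        push_cast; ring, this]
    rw [← integral_add (i1.bdd_mul hcont.aestronglyMeasurable (Filter.Eventually.of_forall hbd))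
      (i2.bdd_mul hcont.aestronglyMeasurable (Filter.Eventually.of_forall hbd))]
    apply integral_congr_ae
    filter_upwards [huv] with y hy
    rw [hy, ← mul_add]
    congr 1
    exact (congrFun (Set.indicator_self_add_compl S v) y).symm
  have b1 : ∫⁻ y, ‖u1 y‖ₑ ≤ Λ ^ (1 - q) * N ^ q := by
    rw [← hvNq, ← lintegral_const_mul' _ _ (ENNReal.rpow_ne_top_of_ne_zero hΛ0 hΛt)]
    refine lintegral_mono fun y => ?_
    by_cases hy : y ∈ S
    · rw [hu1, Set.indicator_of_mem hy]
      have hy' : Λ < ‖v y‖ₑ := hy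
      have hy0 : ‖v y‖ₑ ≠ 0 := (pos_of_gt hy').ne'
      have hyt : ‖v y‖ₑ ≠ ⊤ := enorm_ne_top
      calc ‖v y‖ₑ = ‖v y‖ₑ ^ (1 - q) * ‖v y‖ₑ ^ q := by
            rw [← ENNReal.rpow_add _ _ hy0 hyt]; simp
        _ ≤ _ := by
            gcongr ?_ * _
            rw [show 1 - q = -(q - 1) by ring, ENNReal.rpow_neg, ENNReal.rpow_neg]
            exact ENNReal.inv_le_inv.2 (ENNReal.rpow_le_rpow hy'.le (by linarith))
    · rw [hu1, Set.indicator_of_notMem hy]; simp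
  have b2 : ∫⁻ y, ‖u2 y‖ₑ ^ 2 ≤ Λ ^ (2 - q) * N ^ q := by
    rw [← hvNq, ← lintegral_const_mul' _ _ (ENNReal.rpow_ne_top_of_ne_zero hΛ0 hΛt)]
    refine lintegral_mono fun y => ?_
    by_cases hy : y ∈ S
    · rw [hu2, Set.indicator_of_notMem (by simpa using hy)]; simp
    · rw [hu2, Set.indicator_of_mem (by simpa using hy)]
      have hy' : ‖v y‖ₑ ≤ Λ := not_lt.1 hy
      rcases eq_or_ne (‖v y‖ₑ) 0 with hy0 | hy0
      · simp [hy0]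
      have hyt : ‖v y‖ₑ ≠ ⊤ := enorm_ne_top
      calc ‖v y‖ₑ ^ 2 = ‖v y‖ₑ ^ (2 - q) * ‖v y‖ₑ ^ q := by
            rw [← ENNReal.rpow_add _ _ hy0 hyt]; simp
        _ ≤ _ := by
            gcongr
  have c1 : Λ ^ (1 - q) * N ^ q = r ^ ((n : ℝ) / q - n) * N := by
    rw [hΛ, ENNReal.mul_rpow_of_ne_zero ha0 hN0, mul_assoc, ← ENNReal.rpow_add _ _ hN0 hNt, ha,
      ← ENNReal.rpow_mul]
    have : (n : ℝ) / q * (1 - q) = n / q - n := by field_simp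
    rw [this]; simp
  have c2 : Λ ^ (2 - q) * N ^ q = r ^ ((n : ℝ) * (2 / q - 1)) * N ^ 2 := by
    rw [hΛ, ENNReal.mul_rpow_of_ne_zero ha0 hN0, mul_assoc, ← ENNReal.rpow_add _ _ hN0 hNt, ha,
      ← ENNReal.rpow_mul]
    have : (n : ℝ) / q * (2 - q) = n * (2 / q - 1) := by field_simp
    rw [this]; simp
  have d1 : NR R (ft u1) ≤ b * r ^ ((n : ℝ) * (2 / q - 1)) * N ^ 2 := by
    unfold NR
    calc ∫⁻ ξ in Metric.closedBall (0 : En n) R, ‖ft u1 ξ‖ₑ ^ 2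
        ≤ ∫⁻ ξ in Metric.closedBall (0 : En n) R, (r ^ ((n : ℝ) / q - n) * N) ^ 2 := by
          refine lintegral_mono fun ξ => ?_
          have := (ft_le u1 ξ).trans (b1.trans c1.le)
          gcongr
      _ = (r ^ ((n : ℝ) / q - n) * N) ^ 2 * (ENNReal.ofReal (R ^ n) * b) := by
          rw [lintegral_const, Measure.restrict_apply_univ, vol_ball R hR0.le]
      _ = b * (r ^ (2 * ((n : ℝ) / q - n)) * r ^ (n : ℝ)) * N ^ 2 := by
          rw [mul_pow, ← ENNReal.rpow_natCast (r ^ ((n : ℝ) / q - n)), ← ENNReal.rpow_mul]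
          rw [← hrp n, Real.rpow_natCast]
          push_cast
          rw [mul_comm ((n : ℝ) / q - n) 2]
          ring
      _ = _ := by
          rw [← ENNReal.rpow_add _ _ hr0 hrt]
          congr 3
          field_simp; ring
  have d2 : NR R (ft u2) ≤ ENNReal.ofReal ((2 * π) ^ n) * r ^ ((n : ℝ) * (2 / q - 1)) * N ^ 2 := by
    refine (setLIntegral_le_lintegral _ _).trans ?_
    rw [planch i2 m2, mul_assoc]
    gcongr
    exact b2.trans c2.le
  have e : NR R (ft u) ≤ 2 * NR R (ft u1) + 2 * NR R (ft u2) := by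
    unfold NR
    rw [← lintegral_const_mul' _ _ (by simp), ← lintegral_const_mul' _ _ (by simp),
      ← lintegral_add_left']
    · refine lintegral_mono fun ξ => ?_
      rw [hft]
      calc ‖ft u1 ξ + ft u2 ξ‖ₑ ^ 2 ≤ (‖ft u1 ξ‖ₑ + ‖ft u2 ξ‖ₑ) ^ 2 := by
            gcongr; exact enorm_add_le _ _
        _ ≤ _ := by
            have := ENNReal.rpow_add_le_mul_rpow_add_rpow ‖ft u1 ξ‖ₑ ‖ft u2 ξ‖ₑ (p := 2) (by norm_num)
            norm_num at this
            rwa [← mul_add]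
    · exact (((ft_continuous i1).enorm.measurable.pow_const 2).const_mul 2).aemeasurable
  rw [hrp]
  calc NR R (ft u) ≤ _ := e
    _ ≤ 2 * (b * r ^ ((n : ℝ) * (2 / q - 1)) * N ^ 2) +
      2 * (ENNReal.ofReal ((2 * π) ^ n) * r ^ ((n : ℝ) * (2 / q - 1)) * N ^ 2) := by gcongr
    _ = _ := by ring

/-- Loss exponent. -/
def lossE (q : ℝ≥0∞) : ℝ := max (2 * q⁻¹.toReal - 1) 0

/-- A function lying in every `L^p`. -/
def Nice (f : En n → ℂ) : Prop := ∀ p : ℝ≥0∞, MemLp f p volume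

theorem Nice.integrable {f : En n → ℂ} (hf : Nice f) : Integrable f := memLp_one_iff_integrable.1 (hf 1)

/-- Multiplication by the weight. -/
def wm (f : En n → ℂ) : En n → ℂ := fun x => (wt x : ℂ) * f x

theorem norm_wm_le (f : En n → ℂ) (x : En n) : ‖wm f x‖ ≤ ‖f x‖ := by
  unfold wm
  rw [norm_mul, Complex.norm_real, Real.norm_of_nonneg (wt_pos x).le]
  nlinarith [norm_nonneg (f x), wt_le_one x]

theorem Nice.wm {f : En n → ℂ} (hf : Nice f) : Nice (wm f) := fun p =>
  (hf p).mono ((Complex.continuous_ofReal.comp wt_continuous).aestronglyMeasurable.mul (hf p).1)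
    (Filter.Eventually.of_forall (norm_wm_le f))

theorem bern (q : ℝ≥0∞) (hq : 1 ≤ q) : ∃ C : ℝ≥0∞, C ≠ ⊤ ∧ ∀ R : ℝ, 1 ≤ R →
    ∀ f : En n → ℂ, Nice f →
    NR R (ft (wm (wm f))) ≤ C * ENNReal.ofReal (R ^ (n * lossE q)) * (eLpNorm (wm f) q volume) ^ 2 := by
  rcases le_total q 2 with h2 | h2
  · have hqt : q ≠ ⊤ := fun h => by simp [h] at h2
    obtain ⟨t, rfl⟩ : ∃ t : ℝ, q = ENNReal.ofReal t := ⟨q.toReal, (ENNReal.ofReal_toReal hqt).symm⟩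
    have ht1 : 1 ≤ t := by
      by_contra h
      have : ENNReal.ofReal t < 1 := by rw [ENNReal.ofReal_lt_one]; linarith
      exact absurd hq (not_le.2 this)
    have ht2 : t ≤ 2 := by
      have := ENNReal.toReal_mono (by simp) h2
      rwa [ENNReal.toReal_ofReal (by linarith), ENNReal.toReal_ofNat] at this
    obtain ⟨C, hC, h⟩ := bern_low (n := n) t ht1 ht2
    refine ⟨C, hC, fun R hR f hf => ?_⟩
    have e : lossE (ENNReal.ofReal t) = 2 / t - 1 := by
      unfold lossE
      rw [ENNReal.toReal_inv, ENNReal.toReal_ofReal (by linarith), max_eq_left]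
      · rw [div_eq_mul_inv]
      · have : (2:ℝ)⁻¹ ≤ t⁻¹ := inv_anti₀ (by linarith) ht2
        linarith
    rw [e]
    refine (h R hR _ hf.wm.wm.integrable (hf.wm.wm 2) (hf.wm.wm _)).trans ?_
    gcongr
    exact eLpNorm_mono (norm_wm_le _)
  · have hex : ∃ s : ℝ≥0∞, s⁻¹ + q⁻¹ = 2⁻¹ ∧ 1 ≤ s := by
      have hle : q⁻¹ ≤ 2⁻¹ := ENNReal.inv_le_inv.2 h2
      refine ⟨(2⁻¹ - q⁻¹)⁻¹, by rw [inv_inv, tsub_add_cancel_of_le hle], ?_⟩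
      rw [ENNReal.one_le_inv]
      exact tsub_le_self.trans (by simp)
    obtain ⟨s, hs, hs1⟩ := hex
    have : ENNReal.HolderTriple s q 2 := ⟨hs⟩
    refine ⟨ENNReal.ofReal ((2 * π) ^ n) * (eLpNorm (wt (n := n)) s volume) ^ 2, ?_,
      fun R hR f hf => ?_⟩
    · exact ENNReal.mul_ne_top (by simp) (ENNReal.pow_ne_top (wt_memLp hs1).2.ne)
    · have e : lossE q = 0 := by
        unfold lossE
        rw [max_eq_right]
        have : q⁻¹.toReal ≤ (2⁻¹ : ℝ≥0∞).toReal :=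
          ENNReal.toReal_mono (by simp) (ENNReal.inv_le_inv.2 h2)
        simp only [ENNReal.toReal_inv, ENNReal.toReal_ofNat] at this ⊢
        linarith
      rw [e]
      simp only [mul_zero, Real.rpow_zero, ENNReal.ofReal_one, mul_one]
      refine (setLIntegral_le_lintegral _ _).trans ?_
      rw [planch hf.wm.wm.integrable (hf.wm.wm 2), lint_sq_eq, mul_assoc, ← mul_pow]
      gcongr
      have := eLpNorm_smul_le_mul_eLpNorm (p := s) (q := q) (r := 2) (hf.wm q).1
        (wt_continuous (n := n)).aestronglyMeasurable (μ := volume)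
      refine le_trans (le_of_eq ?_) this
      congr 1

end Bern

section OpL

variable {n : ℕ} {V : Type*} [NormedAddCommGroup V] [NormedSpace ℝ V]

theorem dd_vanish {S : Set V} (hS : IsClosed S) {ψ : V → ℂ} (h : ∀ q, q ∉ S → ψ q = 0) (v : V) :
    ∀ q, q ∉ S → dd v ψ q = 0 := by
  intro q hq
  have he : ψ =ᶠ[nhds q] fun _ => 0 := by
    filter_upwards [hS.isOpen_compl.mem_nhds hq] with y hy using h y hy
  have := (dd_congr he v).eq_of_nhds
  rw [this, dd_const]

theorem Op_vanish {S : Set V} (hS : IsClosed S) {ψ : V → ℂ} (h : ∀ q, q ∉ S → ψ q = 0) (v : V)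
    (c : V → ℝ) : ∀ q, q ∉ S → Op v c ψ q = 0 := by
  have hM : ∀ φ : V → ℂ, (∀ q, q ∉ S → φ q = 0) → ∀ q, q ∉ S → Mo v c φ q = 0 := by
    intro φ hφ q hq
    simp [Mo, hφ q hq, dd_vanish hS hφ v q hq]
  intro q hq
  simp [Op, h q hq, hM _ (hM _ h) q hq]

/-- Iterated operators. -/
def opL (e : Fin n → V) (c : Fin n → V → ℝ) (l : List (Fin n)) (ψ : V → ℂ) : V → ℂ :=
  l.foldr (fun i g => Op (e i) (c i) g) ψ

theorem Sm.opL {e : Fin n → V} {c : Fin n → V → ℝ} (hc : ∀ i, ContDiff ℝ (⊤ : ℕ∞) (c i))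
    (l : List (Fin n)) {ψ : V → ℂ} (h : Sm ψ) : Sm (opL e c l ψ) := by
  induction l with
  | nil => exact h
  | cons i l ih => exact ih.Op (hc i)

theorem hcs_opL {e : Fin n → V} {c : Fin n → V → ℝ}
    (l : List (Fin n)) {ψ : V → ℂ} (h : HasCompactSupport ψ) : HasCompactSupport (opL e c l ψ) := by
  induction l with
  | nil => exact h
  | cons i l ih => exact hcs_Op ih

theorem opL_vanish {e : Fin n → V} {c : Fin n → V → ℝ} {S : Set V} (hS : IsClosed S) {ψ : V → ℂ}
    (h : ∀ q, q ∉ S → ψ q = 0) (l : List (Fin n)) : ∀ q, q ∉ S → opL e c l ψ q = 0 := by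
  induction l with
  | nil => exact h
  | cons i l ih => exact Op_vanish hS ih _ _

theorem opL_bd {κ : Type*} (e : κ → V) (j : Fin n → κ) {c : Fin n → V → ℝ}
    (hc : ∀ i, ContDiff ℝ (⊤ : ℕ∞) (c i)) (l : List (Fin n)) (k : ℕ) :
    ∃ C : ℝ, 0 ≤ C ∧ ∀ (ψ : V → ℂ) (B : ℝ) (q : V), Sm ψ →
      (∀ i k', Bd e k' 2 (fun q => (c i q : ℂ)) q) →
      Bd e (k + 2 * l.length) B ψ q → Bd e k (C * B) (opL (fun i => e (j i)) c l ψ) q := by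
  induction l generalizing k with
  | nil => exact ⟨1, zero_le_one, fun ψ B q _ _ h => by simpa [opL] using h⟩
  | cons i l ih =>
    obtain ⟨C, hC, h⟩ := ih (k + 2)
    refine ⟨C * (1 + (1 + 2 ^ (k+1) * 2) * (1 + 2 ^ k * 2)), by positivity,
      fun ψ B q hψ hcq hb => ?_⟩
    have h1 := h ψ B q hψ hcq (by
      refine hb.anti (le_of_eq ?_)
      simp; ring)
    have h2 := Bd.Op (j := j i) (hc i) (hψ.opL hc l) (hcq i (k+1)) h1
    refine h2.mono (le_of_eq ?_)
    ring

theorem Op_slice {W : Type*} [NormedAddCommGroup W] [NormedSpace ℝ W] {ψ : V → ℂ} (hψ : Sm ψ)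
    (L : W →L[ℝ] V) (p : V) (v : W) {c : V → ℝ} (hc : ContDiff ℝ (⊤ : ℕ∞) c) (c0 : ℝ)
    (hcc : ∀ q, c (L q + p) = c0) :
    (fun q => Op (L v) c ψ (L q + p)) = Op v (fun _ => c0) (fun q => ψ (L q + p)) := by
  have hM : ∀ φ : V → ℂ, Sm φ → (fun q => Mo (L v) c φ (L q + p)) =
      Mo v (fun _ => c0) (fun q => φ (L q + p)) := by
    intro φ hφ
    funext q
    simp only [Mo, dd_comp hφ, hcc]
  have h1 := hM _ (hψ.Mo (v := L v) hc)
  rw [hM _ hψ] at h1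
  funext q
  have h2 := congrFun h1 q
  simp only [Op]
  rw [← h2]

theorem opL_slice {W : Type*} [NormedAddCommGroup W] [NormedSpace ℝ W] {ψ : V → ℂ} (hψ : Sm ψ)
    (L : W →L[ℝ] V) (p : V) (e : Fin n → W) {c : Fin n → V → ℝ}
    (hc : ∀ i, ContDiff ℝ (⊤ : ℕ∞) (c i)) (c0 : Fin n → ℝ)
    (hcc : ∀ i q, c i (L q + p) = c0 i) (l : List (Fin n)) :
    (fun q => opL (fun i => L (e i)) c l ψ (L q + p)) =
      opL e (fun i _ => c0 i) l (fun q => ψ (L q + p)) := by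
  induction l with
  | nil => rfl
  | cons i l ih =>
    change (fun q => Op (L (e i)) (c i) (opL (fun i => L (e i)) c l ψ) (L q + p)) =
      Op (e i) (fun _ => c0 i) (opL e (fun i _ => c0 i) l (fun q => ψ (L q + p)))
    rw [Op_slice (hψ.opL hc l) L p (e i) (hc i) (c0 i) (hcc i), ih]

theorem integral_opL (c : Fin n → ℝ) (θ : En n) (l : List (Fin n)) {ψ : En n → ℂ} (hs : Sm ψ)
    (hcs : HasCompactSupport ψ) :
    ∫ x, opL sb (fun i _ => c i) l ψ x * ex ⟪x, θ⟫ =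
      (((l.map fun i => 1 + (c i - θ i) ^ 2).prod : ℝ) : ℂ) * ∫ x, ψ x * ex ⟪x, θ⟫ := by
  induction l with
  | nil => simp [opL]
  | cons i l ih =>
    change ∫ x, Op (sb i) (fun _ => c i) (opL sb (fun i _ => c i) l ψ) x * ex ⟪x, θ⟫ = _
    rw [integral_Op (hs.opL (fun i => contDiff_const) l) (hcs_opL l hcs), ih]
    simp only [List.map_cons, List.prod_cons]
    push_cast; ring

theorem prod_eq_wt (y : En n) :
    ((List.finRange n).map fun i => 1 + (y i) ^ 2).prod = (wt y)⁻¹ := by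
  rw [← Fin.prod_univ_def, wt, ← Finset.prod_inv_distrib]
  simp

end OpL

section Local

variable {n : ℕ}

/-- Decay of Fourier integrals of smooth compactly supported functions. -/
theorem fourier_decay (n : ℕ) : ∃ C : ℝ, 0 ≤ C ∧ ∀ (ψ : En n → ℂ) (B : ℝ), Sm ψ →
    (∀ x, x ∉ Metric.closedBall (0 : En n) 2 → ψ x = 0) → (∀ x, Bd sb (2 * n) B ψ x) →
    ∀ θ : En n, ‖∫ x, ψ x * ex ⟪x, θ⟫‖ ≤ C * B * wt θ := by
  obtain ⟨C, hC, h⟩ := opL_bd (n := n) (V := En n) sb id (c := fun _ _ => (0 : ℝ))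
    (fun i => contDiff_const) (List.finRange n) 0
  refine ⟨C * volume.real (Metric.closedBall (0 : En n) 2), by positivity,
    fun ψ B hs hv hb θ => ?_⟩
  have hcs : HasCompactSupport ψ := HasCompactSupport.intro (isCompact_closedBall 0 2) hv
  set ψ' := opL sb (fun _ _ => (0 : ℝ)) (List.finRange n) ψ with hψ'
  have h1 : ∀ x, ‖ψ' x‖ ≤ C * B := fun x => (h ψ B x hs (fun i k' => by
    simpa using Bd.zero (by norm_num)) (by simpa using hb x)).le
  have hv' : ∀ x, x ∉ Metric.closedBall (0 : En n) 2 → ψ' x = 0 :=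
    opL_vanish Metric.isClosed_closedBall hv _
  have h2 := integral_opL (fun _ => 0) θ (List.finRange n) hs hcs
  have h3 : ((List.finRange n).map fun i => 1 + ((0 : ℝ) - θ i) ^ 2).prod = (wt θ)⁻¹ := by
    rw [← prod_eq_wt]; simp
  rw [h3] at h2
  have h4 : ‖∫ x, ψ' x * ex ⟪x, θ⟫‖ ≤ C * B * volume.real (Metric.closedBall (0 : En n) 2) := by
    have : ∫ x, ψ' x * ex ⟪x, θ⟫ = ∫ x in Metric.closedBall (0 : En n) 2, ψ' x * ex ⟪x, θ⟫ := by
      rw [setIntegral_eq_integral_of_forall_compl_eq_zero]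
      intro x hx; rw [hv' x hx, zero_mul]
    rw [this]
    refine norm_setIntegral_le_of_norm_le_const measure_closedBall_lt_top fun x _ => ?_
    rw [norm_mul, norm_ex, mul_one]; exact h1 x
  rw [h2, norm_mul, Complex.norm_real, Real.norm_of_nonneg (by have := wt_pos θ; positivity)] at h4
  have hw := wt_pos θ
  have : ‖∫ x, ψ x * ex ⟪x, θ⟫‖ = wt θ * ((wt θ)⁻¹ * ‖∫ x, ψ x * ex ⟪x, θ⟫‖) := by
    field_simp
  rw [this]
  calc _ ≤ wt θ * (C * B * volume.real (Metric.closedBall (0 : En n) 2)) := by gcongr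
    _ = _ := by ring

/-- The support set. -/
def Sset (n : ℕ) (R : ℝ) : Set (E3 n) :=
  Metric.closedBall 0 2 ×ˢ (Metric.closedBall 0 R ×ˢ Metric.closedBall 0 R)

theorem isCompact_Sset (R : ℝ) : IsCompact (Sset n R) :=
  (isCompact_closedBall 0 2).prod ((isCompact_closedBall 0 R).prod (isCompact_closedBall 0 R))

/-- Admissible local amplitudes. -/
def Adm (R B : ℝ) (k : ℕ) (A : E3 n → ℂ) : Prop :=
  Sm A ∧ (∀ q, q ∉ Sset n R → A q = 0) ∧ ∀ q, Bd dirs k B A q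

theorem Adm.hcs {R B : ℝ} {k : ℕ} {A : E3 n → ℂ} (h : Adm R B k A) : HasCompactSupport A :=
  HasCompactSupport.intro (isCompact_Sset R) h.2.1

/-- The bilinear operator. -/
def TT (A : E3 n → ℂ) (U V : En n → ℂ) (x : En n) : ℂ :=
  ∫ w : En n × En n, A (x, w) * ex (⟪x, w.1⟫ + ⟪x, w.2⟫) * U w.1 * V w.2

/-- direction embeddings -/
def LX (n : ℕ) : En n →L[ℝ] E3 n := ContinuousLinearMap.inl ℝ _ _
def LK (n : ℕ) : En n →L[ℝ] E3 n :=
  (ContinuousLinearMap.inr ℝ _ _).comp (ContinuousLinearMap.inl ℝ _ _)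
def LH (n : ℕ) : En n →L[ℝ] E3 n :=
  (ContinuousLinearMap.inr ℝ _ _).comp (ContinuousLinearMap.inr ℝ _ _)

theorem LX_sb (i : Fin n) : LX n (sb i) = eX i := rfl
theorem LK_sb (i : Fin n) : LK n (sb i) = eK i := rfl
theorem LH_sb (i : Fin n) : LH n (sb i) = eH i := rfl

theorem LX_add (x y : En n) (w : En n × En n) : LX n x + (y, w) = (x + y, w) := by
  ext <;> simp [LX]
theorem LK_add (ξ x y z : En n) : LK n ξ + (x, y, z) = (x, ξ + y, z) := by
  ext <;> simp [LK]
theorem LH_add (ξ x y z : En n) : LH n ξ + (x, y, z) = (x, y, ξ + z) := by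
  ext <;> simp [LH]

theorem inner_bd (n : ℕ) : ∃ C : ℝ, 0 ≤ C ∧ ∀ (R B : ℝ) (A : E3 n → ℂ), Adm R B (2 * n) A →
    ∀ w w' : En n × En n, ∀ θ : En n,
    ‖∫ x, (A (x, w) * (starRingEnd ℂ) (A (x, w'))) * ex ⟪x, θ⟫‖ ≤ C * B ^ 2 * wt θ := by
  obtain ⟨C, hC, h⟩ := fourier_decay n
  refine ⟨C * 2 ^ (2 * n), by positivity, fun R B A hA w w' θ => ?_⟩
  have hs : ∀ w, Sm (fun x => A (x, w)) := fun w => by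
    have := hA.1.comp (LX n) (0, w)
    simpa [LX_add] using this
  have hb : ∀ w x, Bd sb (2 * n) B (fun x => A (x, w)) x := fun w x => by
    have := Bd.comp (e := dirs) (e' := sb) (LX n) (0, w)
      (fun i => Or.inr ⟨Sum.inl i, 1, by simp, by simp [LX_sb, dirs]⟩) (k := 2 * n) (B := B) hA.1
      (q := x) (hA.2.2 _)
    simpa [LX_add] using this
  have := h (fun x => A (x, w) * (starRingEnd ℂ) (A (x, w'))) (2 ^ (2 * n) * (B * B))
    ((hs w).mul (hs w').conj) (fun x hx => by
      rw [hA.2.1 (x, w) (fun hq => hx hq.1), zero_mul])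
    (fun x => Bd.mul (hs w) (hs w').conj (hb w x) (Bd.conj (hs w') (hb w' x))) θ
  refine this.trans (le_of_eq ?_)
  ring

end Local

section L2

variable {n : ℕ}

/-- Frequency box. -/
def Bx (n : ℕ) (R : ℝ) : Set (En n × En n) :=
  Metric.closedBall 0 R ×ˢ Metric.closedBall 0 R

theorem Bx_meas (R : ℝ) : MeasurableSet (Bx n R) :=
  (Metric.isClosed_closedBall.prod Metric.isClosed_closedBall).measurableSet

theorem Bx_restrict (R : ℝ) : (volume : Measure (En n × En n)).restrict (Bx n R) =
    (volume.restrict (Metric.closedBall (0 : En n) R)).prod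
      (volume.restrict (Metric.closedBall (0 : En n) R)) := by
  rw [Measure.prod_restrict]; rfl

theorem lint_Bx_mul (R : ℝ) {F G : En n → ℝ≥0∞} (hF : Measurable F) (hG : Measurable G) :
    ∫⁻ w in Bx n R, F w.1 * G w.2 = (∫⁻ x in Metric.closedBall (0 : En n) R, F x) *
      ∫⁻ x in Metric.closedBall (0 : En n) R, G x := by
  rw [Bx_restrict, lintegral_prod_mul hF.aemeasurable hG.aemeasurable]

theorem lint_wt_Bx (R : ℝ) (c : En n) :
    ∫⁻ w in Bx n R, ENNReal.ofReal (wt (c - (w.1 + w.2))) ≤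
      volume (Metric.closedBall (0 : En n) R) * ∫⁻ x : En n, ENNReal.ofReal (wt x) := by
  have hm : Measurable fun w : En n × En n => ENNReal.ofReal (wt (c - (w.1 + w.2))) :=
    ENNReal.measurable_ofReal.comp (wt_continuous.comp (by fun_prop)).measurable
  rw [Bx_restrict, lintegral_prod _ hm.aemeasurable]
  calc _ ≤ ∫⁻ x in Metric.closedBall (0 : En n) R, ∫⁻ y, ENNReal.ofReal (wt (c - (x + y))) :=
        lintegral_mono fun x => setLIntegral_le_lintegral _ _
    _ = ∫⁻ x in Metric.closedBall (0 : En n) R, ∫⁻ y : En n, ENNReal.ofReal (wt y) := by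
        congr 1; funext x
        have := lintegral_sub_left_eq_self (μ := (volume : Measure (En n)))
          (fun y => ENNReal.ofReal (wt y)) (c - x)
        rw [← this]
        congr 1; funext y; congr 2; abel
    _ = _ := by rw [lintegral_const, Measure.restrict_apply_univ, mul_comm]

theorem wt_lint_ne : ∫⁻ x : En n, ENNReal.ofReal (wt x) ≠ ⊤ := by
  have := (wt_integrable (n := n)).2
  unfold HasFiniteIntegral at this
  refine ne_of_lt (lt_of_le_of_lt (lintegral_mono fun x => ?_) this)
  rw [Real.enorm_eq_ofReal (wt_pos x).le]

theorem cauchy_Bx (R : ℝ) (U : En n → ℂ) (hU : Continuous U) :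
    (∫⁻ x in Metric.closedBall (0 : En n) R, ‖U x‖ₑ) ^ 2 ≤
      volume (Metric.closedBall (0 : En n) R) * NR R U := by
  have h := ENNReal.lintegral_mul_le_Lp_mul_Lq (volume.restrict (Metric.closedBall (0 : En n) R))
    (p := 2) (q := 2) (by constructor <;> norm_num) (f := fun _ => 1) (g := fun x => ‖U x‖ₑ)
    aemeasurable_const hU.enorm.measurable.aemeasurable
  simp only [Pi.mul_apply, one_mul, ENNReal.one_rpow, lintegral_const, Measure.restrict_apply_univ]
    at h
  calc _ ≤ (volume (Metric.closedBall (0 : En n) R) ^ (1 / (2:ℝ)) *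
        (∫⁻ x in Metric.closedBall (0 : En n) R, ‖U x‖ₑ ^ (2:ℝ)) ^ (1 / (2:ℝ))) ^ 2 := by gcongr
    _ = _ := by
      rw [mul_pow, ← ENNReal.rpow_natCast, ← ENNReal.rpow_natCast, ← ENNReal.rpow_mul,
        ← ENNReal.rpow_mul]
      simp [NR]

theorem T_sup {R B : ℝ} {k : ℕ} {A : E3 n → ℂ} (hA : Adm R B k A) {U V : En n → ℂ}
    (hU : Continuous U) (hV : Continuous V) (x : En n) :
    ‖TT A U V x‖ₑ ^ 2 ≤ ENNReal.ofReal (B ^ 2) *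
      (volume (Metric.closedBall (0 : En n) R)) ^ 2 * (NR R U * NR R V) := by
  have hB : 0 ≤ B := (hA.2.2 0).nonneg
  have h1 : ‖TT A U V x‖ₑ ≤ ENNReal.ofReal B *
      ((∫⁻ x in Metric.closedBall (0 : En n) R, ‖U x‖ₑ) *
        ∫⁻ x in Metric.closedBall (0 : En n) R, ‖V x‖ₑ) := by
    rw [← lint_Bx_mul R hU.enorm.measurable hV.enorm.measurable,
      ← lintegral_const_mul' _ _ (by simp)]
    have : TT A U V x = ∫ w in Bx n R, A (x, w) * ex (⟪x, w.1⟫ + ⟪x, w.2⟫) * U w.1 * V w.2 := by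
      unfold TT
      rw [setIntegral_eq_integral_of_forall_compl_eq_zero]
      intro w hw; rw [hA.2.1 (x, w) fun h => hw h.2]; simp
    rw [this]
    refine (enorm_integral_le_lintegral_enorm _).trans (lintegral_mono fun w => ?_)
    simp only [enorm_mul]
    have e1 : ‖ex (⟪x, w.1⟫ + ⟪x, w.2⟫)‖ₑ = 1 := by rw [← ofReal_norm, norm_ex]; simp
    have e2 : ‖A (x, w)‖ₑ ≤ ENNReal.ofReal B := by
      rw [← ofReal_norm]; exact ENNReal.ofReal_le_ofReal (hA.2.2 _).le
    rw [e1, mul_one, mul_assoc]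
    gcongr
  calc _ ≤ (ENNReal.ofReal B * ((∫⁻ x in Metric.closedBall (0 : En n) R, ‖U x‖ₑ) *
        ∫⁻ x in Metric.closedBall (0 : En n) R, ‖V x‖ₑ)) ^ 2 := by gcongr
    _ = ENNReal.ofReal (B ^ 2) * ((∫⁻ x in Metric.closedBall (0 : En n) R, ‖U x‖ₑ) ^ 2 *
        (∫⁻ x in Metric.closedBall (0 : En n) R, ‖V x‖ₑ) ^ 2) := by
      rw [mul_pow, mul_pow, ENNReal.ofReal_pow hB]
    _ ≤ ENNReal.ofReal (B ^ 2) * ((volume (Metric.closedBall (0 : En n) R) * NR R U) *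
        (volume (Metric.closedBall (0 : En n) R) * NR R V)) := by
      gcongr
      · exact cauchy_Bx R U hU
      · exact cauchy_Bx R V hV
    _ = _ := by ring

end L2

theorem schur_gen {W : Type*} [MeasurableSpace W] (μ : Measure W) [SigmaFinite μ]
    (κ : W × W → ℝ≥0∞) (hκm : Measurable κ) (M : ℝ≥0∞) (h1 : ∀ w, ∫⁻ y, κ (w, y) ∂μ ≤ M)
    (h2 : ∀ w, ∫⁻ y, κ (y, w) ∂μ ≤ M) {a : W → ℝ≥0∞} (ha : Measurable a) :
    ∫⁻ z, κ z * (a z.1 * a z.2) ∂(μ.prod μ) ≤ 2 * M * ∫⁻ w, a w ^ 2 ∂μ := by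
  have hle : ∀ s t : ℝ≥0∞, s * t ≤ s ^ 2 + t ^ 2 := by
    intro s t
    rcases le_total s t with h | h
    · calc s * t ≤ t * t := by gcongr
        _ = t ^ 2 := by ring
        _ ≤ _ := le_add_self
    · calc s * t ≤ s * s := by gcongr
        _ = s ^ 2 := by ring
        _ ≤ _ := le_self_add
  have m1 : Measurable fun z => κ z * a z.1 ^ 2 := hκm.mul ((ha.comp measurable_fst).pow_const 2)
  have m2 : Measurable fun z => κ z * a z.2 ^ 2 := hκm.mul ((ha.comp measurable_snd).pow_const 2)
  have k1 : ∀ w, Measurable fun y => κ (w, y) := fun w => hκm.comp measurable_prodMk_left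
  have k2 : ∀ w, Measurable fun y => κ (y, w) := fun w => hκm.comp measurable_prodMk_right
  calc _ ≤ ∫⁻ z, (κ z * a z.1 ^ 2 + κ z * a z.2 ^ 2) ∂(μ.prod μ) := by
        refine lintegral_mono fun z => ?_
        rw [← mul_add]
        exact mul_le_mul_right (hle _ _) _
    _ = (∫⁻ z, κ z * a z.1 ^ 2 ∂(μ.prod μ)) + ∫⁻ z, κ z * a z.2 ^ 2 ∂(μ.prod μ) :=
        lintegral_add_left m1 _
    _ = (∫⁻ w, (∫⁻ y, κ (w, y) ∂μ) * a w ^ 2 ∂μ) + ∫⁻ w, (∫⁻ y, κ (y, w) ∂μ) * a w ^ 2 ∂μ := by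
        rw [lintegral_prod _ m1.aemeasurable, lintegral_prod_symm _ m2.aemeasurable]
        congr 1
        · exact lintegral_congr fun w => lintegral_mul_const (a w ^ 2) (k1 w)
        · exact lintegral_congr fun w => lintegral_mul_const (a w ^ 2) (k2 w)
    _ ≤ (∫⁻ w, M * a w ^ 2 ∂μ) + ∫⁻ w, M * a w ^ 2 ∂μ := by
        gcongr with w w
        · exact h1 w
        · exact h2 w
    _ = _ := by rw [lintegral_const_mul _ (ha.pow_const 2)]; ring

section L2

variable {n : ℕ}

theorem schur {R : ℝ} {a : En n × En n → ℝ≥0∞} (ha : Measurable a) :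
    ∫⁻ z in Bx n R ×ˢ Bx n R, ENNReal.ofReal (wt (z.1.1 + z.1.2 - (z.2.1 + z.2.2))) *
      (a z.1 * a z.2) ≤
    2 * (volume (Metric.closedBall (0 : En n) R) * ∫⁻ x : En n, ENNReal.ofReal (wt x)) *
      ∫⁻ w in Bx n R, a w ^ 2 := by
  have hres : (volume : Measure ((En n × En n) × (En n × En n))).restrict (Bx n R ×ˢ Bx n R) =
      (volume.restrict (Bx n R)).prod (volume.restrict (Bx n R)) := by
    rw [Measure.prod_restrict]; rfl
  rw [hres]
  refine schur_gen (volume.restrict (Bx n R))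
    (fun z => ENNReal.ofReal (wt (z.1.1 + z.1.2 - (z.2.1 + z.2.2))))
    (ENNReal.measurable_ofReal.comp (wt_continuous.comp (by fun_prop)).measurable) _
    (fun w => lint_wt_Bx R (w.1 + w.2)) (fun w => ?_) ha
  refine le_trans (le_of_eq ?_) (lint_wt_Bx R (w.1 + w.2))
  refine lintegral_congr fun z => ?_
  rw [← wt_neg]; congr 2; abel

end L2

theorem L2_fub {X W : Type*} [MeasureSpace X] [MeasureSpace W] [SigmaFinite (volume : Measure X)]
    [SigmaFinite (volume : Measure W)] (G : X → W → ℂ)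
    (hHi : Integrable (fun q : X × (W × W) => G q.1 q.2.1 * (starRingEnd ℂ) (G q.1 q.2.2))) :
    ∫⁻ x, ‖∫ w, G x w‖ₑ ^ 2 ≤ ∫⁻ z : W × W, ‖∫ x, G x z.1 * (starRingEnd ℂ) (G x z.2)‖ₑ := by
  have hT : ∀ x, ((‖∫ w, G x w‖ ^ 2 : ℝ) : ℂ) =
      ∫ z : W × W, G x z.1 * (starRingEnd ℂ) (G x z.2) := by
    intro x
    have e := integral_prod_mul (μ := (volume : Measure W))
      (ν := (volume : Measure W)) (fun w => G x w) (fun w => (starRingEnd ℂ) (G x w))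
    rw [integral_conj, Complex.mul_conj, Complex.normSq_eq_norm_sq] at e
    exact e.symm
  have hTi : Integrable fun x => ((‖∫ w, G x w‖ ^ 2 : ℝ) : ℂ) := by
    have := hHi.integral_prod_left
    refine this.congr (Filter.Eventually.of_forall fun x => ?_)
    exact (hT x).symm
  have hTi2 : Integrable fun x => ‖∫ w, G x w‖ ^ 2 := by
    have := hTi.re
    exact this
  have s1 : ∫⁻ x, ‖∫ w, G x w‖ₑ ^ 2 =
      ‖∫ x, ∫ z : W × W, G x z.1 * (starRingEnd ℂ) (G x z.2)‖ₑ := by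
    have e1 : ∫⁻ x, ‖∫ w, G x w‖ₑ ^ 2 = ∫⁻ x, ENNReal.ofReal (‖∫ w, G x w‖ ^ 2) := by
      congr 1; funext x
      rw [ENNReal.ofReal_pow (norm_nonneg _), ofReal_norm]
    rw [e1, ← ofReal_integral_eq_lintegral_ofReal hTi2
      (Filter.Eventually.of_forall fun x => by positivity)]
    simp_rw [← hT]
    have e3 : ∫ x, ((‖∫ w, G x w‖ ^ 2 : ℝ) : ℂ) = ((∫ x, ‖∫ w, G x w‖ ^ 2 : ℝ) : ℂ) :=
      integral_ofReal
    rw [e3, ← ofReal_norm, Complex.norm_real,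
      Real.norm_of_nonneg (integral_nonneg fun x => by positivity)]
  rw [s1, integral_integral_swap hHi]
  exact enorm_integral_le_lintegral_enorm _

section L2

variable {n : ℕ}

set_option maxHeartbeats 1000000 in
theorem T_L2 (n : ℕ) : ∃ C : ℝ≥0∞, C ≠ ⊤ ∧ ∀ (R B : ℝ), 1 ≤ R → ∀ A : E3 n → ℂ, Adm R B (2 * n) A →
    ∀ U V : En n → ℂ, Continuous U → Continuous V →
    ∫⁻ x, ‖TT A U V x‖ₑ ^ 2 ≤ C * ENNReal.ofReal (B ^ 2) * ENNReal.ofReal (R ^ n) *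
      (NR R U * NR R V) := by
  obtain ⟨C, hC, h⟩ := inner_bd n
  set Wt := ∫⁻ x : En n, ENNReal.ofReal (wt x)
  refine ⟨ENNReal.ofReal C * 2 * (volume (Metric.closedBall (0 : En n) 1) * Wt), ?_,
    fun R B hR A hA U V hU hV => ?_⟩
  · exact ENNReal.mul_ne_top (ENNReal.mul_ne_top (by simp) (by simp))
      (ENNReal.mul_ne_top vol_ball_ne wt_lint_ne)
  have hB : 0 ≤ B := (hA.2.2 0).nonneg
  set G : En n → En n × En n → ℂ :=
    fun x w => A (x, w) * ex (⟪x, w.1⟫ + ⟪x, w.2⟫) * U w.1 * V w.2 with hG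
  set H : En n → (En n × En n) × (En n × En n) → ℂ :=
    fun x z => G x z.1 * (starRingEnd ℂ) (G x z.2) with hH
  have hGc : Continuous fun q : En n × (En n × En n) => G q.1 q.2 := by
    have := hA.1.continuous
    have := continuous_ex
    simp only [hG]
    fun_prop
  have hHc : Continuous fun q : En n × ((En n × En n) × (En n × En n)) => H q.1 q.2 := by
    simp only [hH]
    refine Continuous.mul ?_ (Complex.continuous_conj.comp ?_)
    · exact hGc.comp (by fun_prop : Continuous fun q : En n × ((En n × En n) × (En n × En n)) => (q.1, q.2.1))
    · exact hGc.comp (by fun_prop : Continuous fun q : En n × ((En n × En n) × (En n × En n)) => (q.1, q.2.2))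
  have hG0 : ∀ x w, (x, w) ∉ Sset n R → G x w = 0 := fun x w hw => by
    simp only [hG]; rw [hA.2.1 _ hw]; simp
  have hBxc : IsCompact (Bx n R) := (isCompact_closedBall 0 R).prod (isCompact_closedBall 0 R)
  have hHi : Integrable (fun q : En n × ((En n × En n) × (En n × En n)) => H q.1 q.2) := by
    refine hHc.integrable_of_hasCompactSupport (HasCompactSupport.intro
      ((isCompact_closedBall (0 : En n) 2).prod (hBxc.prod hBxc)) ?_)
    rintro ⟨x, w, w'⟩ hq
    simp only [hH]
    by_cases h1 : (x, w) ∈ Sset n R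
    · by_cases h2 : (x, w') ∈ Sset n R
      · exact absurd ⟨h1.1, h1.2, h2.2⟩ hq
      · rw [hG0 x w' h2]; simp
    · rw [hG0 x w h1]; simp
  set a : En n × En n → ℝ≥0∞ := fun w => ‖U w.1‖ₑ * ‖V w.2‖ₑ with ha
  have ham : Measurable a := (hU.enorm.measurable.comp measurable_fst).mul
    (hV.enorm.measurable.comp measurable_snd)
  have s2 : ∀ z, ‖∫ x, H x z‖ₑ ≤ ENNReal.ofReal (C * B ^ 2) *
      (ENNReal.ofReal (wt (z.1.1 + z.1.2 - (z.2.1 + z.2.2))) * (a z.1 * a z.2)) := by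
    intro z
    set θ := z.1.1 + z.1.2 - (z.2.1 + z.2.2) with hθ
    have e1 : ∫ x, H x z = (U z.1.1 * V z.1.2 * (starRingEnd ℂ) (U z.2.1 * V z.2.2)) *
        ∫ x, (A (x, z.1) * (starRingEnd ℂ) (A (x, z.2))) * ex ⟪x, θ⟫ := by
      rw [← integral_const_mul]
      congr 1; funext x
      simp only [hH, hG, map_mul, ex_conj]
      have : ⟪x, θ⟫ = (⟪x, z.1.1⟫ + ⟪x, z.1.2⟫) + -(⟪x, z.2.1⟫ + ⟪x, z.2.2⟫) := by
        rw [hθ, inner_sub_right, inner_add_right, inner_add_right]; ring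
      rw [this, ex_add (⟪x, z.1.1⟫ + ⟪x, z.1.2⟫)]
      ring
    rw [e1, enorm_mul]
    have e2 : ‖∫ x, (A (x, z.1) * (starRingEnd ℂ) (A (x, z.2))) * ex ⟪x, θ⟫‖ₑ ≤
        ENNReal.ofReal (C * B ^ 2) * ENNReal.ofReal (wt θ) := by
      rw [← ofReal_norm, ← ENNReal.ofReal_mul (by positivity)]
      exact ENNReal.ofReal_le_ofReal (h R B A hA z.1 z.2 θ)
    have e3 : ‖U z.1.1 * V z.1.2 * (starRingEnd ℂ) (U z.2.1 * V z.2.2)‖ₑ = a z.1 * a z.2 := by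
      have hcj : ∀ c : ℂ, ‖(starRingEnd ℂ) c‖ₑ = ‖c‖ₑ := fun c => by
        rw [← ofReal_norm, ← ofReal_norm, RCLike.norm_conj]
      simp only [ha, enorm_mul, hcj]
    rw [e3, mul_comm, ← mul_assoc (ENNReal.ofReal (C * B ^ 2))]
    exact mul_le_mul_left e2 _
  have s3 : ∀ z, z ∉ Bx n R ×ˢ Bx n R → ∫ x, H x z = 0 := by
    intro z hz
    have : ∀ x, H x z = 0 := by
      intro x
      simp only [hH]
      by_cases h1 : (x, z.1) ∈ Sset n R
      · by_cases h2 : (x, z.2) ∈ Sset n R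
        · exact absurd ⟨h1.2, h2.2⟩ hz
        · rw [hG0 x z.2 h2]; simp
      · rw [hG0 x z.1 h1]; simp
    simp [this]
  calc ∫⁻ x, ‖TT A U V x‖ₑ ^ 2 ≤ ∫⁻ z, ‖∫ x, H x z‖ₑ := L2_fub G hHi
    _ = ∫⁻ z in Bx n R ×ˢ Bx n R, ‖∫ x, H x z‖ₑ := by
        rw [← lintegral_indicator ((Bx_meas R).prod (Bx_meas R))]
        refine lintegral_congr fun z => ?_
        by_cases hz : z ∈ Bx n R ×ˢ Bx n R
        · rw [Set.indicator_of_mem hz]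
        · rw [Set.indicator_of_notMem hz, s3 z hz, enorm_zero]
    _ ≤ ∫⁻ z in Bx n R ×ˢ Bx n R, ENNReal.ofReal (C * B ^ 2) *
      (ENNReal.ofReal (wt (z.1.1 + z.1.2 - (z.2.1 + z.2.2))) * (a z.1 * a z.2)) :=
        lintegral_mono fun z => s2 z
    _ = ENNReal.ofReal (C * B ^ 2) * ∫⁻ z in Bx n R ×ˢ Bx n R,
      (ENNReal.ofReal (wt (z.1.1 + z.1.2 - (z.2.1 + z.2.2))) * (a z.1 * a z.2)) :=
        lintegral_const_mul' _ _ (by simp)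
    _ ≤ ENNReal.ofReal (C * B ^ 2) * (2 * (volume (Metric.closedBall (0 : En n) R) * Wt) *
      ∫⁻ w in Bx n R, a w ^ 2) := by
        gcongr
        exact schur ham
    _ = _ := by
        have : ∫⁻ w in Bx n R, a w ^ 2 = NR R U * NR R V := by
          simp only [ha, mul_pow]
          exact lint_Bx_mul R (hU.enorm.measurable.pow_const 2) (hV.enorm.measurable.pow_const 2)
        rw [this, vol_ball R (by linarith), ENNReal.ofReal_mul hC]
        ring

end L2

section Wts

variable {n : ℕ}

theorem ft_eq_ex (f : En n → ℂ) (ξ : En n) : ft f ξ = ∫ y, ex (-⟪y, ξ⟫) * f y := by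
  unfold ft ex; congr 1; funext y; congr 2; push_cast; ring

theorem fub1 {ψ : En n → ℂ} (hψ : Continuous ψ) (hc : HasCompactSupport ψ) {f : En n → ℂ}
    (hf : Integrable f) (x : En n) :
    ∫ ξ, ψ ξ * ex ⟪x, ξ⟫ * ft f ξ = ∫ y, f y * ∫ ξ, ψ ξ * ex ⟪ξ, x - y⟫ := by
  have hi : Integrable (fun z : En n × En n => (ψ z.1 * f z.2) * ex ⟪z.1, x - z.2⟫)
      (volume.prod volume) := by
    have h0 := (hψ.integrable_of_hasCompactSupport hc (μ := volume)).mul_prod hf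
    refine h0.mul_bdd (c := 1) ?_ (Filter.Eventually.of_forall fun z => (norm_ex _).le)
    exact (continuous_ex.comp (by fun_prop)).aestronglyMeasurable
  have h1 := integral_integral_swap (f := fun ξ y => (ψ ξ * f y) * ex ⟪ξ, x - y⟫) hi
  have e1 : ∀ ξ, ψ ξ * ex ⟪x, ξ⟫ * ft f ξ = ∫ y, (ψ ξ * f y) * ex ⟪ξ, x - y⟫ := by
    intro ξ
    rw [ft_eq_ex, ← integral_const_mul]
    congr 1; funext y
    rw [inner_sub_right, sub_eq_add_neg, ex_add, real_inner_comm x ξ, real_inner_comm y ξ]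
    ring
  have e2 : ∀ y, f y * ∫ ξ, ψ ξ * ex ⟪ξ, x - y⟫ = ∫ ξ, (ψ ξ * f y) * ex ⟪ξ, x - y⟫ := by
    intro y
    rw [← integral_const_mul]
    congr 1; funext ξ; ring
  simp_rw [e1, e2]
  exact h1

theorem one_var {ψ : En n → ℂ} (hψ : Sm ψ) (hc : HasCompactSupport ψ) {f : En n → ℂ}
    (hf : Integrable f) (hw : Integrable (wm f)) (x : En n) :
    ∫ ξ, ψ ξ * ex ⟪x, ξ⟫ * ft f ξ =
      ∫ ξ, opL sb (fun i _ => x i) (List.finRange n) ψ ξ * ex ⟪x, ξ⟫ * ft (wm f) ξ := by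
  rw [fub1 hψ.continuous hc hf, fub1 (hψ.opL (fun i => contDiff_const) _).continuous
    (hcs_opL _ hc) hw]
  congr 1; funext y
  rw [integral_opL (fun i => x i) (x - y) (List.finRange n) hψ hc]
  have : ((List.finRange n).map fun i => 1 + (x i - (x - y) i) ^ 2).prod = (wt y)⁻¹ := by
    rw [← prod_eq_wt]; simp
  rw [this, wm]
  have hy : ((wt y : ℝ) : ℂ) ≠ 0 := by exact_mod_cast (wt_pos y).ne'
  push_cast
  field_simp

theorem TT_int {R B : ℝ} {k : ℕ} {A : E3 n → ℂ} (hA : Adm R B k A) {U V : En n → ℂ}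
    (hU : Continuous U) (hV : Continuous V) (x : En n) :
    Integrable (fun w : En n × En n => A (x, w) * ex (⟪x, w.1⟫ + ⟪x, w.2⟫) * U w.1 * V w.2) := by
  refine Continuous.integrable_of_hasCompactSupport ?_ (HasCompactSupport.intro
    ((isCompact_closedBall (0 : En n) R).prod (isCompact_closedBall (0 : En n) R)) ?_)
  · have := hA.1.continuous
    have := continuous_ex
    fun_prop
  · intro w hw
    rw [hA.2.1 (x, w) fun h => hw h.2]; simp

/-- ξ-multiplier -/
def OK (A : E3 n → ℂ) : E3 n → ℂ := opL eK (fun i q => q.1 i) (List.finRange n) A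
/-- η-multiplier -/
def OH (A : E3 n → ℂ) : E3 n → ℂ := opL eH (fun i q => q.1 i) (List.finRange n) A

theorem cc_smooth (i : Fin n) : ContDiff ℝ (⊤ : ℕ∞) (fun q : E3 n => q.1 i) := by
  fun_prop

theorem cc_bd (i : Fin n) (k : ℕ) {q : E3 n} (hq : q.1 ∈ Metric.closedBall (0 : En n) 2) :
    Bd dirs k 2 (fun q : E3 n => ((q.1 i : ℝ) : ℂ)) q := by
  have h0 : ‖((q.1 i : ℝ) : ℂ)‖ ≤ 2 := by
    rw [Complex.norm_real]
    have := PiLp.norm_apply_le q.1 i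
    have h2 : ‖q.1‖ ≤ 2 := by simpa using hq
    exact this.trans h2
  cases k with
  | zero => exact h0
  | succ k =>
    refine ⟨h0, fun j => ?_⟩
    set L : E3 n →L[ℝ] ℂ := Complex.ofRealCLM.comp
      ((EuclideanSpace.proj i : En n →L[ℝ] ℝ).comp (ContinuousLinearMap.fst ℝ _ _)) with hL
    have e : dd (dirs j) (fun q : E3 n => ((q.1 i : ℝ) : ℂ)) = fun _ => L (dirs j) := by
      funext q
      have : (fun q : E3 n => ((q.1 i : ℝ) : ℂ)) = L := rfl
      rw [this]; simp only [dd, L.fderiv]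
    rw [e]
    refine Bd.const.mono ?_
    have e2 : L (dirs j) = (((dirs j).1 i : ℝ) : ℂ) := rfl
    rw [e2, Complex.norm_real]
    rcases j with j | j | j
    · simp only [dirs, Sum.elim_inl, eX, sb, PiLp.single_apply]
      split_ifs <;> norm_num
    · simp [dirs, eK]
    · simp [dirs, eH]

theorem Adm_op (j : Fin n → Fin n ⊕ (Fin n ⊕ Fin n)) (k : ℕ) :
    ∃ C : ℝ, 0 ≤ C ∧ ∀ (R B : ℝ) (A : E3 n → ℂ), Adm R B (k + 2 * n) A →
      Adm R (C * B) k (opL (fun i => dirs (j i)) (fun i q => q.1 i) (List.finRange n) A) := by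
  obtain ⟨C, hC, h⟩ := opL_bd (n := n) dirs j (c := fun i (q : E3 n) => q.1 i) cc_smooth
    (List.finRange n) k
  refine ⟨C, hC, fun R B A hA => ?_⟩
  have hv := opL_vanish (e := fun i => dirs (j i)) (c := fun i q => q.1 i)
    (isCompact_Sset R).isClosed hA.2.1 (List.finRange n)
  refine ⟨hA.1.opL cc_smooth _, hv, fun q => ?_⟩
  have hB : 0 ≤ B := (hA.2.2 0).nonneg
  by_cases hq : q ∈ Sset n R
  · exact h A B q hA.1 (fun i k' => cc_bd i k' hq.1) (by simpa using hA.2.2 q)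
  · refine Bd.congr (f := fun _ => 0) ?_ (Bd.zero (by positivity))
    filter_upwards [(isCompact_Sset R).isClosed.isOpen_compl.mem_nhds hq] with y hy
    exact (hv y hy).symm

theorem Adm_OK (k : ℕ) : ∃ C : ℝ, 0 ≤ C ∧ ∀ (R B : ℝ) (A : E3 n → ℂ), Adm R B (k + 2 * n) A →
      Adm R (C * B) k (OK A) := Adm_op (fun i => Sum.inr (Sum.inl i)) k

theorem Adm_OH (k : ℕ) : ∃ C : ℝ, 0 ≤ C ∧ ∀ (R B : ℝ) (A : E3 n → ℂ), Adm R B (k + 2 * n) A →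
      Adm R (C * B) k (OH A) := Adm_op (fun i => Sum.inr (Sum.inr i)) k

theorem TT_OK {R B : ℝ} {k : ℕ} {A : E3 n → ℂ} (hA : Adm R B (k + 2 * n) A) {f : En n → ℂ}
    (hf : Integrable f) (hw : Integrable (wm f)) {V : En n → ℂ} (hV : Continuous V) (x : En n) :
    TT A (ft f) V x = TT (OK A) (ft (wm f)) V x := by
  obtain ⟨C, hC, h⟩ := Adm_OK (n := n) k
  have hA' := h R B A hA
  have i1 := TT_int hA (ft_continuous hf) hV x
  have i2 := TT_int hA' (ft_continuous hw) hV x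
  unfold TT
  rw [Measure.volume_eq_prod] at i1 i2 ⊢
  rw [integral_prod_symm _ i1, integral_prod_symm _ i2]
  congr 1; funext η
  have e : ∀ (A : E3 n → ℂ) (f : En n → ℂ) (ξ : En n),
      A (x, ξ, η) * ex (⟪x, ξ⟫ + ⟪x, η⟫) * ft f ξ * V η =
      (ex ⟪x, η⟫ * V η) * (A (x, ξ, η) * ex ⟪x, ξ⟫ * ft f ξ) := by
    intro A f ξ; rw [ex_add]; ring
  simp only [e]
  rw [integral_const_mul, integral_const_mul]
  congr 1
  have hs : (fun ξ => A (LK n ξ + (x, 0, η))) = fun ξ => A (x, ξ, η) := by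
    funext ξ; rw [LK_add, add_zero]
  have hsm := hA.1.comp (LK n) (x, 0, η)
  rw [hs] at hsm
  have hcs : HasCompactSupport fun ξ => A (x, ξ, η) :=
    HasCompactSupport.intro (isCompact_closedBall 0 R) fun ξ hξ =>
      hA.2.1 _ fun h => hξ h.2.1
  have h2 := opL_slice hA.1 (LK n) (x, 0, η) sb (c := fun i q => q.1 i) cc_smooth (fun i => x i)
    (fun i q => by rw [LK_add]) (List.finRange n)
  rw [hs] at h2
  rw [one_var hsm hcs hf hw x, ← h2]
  simp only [LK_add, add_zero]
  rfl

theorem TT_OH {R B : ℝ} {k : ℕ} {A : E3 n → ℂ} (hA : Adm R B (k + 2 * n) A) {f : En n → ℂ}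
    (hf : Integrable f) (hw : Integrable (wm f)) {V : En n → ℂ} (hV : Continuous V) (x : En n) :
    TT A V (ft f) x = TT (OH A) V (ft (wm f)) x := by
  obtain ⟨C, hC, h⟩ := Adm_OH (n := n) k
  have hA' := h R B A hA
  have i1 := TT_int hA hV (ft_continuous hf) x
  have i2 := TT_int hA' hV (ft_continuous hw) x
  unfold TT
  rw [Measure.volume_eq_prod] at i1 i2 ⊢
  rw [integral_prod _ i1, integral_prod _ i2]
  congr 1; funext ξ
  have e : ∀ (A : E3 n → ℂ) (f : En n → ℂ) (η : En n),
      A (x, ξ, η) * ex (⟪x, ξ⟫ + ⟪x, η⟫) * V ξ * ft f η =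
      (ex ⟪x, ξ⟫ * V ξ) * (A (x, ξ, η) * ex ⟪x, η⟫ * ft f η) := by
    intro A f η; rw [ex_add]; ring
  simp only [e]
  rw [integral_const_mul, integral_const_mul]
  congr 1
  have hs : (fun η => A (LH n η + (x, ξ, 0))) = fun η => A (x, ξ, η) := by
    funext η; rw [LH_add, add_zero]
  have hsm := hA.1.comp (LH n) (x, ξ, 0)
  rw [hs] at hsm
  have hcs : HasCompactSupport fun η => A (x, ξ, η) :=
    HasCompactSupport.intro (isCompact_closedBall 0 R) fun η hη =>
      hA.2.1 _ fun h => hη h.2.2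
  have h2 := opL_slice hA.1 (LH n) (x, ξ, 0) sb (c := fun i q => q.1 i) cc_smooth (fun i => x i)
    (fun i q => by rw [LH_add]) (List.finRange n)
  rw [hs] at h2
  rw [one_var hsm hcs hf hw x, ← h2]
  simp only [LH_add, add_zero]
  rfl

/-- Local amplitudes: replace functions by weighted ones. -/
theorem TT_wts (n : ℕ) : ∃ C : ℝ, 0 ≤ C ∧ ∀ (R B : ℝ) (A : E3 n → ℂ), Adm R B (10 * n) A →
    ∃ A' : E3 n → ℂ, Adm R (C * B) (2 * n) A' ∧ ∀ f g : En n → ℂ, Nice f → Nice g → ∀ x,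
      TT A (ft f) (ft g) x = TT A' (ft (wm (wm f))) (ft (wm (wm g))) x := by
  obtain ⟨C1, hC1, h1⟩ := Adm_OK (n := n) (8 * n)
  obtain ⟨C2, hC2, h2⟩ := Adm_OK (n := n) (6 * n)
  obtain ⟨C3, hC3, h3⟩ := Adm_OH (n := n) (4 * n)
  obtain ⟨C4, hC4, h4⟩ := Adm_OH (n := n) (2 * n)
  refine ⟨C4 * (C3 * (C2 * C1)), by positivity, fun R B A hA => ?_⟩
  have a0 : Adm R B (8 * n + 2 * n) A := by convert hA using 1; ring
  have a1 := h1 R B A a0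
  have a1' : Adm R (C1 * B) (6 * n + 2 * n) (OK A) := by convert a1 using 1; ring
  have a2 := h2 R _ _ a1'
  have a2' : Adm R (C2 * (C1 * B)) (4 * n + 2 * n) (OK (OK A)) := by convert a2 using 1; ring
  have a3 := h3 R _ _ a2'
  have a3' : Adm R (C3 * (C2 * (C1 * B))) (2 * n + 2 * n) (OH (OK (OK A))) := by
    convert a3 using 1; ring
  have a4 := h4 R _ _ a3'
  refine ⟨OH (OH (OK (OK A))), ?_, fun f g hf hg x => ?_⟩
  · convert a4 using 1; ring
  · have f0 := hf.integrable
    have f1 := hf.wm.integrable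
    have f2 := hf.wm.wm.integrable
    have g0 := hg.integrable
    have g1 := hg.wm.integrable
    have g2 := hg.wm.wm.integrable
    rw [TT_OK a0 f0 f1 (ft_continuous g0), TT_OK a1' f1 f2 (ft_continuous g0),
      TT_OH a2' g0 g1 (ft_continuous f2), TT_OH a3' g1 g2 (ft_continuous f2)]

end Wts

section Loc

variable {n : ℕ}

theorem hcs_Bd {V : Type*} [NormedAddCommGroup V] [NormedSpace ℝ V] {κ : Type*} [Fintype κ]
    (e : κ → V) (k : ℕ) {f : V → ℂ} (hf : Sm f) (hc : HasCompactSupport f) :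
    ∃ C : ℝ, 0 ≤ C ∧ ∀ q, Bd e k C f q := by
  induction k generalizing f with
  | zero =>
    obtain ⟨C, hC⟩ := hc.exists_bound_of_continuous hf.continuous
    exact ⟨C, (norm_nonneg _).trans (hC 0), hC⟩
  | succ k ih =>
    obtain ⟨C, hC⟩ := hc.exists_bound_of_continuous hf.continuous
    choose D hD hD2 using fun i => ih (hf.dd (e i)) (hcs_dd hc (e i))
    have hC0 : 0 ≤ C := (norm_nonneg _).trans (hC 0)
    have hs : 0 ≤ ∑ i, D i := Finset.sum_nonneg fun i _ => hD i
    refine ⟨C + ∑ i, D i, by positivity, fun q => ⟨?_, fun i => ?_⟩⟩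
    · exact (hC q).trans (by linarith)
    · refine (hD2 i q).mono ?_
      have := Finset.single_le_sum (fun i _ => hD i) (Finset.mem_univ i)
      linarith

/-- spatial cut-off -/
def chi (n : ℕ) : ContDiffBump (0 : En n) := ⟨1, 2, by norm_num, by norm_num⟩

/-- cut-off on phase space -/
def chE (q : E3 n) : ℂ := ((chi n q.1 : ℝ) : ℂ)

theorem chE_bd (n k : ℕ) : ∃ C : ℝ, 0 ≤ C ∧ ∀ q : E3 n, Bd dirs k C chE q := by
  have hs : Sm (fun x : En n => ((chi n x : ℝ) : ℂ)) :=
    Complex.ofRealCLM.contDiff.comp (chi n).contDiff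
  have hc : HasCompactSupport (fun x : En n => ((chi n x : ℝ) : ℂ)) :=
    (chi n).hasCompactSupport.comp_left (g := fun t : ℝ => (t : ℂ)) (by simp)
  obtain ⟨C, hC, h⟩ := hcs_Bd sb k hs hc
  refine ⟨C, hC, fun q => ?_⟩
  have := Bd.comp (e := sb) (e' := dirs) (ContinuousLinearMap.fst ℝ (En n) (En n × En n)) 0
    (fun i => by
      rcases i with i | i | i
      · exact Or.inr ⟨i, 1, by simp, by simp [dirs, eX]⟩
      · left; simp [dirs, eK]
      · left; simp [dirs, eH]) (k := k) (B := C) hs (q := q) (h _)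
  simp only [ContinuousLinearMap.coe_fst', add_zero] at this
  exact this

theorem chE_sm : Sm (chE (n := n)) :=
  Complex.ofRealCLM.contDiff.comp ((chi n).contDiff.comp contDiff_fst)

/-- Global amplitudes. -/
def Gl (R B : ℝ) (k : ℕ) (b : E3 n → ℂ) : Prop :=
  Sm b ∧ (∀ q, q.2 ∉ Bx n R → b q = 0) ∧ ∀ q, Bd dirs k B b q

/-- Localised translated amplitude. -/
def Al (b : E3 n → ℂ) (p : En n) : E3 n → ℂ := fun q => chE q * b (q.1 + p, q.2)

theorem Gl.adm (n k : ℕ) : ∃ C : ℝ, 0 ≤ C ∧ ∀ (R B : ℝ) (b : E3 n → ℂ), Gl R B k b →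
    ∀ p, Adm R (C * B) k (Al b p) := by
  obtain ⟨C, hC, h⟩ := chE_bd n k
  refine ⟨2 ^ k * C, by positivity, fun R B b hb p => ?_⟩
  have e : (fun q : E3 n => b (q.1 + p, q.2)) =
      fun q => b (ContinuousLinearMap.id ℝ (E3 n) q + (p, 0)) := by
    funext q
    exact congrArg b (Prod.ext rfl (add_zero q.2).symm)
  have hs : Sm (fun q : E3 n => b (q.1 + p, q.2)) := by
    rw [e]; exact hb.1.comp _ _
  have hB : ∀ q, Bd dirs k B (fun q : E3 n => b (q.1 + p, q.2)) q := fun q => by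
    rw [e]
    exact Bd.comp (e := dirs) (e' := dirs) _ _ (fun i => Or.inr ⟨i, 1, by simp, by simp⟩) hb.1
      (hb.2.2 _)
  refine ⟨chE_sm.mul hs, fun q hq => ?_, fun q => ?_⟩
  · by_cases h1 : q.2 ∈ Bx n R
    · have h2 : q.1 ∉ Metric.closedBall (0 : En n) 2 := fun h2 => hq ⟨h2, h1⟩
      have : chi n q.1 = 0 := (chi n).zero_of_le_dist (by
        have : 2 < dist q.1 0 := by simpa using h2
        exact this.le)
      simp [Al, chE, this]
    · simp [Al, hb.2.1 (q.1 + p, q.2) h1]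
  · refine (Bd.mul chE_sm hs (h q) (hB q)).mono (le_of_eq (by ring))

/-- translation -/
def tr (p : En n) (f : En n → ℂ) : En n → ℂ := fun y => f (y + p)

theorem ft_tr (p : En n) (f : En n → ℂ) (ξ : En n) : ft (tr p f) ξ = ex ⟪p, ξ⟫ * ft f ξ := by
  rw [ft_eq_ex, ft_eq_ex, ← integral_const_mul]
  have := integral_add_right_eq_self (μ := (volume : Measure (En n)))
    (fun y => ex ⟪p, ξ⟫ * (ex (-⟪y, ξ⟫) * f y)) p
  rw [← this]
  congr 1; funext y
  rw [← mul_assoc, ← ex_add, tr]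
  congr 2
  rw [inner_add_left]; ring

theorem Nice.tr {f : En n → ℂ} (hf : Nice f) (p : En n) : Nice (tr p f) := fun s =>
  (hf s).comp_measurePreserving (measurePreserving_add_right volume p)

theorem TT_tr (b : E3 n → ℂ) (f g : En n → ℂ) (p y : En n)
    (hy : y ∈ Metric.closedBall (0 : En n) 1) :
    TT b (ft f) (ft g) (y + p) = TT (Al b p) (ft (tr p f)) (ft (tr p g)) y := by
  unfold TT
  congr 1; funext w
  have : chi n y = 1 := (chi n).one_of_mem_closedBall hy
  simp only [Al, chE, this, ft_tr]
  rw [inner_add_left, inner_add_left,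
    show ⟪y, w.1⟫ + ⟪p, w.1⟫ + (⟪y, w.2⟫ + ⟪p, w.2⟫) =
      (⟪y, w.1⟫ + ⟪y, w.2⟫) + (⟪p, w.1⟫ + ⟪p, w.2⟫) by ring, ex_add, ex_add ⟪p, w.1⟫]
  push_cast
  ring

theorem loc_est (n : ℕ) (q₁ q₂ : ℝ≥0∞) (h₁ : 1 ≤ q₁) (h₂ : 1 ≤ q₂) :
    ∃ C : ℝ≥0∞, C ≠ ⊤ ∧ ∀ (R B : ℝ) (b : E3 n → ℂ), 1 ≤ R → Gl R B (10 * n) b →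
    ∀ f g : En n → ℂ, Nice f → Nice g → ∀ p,
    (∫⁻ y in Metric.closedBall (0 : En n) 1, ‖TT b (ft f) (ft g) (y + p)‖ₑ ^ 2 ≤
      C * ENNReal.ofReal (B ^ 2 * R ^ n * (R ^ (n * lossE q₁) * R ^ (n * lossE q₂))) *
        (eLpNorm (wm (tr p f)) q₁ volume * eLpNorm (wm (tr p g)) q₂ volume) ^ 2) ∧
    ∀ y ∈ Metric.closedBall (0 : En n) 1, ‖TT b (ft f) (ft g) (y + p)‖ₑ ^ 2 ≤
      C * ENNReal.ofReal (B ^ 2 * R ^ (2 * n) * (R ^ (n * lossE q₁) * R ^ (n * lossE q₂))) *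
        (eLpNorm (wm (tr p f)) q₁ volume * eLpNorm (wm (tr p g)) q₂ volume) ^ 2 := by
  obtain ⟨C0, hC0, h0⟩ := Gl.adm n (10 * n)
  obtain ⟨C1, hC1, h1⟩ := TT_wts n
  obtain ⟨C2, hC2, h2⟩ := T_L2 n
  obtain ⟨D1, hD1, k1⟩ := bern (n := n) q₁ h₁
  obtain ⟨D2, hD2, k2⟩ := bern (n := n) q₂ h₂
  set b1 := volume (Metric.closedBall (0 : En n) 1)
  have hb1 : b1 ≠ ⊤ := vol_ball_ne
  set K := ENNReal.ofReal ((C1 * C0) ^ 2) * (D1 * D2) with hK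
  have hKt : K ≠ ⊤ := ENNReal.mul_ne_top (by simp) (ENNReal.mul_ne_top hD1 hD2)
  refine ⟨K * (C2 + b1 ^ 2), ENNReal.mul_ne_top hKt (by simp [hC2, hb1]),
    fun R B b hR hb f g hf hg p => ?_⟩
  have hR0 : 0 < R := by linarith
  obtain ⟨A', hA', hT⟩ := h1 R _ _ (h0 R B b hb p)
  have hT' : ∀ y ∈ Metric.closedBall (0 : En n) 1, TT b (ft f) (ft g) (y + p) =
      TT A' (ft (wm (wm (tr p f)))) (ft (wm (wm (tr p g)))) y := fun y hy => by
    rw [TT_tr b f g p y hy, hT _ _ (hf.tr p) (hg.tr p)]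
  set N1 := eLpNorm (wm (tr p f)) q₁ volume
  set N2 := eLpNorm (wm (tr p g)) q₂ volume
  have c1 := ft_continuous (hf.tr p).wm.wm.integrable
  have c2 := ft_continuous (hg.tr p).wm.wm.integrable
  have kk : NR R (ft (wm (wm (tr p f)))) * NR R (ft (wm (wm (tr p g)))) ≤
      (D1 * ENNReal.ofReal (R ^ (n * lossE q₁)) * N1 ^ 2) *
      (D2 * ENNReal.ofReal (R ^ (n * lossE q₂)) * N2 ^ 2) :=
    mul_le_mul' (k1 R hR _ (hf.tr p)) (k2 R hR _ (hg.tr p))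
  have p1 : (0:ℝ) ≤ R ^ (n * lossE q₁) := by positivity
  have hBB : (C1 * (C0 * B)) ^ 2 = (C1 * C0) ^ 2 * B ^ 2 := by ring
  constructor
  · calc _ = ∫⁻ y in Metric.closedBall (0 : En n) 1,
          ‖TT A' (ft (wm (wm (tr p f)))) (ft (wm (wm (tr p g)))) y‖ₑ ^ 2 :=
          setLIntegral_congr_fun Metric.isClosed_closedBall.measurableSet
            fun y hy => by simp only [hT' y hy]
      _ ≤ ∫⁻ y, ‖TT A' (ft (wm (wm (tr p f)))) (ft (wm (wm (tr p g)))) y‖ₑ ^ 2 :=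
          setLIntegral_le_lintegral _ _
      _ ≤ _ := h2 R _ hR A' hA' _ _ c1 c2
      _ ≤ C2 * ENNReal.ofReal ((C1 * (C0 * B)) ^ 2) * ENNReal.ofReal (R ^ n) *
          ((D1 * ENNReal.ofReal (R ^ (n * lossE q₁)) * N1 ^ 2) *
          (D2 * ENNReal.ofReal (R ^ (n * lossE q₂)) * N2 ^ 2)) := by gcongr
      _ = K * C2 * ENNReal.ofReal (B ^ 2 * R ^ n * (R ^ (n * lossE q₁) * R ^ (n * lossE q₂))) *
          (N1 * N2) ^ 2 := by
        rw [hBB, ENNReal.ofReal_mul (by positivity), ENNReal.ofReal_mul (p := B ^ 2 * R ^ n)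
          (by positivity), ENNReal.ofReal_mul (p := B ^ 2) (by positivity), ENNReal.ofReal_mul p1]
        ring
      _ ≤ _ := by gcongr; exact le_self_add
  · intro y hy
    rw [hT' y hy]
    calc _ ≤ _ := T_sup hA' c1 c2 y
      _ ≤ ENNReal.ofReal ((C1 * (C0 * B)) ^ 2) * (ENNReal.ofReal (R ^ n) * b1) ^ 2 *
          ((D1 * ENNReal.ofReal (R ^ (n * lossE q₁)) * N1 ^ 2) *
          (D2 * ENNReal.ofReal (R ^ (n * lossE q₂)) * N2 ^ 2)) := by
        rw [vol_ball R hR0.le]; gcongr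
      _ = K * b1 ^ 2 *
          ENNReal.ofReal (B ^ 2 * R ^ (2 * n) * (R ^ (n * lossE q₁) * R ^ (n * lossE q₂))) *
          (N1 * N2) ^ 2 := by
        rw [hBB, ENNReal.ofReal_mul (by positivity), ENNReal.ofReal_mul (p := B ^ 2 * R ^ (2 * n))
          (by positivity), ENNReal.ofReal_mul (p := B ^ 2) (by positivity), ENNReal.ofReal_mul p1,
          mul_comm 2 n, pow_mul, ENNReal.ofReal_pow (p := R ^ n) (by positivity)]
        ring
      _ ≤ _ := by gcongr; exact le_add_self

end Loc

section Glob

variable {n : ℕ}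

theorem sq_rpow_half (x : ℝ≥0∞) (t : ℝ) : (x ^ 2) ^ (t / 2) = x ^ t := by
  rw [← ENNReal.rpow_natCast, ← ENNReal.rpow_mul]; congr 1; push_cast; ring

theorem locr_low {r : ℝ} (hr : 0 < r) (hr2 : r ≤ 2) {X : Type*} [MeasurableSpace X]
    {μ : Measure X} {T : X → ℂ} (hT : AEStronglyMeasurable T μ)
    {C D Y : ℝ≥0∞} (h2 : ∫⁻ y, ‖T y‖ₑ ^ 2 ∂μ ≤ C * D ^ 2 * Y ^ 2) :
    ∫⁻ y, ‖T y‖ₑ ^ r ∂μ ≤ (μ Set.univ) ^ (1 - r / 2) * C ^ (r / 2) * D ^ r * Y ^ r := by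
  have hr' : ENNReal.ofReal r ≠ 0 := by simpa using hr
  have h := eLpNorm_le_eLpNorm_mul_rpow_measure_univ (p := ENNReal.ofReal r) (q := 2) (by
    rw [show (2 : ℝ≥0∞) = ENNReal.ofReal 2 by simp]; exact ENNReal.ofReal_le_ofReal hr2) hT
  rw [eLpNorm_eq_lintegral_rpow_enorm_toReal hr' (by simp),
    eLpNorm_eq_lintegral_rpow_enorm_toReal (by norm_num) (by norm_num),
    ENNReal.toReal_ofReal hr.le] at h
  have h3 := ENNReal.rpow_le_rpow h hr.le
  rw [← ENNReal.rpow_mul, ENNReal.mul_rpow_of_nonneg _ _ hr.le, ← ENNReal.rpow_mul,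
    ← ENNReal.rpow_mul, one_div_mul_cancel hr.ne', ENNReal.rpow_one] at h3
  have e1 : 1 / (2 : ℝ≥0∞).toReal * r = r / 2 := by simp; ring
  have e2 : (1 / r - 1 / (2 : ℝ≥0∞).toReal) * r = 1 - r / 2 := by
    simp; field_simp
  have e3 : ∫⁻ a, ‖T a‖ₑ ^ (2 : ℝ≥0∞).toReal ∂μ = ∫⁻ a, ‖T a‖ₑ ^ 2 ∂μ := by simp
  rw [e1, e2, e3] at h3
  refine h3.trans ?_
  calc _ ≤ (C * D ^ 2 * Y ^ 2) ^ (r / 2) * (μ Set.univ) ^ (1 - r / 2) := by gcongr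
    _ = _ := by
      rw [ENNReal.mul_rpow_of_nonneg _ _ (by positivity),
        ENNReal.mul_rpow_of_nonneg _ _ (by positivity), sq_rpow_half, sq_rpow_half]
      ring

theorem locr_high {r : ℝ} (hr2 : 2 ≤ r) {X : Type*} [MeasurableSpace X]
    {μ : Measure X} {T : X → ℂ}
    {C D Y E : ℝ≥0∞} (hE : C * E ^ 2 * Y ^ 2 ≠ ⊤) (h2 : ∫⁻ y, ‖T y‖ₑ ^ 2 ∂μ ≤ C * D ^ 2 * Y ^ 2)
    (hi : ∀ᵐ y ∂μ, ‖T y‖ₑ ^ 2 ≤ C * E ^ 2 * Y ^ 2) :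
    ∫⁻ y, ‖T y‖ₑ ^ r ∂μ ≤ C ^ (r / 2) * (E ^ (r - 2) * D ^ (2 : ℝ)) * Y ^ r := by
  have h0 : 0 ≤ (r - 2) / 2 := by linarith
  have hadd : ∀ x : ℝ≥0∞, x ^ r = x ^ (r - 2) * x ^ (2 : ℝ) := fun x => by
    rw [← ENNReal.rpow_add_of_nonneg _ _ (by linarith) (by norm_num)]; congr 1; ring
  calc ∫⁻ y, ‖T y‖ₑ ^ r ∂μ ≤ ∫⁻ y, (C * E ^ 2 * Y ^ 2) ^ ((r - 2) / 2) * ‖T y‖ₑ ^ 2 ∂μ := by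
        refine lintegral_mono_ae ?_
        filter_upwards [hi] with y hy
        rw [hadd, ← sq_rpow_half _ (r - 2)]
        have := ENNReal.rpow_le_rpow hy h0
        have e : ‖T y‖ₑ ^ (2 : ℝ) = ‖T y‖ₑ ^ 2 := by simp
        rw [e]
        gcongr
    _ = (C * E ^ 2 * Y ^ 2) ^ ((r - 2) / 2) * ∫⁻ y, ‖T y‖ₑ ^ 2 ∂μ :=
        lintegral_const_mul' _ _ (ENNReal.rpow_ne_top_of_nonneg h0 hE)
    _ ≤ (C * E ^ 2 * Y ^ 2) ^ ((r - 2) / 2) * (C * D ^ 2 * Y ^ 2) := by gcongr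
    _ = _ := by
      have e : C ^ (r / 2) = C ^ ((r - 2) / 2) * C := by
        conv_rhs => rw [← ENNReal.rpow_one C, ← ENNReal.rpow_mul, one_mul,
          ← ENNReal.rpow_add_of_nonneg _ _ h0 zero_le_one]
        congr 1; ring
      rw [ENNReal.mul_rpow_of_nonneg _ _ h0,
        ENNReal.mul_rpow_of_nonneg _ _ h0, sq_rpow_half, sq_rpow_half, hadd Y, e,
        ENNReal.rpow_two, ENNReal.rpow_two]
      ring

theorem avg {F : En n → ℝ≥0∞} (hF : Measurable F) :
    ∫⁻ p, ∫⁻ y in Metric.closedBall (0 : En n) 1, F (y + p) =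
      volume (Metric.closedBall (0 : En n) 1) * ∫⁻ x, F x := by
  rw [lintegral_lintegral_swap]
  · have : ∀ y : En n, ∫⁻ p, F (y + p) = ∫⁻ x, F x := fun y => lintegral_add_left_eq_self F y
    simp_rw [this]
    rw [lintegral_const, Measure.restrict_apply_univ, mul_comm]
  · exact (hF.comp (by fun_prop : Measurable fun z : En n × En n => z.2 + z.1)).aemeasurable

theorem TT_meas {b : E3 n → ℂ} (hb : Continuous b) {U V : En n → ℂ} (hU : Continuous U)
    (hV : Continuous V) : StronglyMeasurable (TT b U V) := by
  unfold TT
  have hc : Continuous fun z : En n × (En n × En n) =>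
      b (z.1, z.2) * ex (⟪z.1, z.2.1⟫ + ⟪z.1, z.2.2⟫) * U z.2.1 * V z.2.2 := by
    have := continuous_ex
    fun_prop
  exact hc.stronglyMeasurable.integral_prod_right'

/-- Majorant of the local weighted norms. -/
theorem majo (n : ℕ) (q : ℝ≥0∞) (hq : 1 ≤ q) : ∃ C : ℝ≥0∞, C ≠ ⊤ ∧ ∀ f : En n → ℂ, Continuous f →
    Nice f → ∃ M : En n → ℝ, Measurable M ∧ (∀ p, 0 ≤ M p) ∧
      (∀ p, eLpNorm (wm (tr p f)) q volume ≤ ENNReal.ofReal (M p)) ∧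
      eLpNorm M q volume ≤ C * eLpNorm f q volume := by
  have htr : ∀ (f : En n → ℂ) p, Nice f → eLpNorm (wm (tr p f)) q volume ≤ eLpNorm f q volume := by
    intro f p hf
    refine (eLpNorm_mono (norm_wm_le _)).trans (le_of_eq ?_)
    exact eLpNorm_comp_measurePreserving (hf q).1 (measurePreserving_add_right volume p)
  rcases eq_or_ne q ⊤ with rfl | hqt
  · refine ⟨1, by simp, fun f hfc hf => ⟨fun _ => (eLpNorm f ⊤ volume).toReal, measurable_const,
      fun p => ENNReal.toReal_nonneg, fun p => ?_, ?_⟩⟩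
    · rw [ENNReal.ofReal_toReal (hf ⊤).2.ne]; exact htr f p hf
    · rw [eLpNorm_exponent_top, one_mul]
      refine (eLpNormEssSup_le_of_ae_enorm_bound (C := eLpNorm f ⊤ volume)
        (Filter.Eventually.of_forall fun x => ?_))
      rw [Real.enorm_eq_ofReal ENNReal.toReal_nonneg, ENNReal.ofReal_toReal (hf ⊤).2.ne]
  · have hq0 : q ≠ 0 := (zero_lt_one.trans_le hq).ne'
    set t := q.toReal with ht
    have ht0 : 0 < t := ENNReal.toReal_pos hq0 hqt
    have hnorm : ∀ {β : Type} [NormedAddCommGroup β] (h : En n → β), eLpNorm h q volume ^ t = ∫⁻ x, ‖h x‖ₑ ^ t := by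
      intro β _ h
      rw [eLpNorm_eq_lintegral_rpow_enorm_toReal hq0 hqt, ← ENNReal.rpow_mul,
        one_div_mul_cancel ht0.ne', ENNReal.rpow_one]
    set W := ∫⁻ y : En n, ENNReal.ofReal (wt y) ^ t with hW
    have hWt : W ≠ ⊤ := by
      have h1 : 1 ≤ t := by
        rw [ht, ← ENNReal.toReal_one]; exact ENNReal.toReal_mono hqt hq
      refine ne_of_lt (lt_of_le_of_lt (lintegral_mono fun x => ?_) (wt_lint_ne (n := n)).lt_top)
      calc ENNReal.ofReal (wt x) ^ t ≤ ENNReal.ofReal (wt x) ^ (1 : ℝ) :=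
            ENNReal.rpow_le_rpow_of_exponent_ge (ENNReal.ofReal_le_one.2 (wt_le_one x)) h1
        _ = _ := by simp
    refine ⟨W ^ (1 / t), ENNReal.rpow_ne_top_of_nonneg (by positivity) hWt, fun f hfc hf => ?_⟩
    set N : En n → ℝ≥0∞ := fun p => eLpNorm (wm (tr p f)) q volume with hN
    have hNt : ∀ p, N p ≠ ⊤ := fun p => ((hf.tr p).wm q).2.ne
    have hen : ∀ p y, ‖wm (tr p f) y‖ₑ ^ t = ENNReal.ofReal (wt y) ^ t * ‖f (y + p)‖ₑ ^ t := by
      intro p y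
      rw [wm, enorm_mul, ENNReal.mul_rpow_of_nonneg _ _ ht0.le, tr]
      congr 2
      rw [← ofReal_norm, Complex.norm_real, Real.norm_of_nonneg (wt_pos y).le]
    have hjm : Measurable fun z : En n × En n =>
        ENNReal.ofReal (wt z.2) ^ t * ‖f (z.2 + z.1)‖ₑ ^ t := by
      refine Measurable.mul (Measurable.pow_const ?_ t) (Measurable.pow_const ?_ t)
      · exact ENNReal.measurable_ofReal.comp (wt_continuous.comp continuous_snd).measurable
      · exact (hfc.comp (by fun_prop : Continuous fun z : En n × En n => z.2 + z.1)).enorm.measurable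
    have hNe : ∀ p, N p ^ t = ∫⁻ y, ENNReal.ofReal (wt y) ^ t * ‖f (y + p)‖ₑ ^ t := by
      intro p
      rw [hN]; simp only []
      rw [hnorm]; simp_rw [hen]
    have hNm : Measurable N := by
      have : N = fun p => (∫⁻ y, ENNReal.ofReal (wt y) ^ t * ‖f (y + p)‖ₑ ^ t) ^ (1 / t) := by
        funext p
        rw [← hNe, ← ENNReal.rpow_mul, mul_one_div_cancel ht0.ne', ENNReal.rpow_one]
      rw [this]
      exact (Measurable.lintegral_prod_right' (f := fun z : En n × En n =>
        ENNReal.ofReal (wt z.2) ^ t * ‖f (z.2 + z.1)‖ₑ ^ t) hjm).pow_const _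
    refine ⟨fun p => (N p).toReal, hNm.ennreal_toReal, fun p => ENNReal.toReal_nonneg,
      fun p => by rw [ENNReal.ofReal_toReal (hNt p)], ?_⟩
    have hfin : eLpNorm (fun p => (N p).toReal) q volume ^ t = W * eLpNorm f q volume ^ t := by
      rw [hnorm, hnorm]
      have : ∀ p, ‖(N p).toReal‖ₑ ^ t = ∫⁻ y, ENNReal.ofReal (wt y) ^ t * ‖f (y + p)‖ₑ ^ t := by
        intro p
        rw [Real.enorm_eq_ofReal ENNReal.toReal_nonneg, ENNReal.ofReal_toReal (hNt p), hNe]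
      simp_rw [this]
      rw [lintegral_lintegral_swap hjm.aemeasurable]
      have h2 : ∀ y : En n, ∫⁻ p, ENNReal.ofReal (wt y) ^ t * ‖f (y + p)‖ₑ ^ t =
          ENNReal.ofReal (wt y) ^ t * ∫⁻ x, ‖f x‖ₑ ^ t := by
        intro y
        rw [lintegral_const_mul' _ _ (ENNReal.rpow_ne_top_of_nonneg ht0.le (by simp))]
        congr 1
        exact lintegral_add_left_eq_self (fun x => ‖f x‖ₑ ^ t) y
      simp_rw [h2]
      rw [lintegral_mul_const]
      exact (ENNReal.measurable_ofReal.comp wt_continuous.measurable).pow_const t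
    have h3 : eLpNorm (fun p => (N p).toReal) q volume =
        (eLpNorm (fun p => (N p).toReal) q volume ^ t) ^ (1 / t) := by
      rw [← ENNReal.rpow_mul, mul_one_div_cancel ht0.ne', ENNReal.rpow_one]
    rw [h3, hfin, ENNReal.mul_rpow_of_nonneg _ _ (by positivity), ← ENNReal.rpow_mul,
      mul_one_div_cancel ht0.ne', ENNReal.rpow_one]

end Glob

section ThmN

variable {n : ℕ}

/-- The exponent. -/
def kap (q₁ q₂ r : ℝ≥0∞) : ℝ := max (1 / 2) (1 - r⁻¹.toReal) + (lossE q₁ + lossE q₂) / 2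

theorem loc_r (n : ℕ) (q₁ q₂ r : ℝ≥0∞) (h₁ : 1 ≤ q₁) (h₂ : 1 ≤ q₂) (hr0 : 0 < r) (hrt : r < ⊤) :
    ∃ C : ℝ≥0∞, C ≠ ⊤ ∧ ∀ (R B : ℝ) (b : E3 n → ℂ), 1 ≤ R → Gl R B (10 * n) b →
    ∀ f g : En n → ℂ, Nice f → Nice g → ∀ p,
    ∫⁻ y in Metric.closedBall (0 : En n) 1, ‖TT b (ft f) (ft g) (y + p)‖ₑ ^ r.toReal ≤
      C * ENNReal.ofReal (B * R ^ (n * kap q₁ q₂ r)) ^ r.toReal *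
        (eLpNorm (wm (tr p f)) q₁ volume * eLpNorm (wm (tr p g)) q₂ volume) ^ r.toReal := by
  obtain ⟨C, hC, h⟩ := loc_est n q₁ q₂ h₁ h₂
  set t := r.toReal with ht
  have ht0 : 0 < t := ENNReal.toReal_pos hr0.ne' hrt.ne
  have hrt' : r⁻¹.toReal = 1 / t := by rw [ENNReal.toReal_inv]; simp [ht]
  set l := lossE q₁ + lossE q₂ with hl
  have hsq : ∀ (R B : ℝ), 1 ≤ R → B ^ 2 * R ^ n * (R ^ (n * lossE q₁) * R ^ (n * lossE q₂)) =
      (B * R ^ (n * (1 / 2 + l / 2))) ^ 2 := by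
    intro R B hR
    have hR0 : 0 < R := by linarith
    rw [mul_pow, ← Real.rpow_natCast R n, ← Real.rpow_natCast (R ^ (n * (1 / 2 + l / 2))) 2,
      ← Real.rpow_mul hR0.le, ← Real.rpow_add hR0, mul_assoc, ← Real.rpow_add hR0]
    congr 2; rw [hl]; push_cast; ring
  have hsq2 : ∀ (R B : ℝ), 1 ≤ R → B ^ 2 * R ^ (2 * n) * (R ^ (n * lossE q₁) * R ^ (n * lossE q₂)) =
      (B * R ^ (n * (1 + l / 2))) ^ 2 := by
    intro R B hR
    have hR0 : 0 < R := by linarith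
    rw [mul_pow, ← Real.rpow_natCast R (2 * n), ← Real.rpow_natCast (R ^ (n * (1 + l / 2))) 2,
      ← Real.rpow_mul hR0.le, ← Real.rpow_add hR0, mul_assoc, ← Real.rpow_add hR0]
    congr 2; rw [hl]; push_cast; ring
  rcases le_total t 2 with h2 | h2
  · set b1 := volume (Metric.closedBall (0 : En n) 1)
    refine ⟨b1 ^ (1 - t / 2) * C ^ (t / 2), ENNReal.mul_ne_top
      (ENNReal.rpow_ne_top_of_nonneg (by linarith) vol_ball_ne)
      (ENNReal.rpow_ne_top_of_nonneg (by linarith) hC), fun R B b hR hb f g hf hg p => ?_⟩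
    have hB : 0 ≤ B := (hb.2.2 0).nonneg
    have hR0 : 0 < R := by linarith
    have hk : kap q₁ q₂ r = 1 / 2 + l / 2 := by
      rw [kap, hrt', max_eq_left]
      have : 1 / 2 ≤ 1 / t := one_div_le_one_div_of_le ht0 h2
      linarith
    have h3 := (h R B b hR hb f g hf hg p).1
    rw [hsq R B hR, ENNReal.ofReal_pow (by positivity)] at h3
    have hm : StronglyMeasurable fun y => TT b (ft f) (ft g) (y + p) :=
      (TT_meas hb.1.continuous (ft_continuous hf.integrable)
        (ft_continuous hg.integrable)).comp_measurable (measurable_add_const p)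
    have := locr_low ht0 h2 hm.aestronglyMeasurable h3
    rw [Measure.restrict_apply_univ] at this
    rw [hk]; exact this
  · refine ⟨C ^ (t / 2), ENNReal.rpow_ne_top_of_nonneg (by linarith) hC,
      fun R B b hR hb f g hf hg p => ?_⟩
    have hB : 0 ≤ B := (hb.2.2 0).nonneg
    have hR0 : 0 < R := by linarith
    have hk : kap q₁ q₂ r = 1 - 1 / t + l / 2 := by
      rw [kap, hrt', max_eq_right]
      have : 1 / t ≤ 1 / 2 := one_div_le_one_div_of_le (by norm_num) h2
      linarith
    obtain ⟨h3, h4⟩ := h R B b hR hb f g hf hg p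
    rw [hsq R B hR, ENNReal.ofReal_pow (by positivity)] at h3
    rw [hsq2 R B hR, ENNReal.ofReal_pow (by positivity)] at h4
    have hN : (eLpNorm (wm (tr p f)) q₁ volume * eLpNorm (wm (tr p g)) q₂ volume) ≠ ⊤ :=
      ENNReal.mul_ne_top ((hf.tr p).wm q₁).2.ne ((hg.tr p).wm q₂).2.ne
    have := locr_high h2 (μ := volume.restrict (Metric.closedBall (0 : En n) 1))
      (ENNReal.mul_ne_top (ENNReal.mul_ne_top hC (by simp)) (ENNReal.pow_ne_top hN)) h3
      ((ae_restrict_iff' Metric.isClosed_closedBall.measurableSet).2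
        (Filter.Eventually.of_forall h4))
    refine this.trans (le_of_eq ?_)
    congr 2
    rw [hk]
    have hp : ∀ e : ℝ, ∀ s : ℝ, 0 ≤ s → ENNReal.ofReal (B * R ^ (n * e)) ^ s =
        ENNReal.ofReal B ^ s * ENNReal.ofReal (R ^ (n * e * s)) := by
      intro e s hs
      rw [ENNReal.ofReal_mul hB, ENNReal.mul_rpow_of_nonneg _ _ hs,
        ENNReal.ofReal_rpow_of_pos (x := R ^ (n * e)) (by positivity), ← Real.rpow_mul hR0.le]
    rw [hp _ _ (by linarith), hp _ _ (by norm_num), hp _ _ (by linarith),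
      mul_mul_mul_comm, ← ENNReal.rpow_add_of_nonneg _ _ (by linarith) (by norm_num),
      ← ENNReal.ofReal_mul (by positivity), ← Real.rpow_add hR0]
    congr 2
    · ring
    · congr 1; field_simp; ring

theorem thmN (n : ℕ) (q₁ q₂ r : ℝ≥0∞) (h₁ : 1 ≤ q₁) (h₂ : 1 ≤ q₂) (hr0 : 0 < r) (hrt : r < ⊤)
    (hrel : r⁻¹ = q₁⁻¹ + q₂⁻¹) :
    ∃ C : ℝ≥0∞, C ≠ ⊤ ∧ ∀ (R B : ℝ) (b : E3 n → ℂ), 1 ≤ R → Gl R B (10 * n) b →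
    ∀ f g : En n → ℂ, Continuous f → Continuous g → Nice f → Nice g →
    eLpNorm (TT b (ft f) (ft g)) r volume ≤
      C * ENNReal.ofReal (B * R ^ (n * kap q₁ q₂ r)) *
        (eLpNorm f q₁ volume * eLpNorm g q₂ volume) := by
  obtain ⟨C, hC, h⟩ := loc_r n q₁ q₂ r h₁ h₂ hr0 hrt
  obtain ⟨C1, hC1, k1⟩ := majo n q₁ h₁
  obtain ⟨C2, hC2, k2⟩ := majo n q₂ h₂
  set t := r.toReal with ht
  have ht0 : 0 < t := ENNReal.toReal_pos hr0.ne' hrt.ne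
  set b1 := volume (Metric.closedBall (0 : En n) 1)
  have hb0 : b1 ≠ 0 := (Metric.measure_closedBall_pos volume _ one_pos).ne'
  have hbt : b1 ≠ ⊤ := vol_ball_ne
  have hCC : b1⁻¹ * C ≠ ⊤ := ENNReal.mul_ne_top (by simpa using hb0) hC
  refine ⟨(b1⁻¹ * C) ^ (1 / t) * (C1 * C2), ENNReal.mul_ne_top
    (ENNReal.rpow_ne_top_of_nonneg (by positivity) hCC) (ENNReal.mul_ne_top hC1 hC2),
    fun R B b hR hb f g hfc hgc hf hg => ?_⟩
  obtain ⟨M1, m1, p1, l1, e1⟩ := k1 f hfc hf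
  obtain ⟨M2, m2, p2, l2, e2⟩ := k2 g hgc hg
  set T := TT b (ft f) (ft g)
  set D := ENNReal.ofReal (B * R ^ (n * kap q₁ q₂ r))
  have hm : StronglyMeasurable T := TT_meas hb.1.continuous (ft_continuous hf.integrable)
        (ft_continuous hg.integrable)
  have hnorm : ∀ {β : Type} [NormedAddCommGroup β] (h : En n → β), eLpNorm h r volume ^ t =
      ∫⁻ x, ‖h x‖ₑ ^ t := by
    intro β _ h
    rw [eLpNorm_eq_lintegral_rpow_enorm_toReal hr0.ne' hrt.ne, ← ENNReal.rpow_mul,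
      one_div_mul_cancel ht0.ne', ENNReal.rpow_one]
  have hinv : ∀ x : ℝ≥0∞, (x ^ t) ^ (1 / t) = x := fun x => by
    rw [← ENNReal.rpow_mul, mul_one_div_cancel ht0.ne', ENNReal.rpow_one]
  have hint : b1 * eLpNorm T r volume ^ t ≤
      C * D ^ t * eLpNorm (M1 • M2) r volume ^ t := by
    rw [hnorm, hnorm, ← avg (hm.enorm.pow_const t)]
    rw [← lintegral_const_mul' _ _ (ENNReal.mul_ne_top hC
      (ENNReal.rpow_ne_top_of_nonneg ht0.le (by simp [D])))]
    refine lintegral_mono fun p => (h R B b hR hb f g hf hg p).trans ?_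
    gcongr
    calc _ ≤ ENNReal.ofReal (M1 p) * ENNReal.ofReal (M2 p) := mul_le_mul' (l1 p) (l2 p)
      _ = _ := by
        rw [Pi.smul_apply', smul_eq_mul, enorm_mul, Real.enorm_eq_ofReal (p1 p),
          Real.enorm_eq_ofReal (p2 p)]
  have : ENNReal.HolderTriple q₁ q₂ r := ⟨hrel.symm⟩
  have hH := eLpNorm_smul_le_mul_eLpNorm (p := q₁) (q := q₂) (r := r) (μ := (volume : Measure (En n)))
    m2.aestronglyMeasurable m1.aestronglyMeasurable
  have h3 : eLpNorm T r volume ^ t ≤ (b1⁻¹ * C) * D ^ t * eLpNorm (M1 • M2) r volume ^ t := by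
    calc _ = b1⁻¹ * (b1 * eLpNorm T r volume ^ t) := by
          rw [← mul_assoc, ENNReal.inv_mul_cancel hb0 hbt, one_mul]
      _ ≤ b1⁻¹ * (C * D ^ t * eLpNorm (M1 • M2) r volume ^ t) := by gcongr
      _ = _ := by ring
  have h4 := ENNReal.rpow_le_rpow h3 (by positivity : 0 ≤ 1 / t)
  rw [hinv, ENNReal.mul_rpow_of_nonneg _ _ (by positivity),
    ENNReal.mul_rpow_of_nonneg _ _ (by positivity), hinv, hinv] at h4
  calc _ ≤ _ := h4
    _ ≤ (b1⁻¹ * C) ^ (1 / t) * D * ((C1 * eLpNorm f q₁ volume) * (C2 * eLpNorm g q₂ volume)) := by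
        gcongr
        exact hH.trans (mul_le_mul' e1 e2)
    _ = _ := by ring

theorem kap_le (q₁ q₂ r : ℝ≥0∞) (h₁ : 1 ≤ q₁) (h₂ : 1 ≤ q₂) (hr0 : 0 < r)
    (hrel : r⁻¹ = q₁⁻¹ + q₂⁻¹) :
    kap q₁ q₂ r ≤ max (max (1/2) (max q₁⁻¹.toReal q₂⁻¹.toReal)) (1 - r⁻¹.toReal) +
      (1/2) * max (r⁻¹.toReal - 1) 0 := by
  have f1 : q₁⁻¹ ≠ ⊤ := by
    have := (zero_lt_one.trans_le h₁).ne'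
    simpa using this
  have f2 : q₂⁻¹ ≠ ⊤ := by
    have := (zero_lt_one.trans_le h₂).ne'
    simpa using this
  have hc : r⁻¹.toReal = q₁⁻¹.toReal + q₂⁻¹.toReal := by rw [hrel, ENNReal.toReal_add f1 f2]
  rw [kap, lossE, lossE, hc]
  have a0 : 0 ≤ q₁⁻¹.toReal := ENNReal.toReal_nonneg
  have b0 : 0 ≤ q₂⁻¹.toReal := ENNReal.toReal_nonneg
  generalize q₁⁻¹.toReal = a at *
  generalize q₂⁻¹.toReal = b at *
  set S := max (max (1 / 2) (max a b)) (1 - (a + b)) with hS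
  set P := max (a + b - 1) 0 with hP
  have s1 : 1 / 2 ≤ S := (le_max_left _ _).trans (le_max_left _ _)
  have s2 : a ≤ S := ((le_max_left _ _).trans (le_max_right _ _)).trans (le_max_left _ _)
  have s3 : b ≤ S := ((le_max_right _ _).trans (le_max_right _ _)).trans (le_max_left _ _)
  have s4 : 1 - (a + b) ≤ S := le_max_right _ _
  have p1 : a + b - 1 ≤ P := le_max_left _ _
  have p2 : 0 ≤ P := le_max_right _ _
  clear_value S P
  rcases max_cases (1 / 2) (1 - (a + b)) with h | h <;>
  rcases max_cases (2 * a - 1) 0 with h' | h' <;>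
  rcases max_cases (2 * b - 1) 0 with h'' | h'' <;>
  rw [h.1, h'.1, h''.1] <;> linarith

end ThmN

section Dyad

variable {n : ℕ}

theorem rpow_cmp {u m : ℝ} (h1 : 1 / 5 ≤ u) (h2 : u ≤ 5) : u ^ m ≤ 5 ^ |m| := by
  have hu : 0 < u := by linarith
  rcases le_total 0 m with h | h
  · rw [abs_of_nonneg h]; exact Real.rpow_le_rpow hu.le h2 h
  · rw [abs_of_nonpos h]
    have : u ^ m = (u⁻¹) ^ (-m) := by rw [Real.inv_rpow hu.le, Real.rpow_neg hu.le, inv_inv]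
    rw [this]
    refine Real.rpow_le_rpow (by positivity) ?_ (by linarith)
    rw [inv_le_comm₀ hu (by norm_num)]; linarith

theorem mdl_zero {V : Type*} [NormedAddCommGroup V] [NormedSpace ℝ V] (e : Fin n → V)
    (l : List (Fin n)) (F : V → ℂ) : mdl e l 0 F = F := by
  induction l with
  | nil => rfl
  | cons i l ih =>
    change (dd (e i))^[0] (mdl e l 0 F) = F
    rw [ih]; rfl

theorem Hor.size {m ρ δ : ℝ} {F : E3 n → ℂ} (h : Hor m ρ δ F) :
    ∃ C : ℝ, 0 ≤ C ∧ ∀ q, ‖F q‖ ≤ C * (1 + ‖q.2.1‖ + ‖q.2.2‖) ^ m := by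
  obtain ⟨C, hC⟩ := h.2 0 0 0
  refine ⟨|C|, abs_nonneg _, fun q => ?_⟩
  have := hC q
  rw [mdl_zero, mdl_zero, mdl_zero] at this
  refine this.trans ?_
  have h0 : (mdeg (0 : Fin n → ℕ) : ℝ) = 0 := by simp [mdeg]
  rw [h0]
  simp only [add_zero, mul_zero, sub_zero]
  gcongr
  exact le_abs_self C

/-- Anisotropic dilation. -/
def Ls (n : ℕ) (s : ℝ) : E3 n →L[ℝ] E3 n :=
  ((s⁻¹ • ContinuousLinearMap.id ℝ (En n)).prodMap (s • ContinuousLinearMap.id ℝ (En n × En n)))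

theorem Ls_apply (s : ℝ) (q : E3 n) : Ls n s q = (s⁻¹ • q.1, s • q.2) := rfl

theorem Ls_X (s : ℝ) (i : Fin n) : Ls n s (eX i) = s⁻¹ • eX i := by
  simp [Ls_apply, eX]
theorem Ls_K (s : ℝ) (i : Fin n) : Ls n s (eK i) = s • eK i := by
  simp [Ls_apply, eK]
theorem Ls_H (s : ℝ) (i : Fin n) : Ls n s (eH i) = s • eH i := by
  simp [Ls_apply, eH]

theorem Hor.dyad {ρ δ : ℝ} (hδρ : δ ≤ ρ) (k : ℕ) : ∀ (m : ℝ) {F : E3 n → ℂ}, Hor m ρ δ F →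
    ∃ C : ℝ, 0 ≤ C ∧ ∀ N : ℝ, 1 ≤ N → ∀ q : E3 n,
      N / 2 ≤ 1 + ‖N ^ ρ • q.2.1‖ + ‖N ^ ρ • q.2.2‖ →
      1 + ‖N ^ ρ • q.2.1‖ + ‖N ^ ρ • q.2.2‖ ≤ 5 * N →
      Bd dirs k (C * N ^ m) (fun q => F (Ls n (N ^ ρ) q)) q := by
  have base : ∀ (m : ℝ) {F : E3 n → ℂ}, Hor m ρ δ F →
    ∃ C : ℝ, 0 ≤ C ∧ ∀ N : ℝ, 1 ≤ N → ∀ q : E3 n,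
      N / 2 ≤ 1 + ‖N ^ ρ • q.2.1‖ + ‖N ^ ρ • q.2.2‖ →
      1 + ‖N ^ ρ • q.2.1‖ + ‖N ^ ρ • q.2.2‖ ≤ 5 * N →
      ‖F (Ls n (N ^ ρ) q)‖ ≤ C * N ^ m := by
    intro m F hF
    obtain ⟨C, hC, h⟩ := hF.size
    refine ⟨C * 5 ^ |m|, by positivity, fun N hN q h1 h2 => ?_⟩
    have hN0 : 0 < N := by linarith
    have := h (Ls n (N ^ ρ) q)
    simp only [Ls_apply, Prod.smul_fst, Prod.smul_snd] at this ⊢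
    refine this.trans ?_
    set l := 1 + ‖N ^ ρ • q.2.1‖ + ‖N ^ ρ • q.2.2‖ with hl
    have hl0 : 0 ≤ l := by positivity
    have e : l ^ m = (l / N) ^ m * N ^ m := by
      rw [Real.div_rpow hl0 hN0.le, div_mul_cancel₀ _ (by positivity)]
    rw [e, mul_assoc]
    have : (l / N) ^ m ≤ 5 ^ |m| := by
      apply rpow_cmp
      · rw [le_div_iff₀ hN0]; linarith
      · rw [div_le_iff₀ hN0]; linarith
    gcongr
  induction k with
  | zero => exact base
  | succ k ih =>
    intro m F hF
    obtain ⟨C0, hC0, h0⟩ := base m hF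
    choose CX hCX hX using fun i => ih (m + δ) (hF.dX i)
    choose CK hCK hK using fun i => ih (m - ρ) (hF.dK i)
    choose CH hCH hH using fun i => ih (m - ρ) (hF.dH i)
    have sX : 0 ≤ ∑ i, CX i := Finset.sum_nonneg fun i _ => hCX i
    have sK : 0 ≤ ∑ i, CK i := Finset.sum_nonneg fun i _ => hCK i
    have sH : 0 ≤ ∑ i, CH i := Finset.sum_nonneg fun i _ => hCH i
    refine ⟨C0 + ∑ i, CX i + ∑ i, CK i + ∑ i, CH i, by positivity, fun N hN q h1 h2 => ⟨?_, ?_⟩⟩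
    · refine (h0 N hN q h1 h2).trans ?_
      gcongr
      linarith
    have hN0 : 0 < N := by linarith
    have hs : 0 < N ^ ρ := by positivity
    have hdd : ∀ v : E3 n, dd v (fun q => F (Ls n (N ^ ρ) q)) =
        fun q => dd (Ls n (N ^ ρ) v) F (Ls n (N ^ ρ) q) := fun v => by
      have := dd_comp hF.1 (Ls n (N ^ ρ)) 0 v
      simpa using this
    have hsm : ∀ {G : E3 n → ℂ}, Sm G → Sm fun q => G (Ls n (N ^ ρ) q) := fun hG => by
      simpa using hG.comp (Ls n (N ^ ρ)) 0
    intro i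
    rw [hdd]
    rcases i with i | i | i
    · simp only [dirs, Sum.elim_inl]
      rw [Ls_X, dd_smul]
      refine (Bd.const_mul _ (hsm (hF.1.dd _)) (hX i N hN q h1 h2)).mono ?_
      have e1 : ‖(((N ^ ρ)⁻¹ : ℝ) : ℂ)‖ = N ^ (-ρ) := by
        rw [Complex.norm_real, Real.norm_of_nonneg (by positivity), Real.rpow_neg hN0.le]
      have e2 : N ^ (-ρ) * N ^ (m + δ) ≤ N ^ m := by
        rw [← Real.rpow_add hN0]
        exact Real.rpow_le_rpow_of_exponent_le hN (by linarith)
      have := Finset.single_le_sum (fun i _ => hCX i) (Finset.mem_univ i)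
      rw [e1]
      calc _ = CX i * (N ^ (-ρ) * N ^ (m + δ)) := by ring
        _ ≤ CX i * N ^ m := mul_le_mul_of_nonneg_left e2 (hCX i)
        _ ≤ _ := by gcongr; linarith
    · simp only [dirs, Sum.elim_inl, Sum.elim_inr]
      rw [Ls_K, dd_smul]
      refine (Bd.const_mul _ (hsm (hF.1.dd _)) (hK i N hN q h1 h2)).mono ?_
      have e1 : ‖((N ^ ρ : ℝ) : ℂ)‖ = N ^ ρ := by
        rw [Complex.norm_real, Real.norm_of_nonneg (by positivity)]
      have e2 : N ^ ρ * N ^ (m - ρ) = N ^ m := by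
        rw [← Real.rpow_add hN0]; congr 1; ring
      have := Finset.single_le_sum (fun i _ => hCK i) (Finset.mem_univ i)
      rw [e1]
      calc _ = CK i * (N ^ ρ * N ^ (m - ρ)) := by ring
        _ = CK i * N ^ m := by rw [e2]
        _ ≤ _ := by gcongr; linarith
    · simp only [dirs, Sum.elim_inr]
      rw [Ls_H, dd_smul]
      refine (Bd.const_mul _ (hsm (hF.1.dd _)) (hH i N hN q h1 h2)).mono ?_
      have e1 : ‖((N ^ ρ : ℝ) : ℂ)‖ = N ^ ρ := by
        rw [Complex.norm_real, Real.norm_of_nonneg (by positivity)]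
      have e2 : N ^ ρ * N ^ (m - ρ) = N ^ m := by
        rw [← Real.rpow_add hN0]; congr 1; ring
      have := Finset.single_le_sum (fun i _ => hCH i) (Finset.mem_univ i)
      rw [e1]
      calc _ = CH i * (N ^ ρ * N ^ (m - ρ)) := by ring
        _ = CH i * N ^ m := by rw [e2]
        _ ≤ _ := by gcongr; linarith

/-- The frequency cut-off. -/
def ph (w : En n × En n) : ℂ := ((chi n w.1 * chi n w.2 : ℝ) : ℂ)

/-- The annular cut-off. -/
def th (w : En n × En n) : ℂ := ph w - ph ((2 : ℝ) • w)

theorem ph_sm : Sm (ph (n := n)) :=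
  Complex.ofRealCLM.contDiff.comp
    (((chi n).contDiff.comp contDiff_fst).mul ((chi n).contDiff.comp contDiff_snd))

theorem ph_one {w : En n × En n} (h1 : ‖w.1‖ ≤ 1) (h2 : ‖w.2‖ ≤ 1) : ph w = 1 := by
  rw [ph, (chi n).one_of_mem_closedBall (by simpa [chi] using h1),
    (chi n).one_of_mem_closedBall (by simpa [chi] using h2)]
  simp

theorem ph_zero {w : En n × En n} (h : w ∉ Bx n 2) : ph w = 0 := by
  simp only [Bx, Set.mem_prod, mem_closedBall_zero_iff, not_and_or, not_le] at h
  rw [ph]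
  rcases h with h | h
  · rw [(chi n).zero_of_le_dist (x := w.1) (by simpa [chi] using h.le)]; simp
  · rw [(chi n).zero_of_le_dist (x := w.2) (by simpa [chi] using h.le)]; simp

theorem ph_norm (w : En n × En n) : ‖ph w‖ ≤ 1 := by
  rw [ph, Complex.norm_real, Real.norm_of_nonneg (mul_nonneg (chi n).nonneg (chi n).nonneg)]
  exact mul_le_one₀ (chi n).le_one (chi n).nonneg (chi n).le_one

theorem th_sm : Sm (th (n := n)) := by
  have : Sm fun w : En n × En n => ph ((2 : ℝ) • w) := by
    simpa using ph_sm.comp ((2 : ℝ) • ContinuousLinearMap.id ℝ (En n × En n)) 0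
  exact ph_sm.sub this

theorem th_zero {w : En n × En n} (h : w ∉ Bx n 2) : th w = 0 := by
  rw [th, ph_zero h, ph_zero, sub_zero]
  simp only [Bx, Set.mem_prod, mem_closedBall_zero_iff, not_and_or, not_le, Prod.smul_fst,
    Prod.smul_snd, norm_smul, Real.norm_ofNat] at h ⊢
  rcases h with h | h
  · left; linarith
  · right; linarith

theorem th_zero2 {w : En n × En n} (h1 : ‖w.1‖ ≤ 1 / 2) (h2 : ‖w.2‖ ≤ 1 / 2) : th w = 0 := by
  rw [th, ph_one (by linarith) (by linarith), ph_one, sub_self] <;>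
  · simp only [Prod.smul_fst, Prod.smul_snd, norm_smul, Real.norm_ofNat]; linarith

theorem Bx_compact (R : ℝ) : IsCompact (Bx n R) :=
  (isCompact_closedBall _ _).prod (isCompact_closedBall _ _)

/-- Main rescaled estimate for one dyadic piece. -/
theorem piece_Gl {ρ δ m : ℝ} (hδρ : δ ≤ ρ) (hρ1 : ρ ≤ 1) (k : ℕ) {F : E3 n → ℂ} (hF : Hor m ρ δ F)
    {Ψ : En n × En n → ℂ} (hΨ : Sm Ψ) (hz : ∀ w, w ∉ Bx n 2 → Ψ w = 0) :
    ∃ C : ℝ, 0 ≤ C ∧ ∀ N : ℝ, 1 ≤ N →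
      (N ≤ 2 ∨ ∀ w, ‖w.1‖ ≤ 1 / 2 → ‖w.2‖ ≤ 1 / 2 → Ψ w = 0) →
      Gl (2 * N ^ (1 - ρ)) (C * N ^ m) k
        (fun q => F (Ls n (N ^ ρ) q) * Ψ ((N ^ (-(1 - ρ)) : ℝ) • q.2)) := by
  obtain ⟨C, hC, h⟩ := hF.dyad hδρ k m
  have hcs : HasCompactSupport Ψ := HasCompactSupport.intro (Bx_compact 2) hz
  obtain ⟨D, hD, hD2⟩ := hcs_Bd (fun i : Fin n ⊕ Fin n => (dirs (Sum.inr i)).2) k hΨ hcs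
  refine ⟨2 ^ k * (C * D), by positivity, fun N hN hN2 => ?_⟩
  have hN0 : 0 < N := by linarith
  set c : ℝ := N ^ (-(1 - ρ)) with hc
  have hc0 : 0 < c := by positivity
  have hc1 : c ≤ 1 := Real.rpow_le_one_of_one_le_of_nonpos hN (by linarith)
  have hcs' : N ^ ρ = c * N := by
    rw [hc]; nth_rewrite 3 [← Real.rpow_one N]; rw [← Real.rpow_add hN0]; congr 1; ring
  have hcR : c * (2 * N ^ (1 - ρ)) = 2 := by
    rw [hc, mul_left_comm, ← Real.rpow_add hN0]; simp
  have hFs : Sm fun q => F (Ls n (N ^ ρ) q) := by simpa using hF.1.comp (Ls n (N ^ ρ)) 0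
  set L : E3 n →L[ℝ] (En n × En n) := c • ContinuousLinearMap.snd ℝ (En n) (En n × En n) with hL
  have hLq : ∀ q, L q = c • q.2 := fun q => rfl
  have hPs : Sm fun q : E3 n => Ψ (c • q.2) := by simpa [hLq] using hΨ.comp L 0
  have hPb : ∀ q : E3 n, Bd dirs k D (fun q : E3 n => Ψ (c • q.2)) q := by
    intro q
    have := Bd.comp (e' := dirs) L 0 (fun i => by
      rcases i with i | i
      · left; simp [hLq, dirs, eX]
      · right; exact ⟨i, c, by rw [abs_of_pos hc0]; exact hc1, rfl⟩) hΨ (hD2 (L q + 0))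
    simpa [hLq] using this
  refine ⟨hFs.mul hPs, ?_, ?_⟩
  · intro q hq
    have : c • q.2 ∉ Bx n 2 := by
      simp only [Bx, Set.mem_prod, mem_closedBall_zero_iff, not_and_or, not_le, Prod.smul_fst,
        Prod.smul_snd, norm_smul, Real.norm_of_nonneg hc0.le] at hq ⊢
      rw [← hcR]
      exact hq.imp (fun h => by gcongr) (fun h => by gcongr)
    change F _ * Ψ (c • q.2) = 0
    rw [hz _ this, mul_zero]
  · intro q
    have hB0 : 0 ≤ 2 ^ k * (C * D) * N ^ m := by positivity
    by_cases hq : c • q.2 ∈ Bx n 2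
    swap
    · refine Bd.congr (f := fun _ => 0) ?_ (Bd.zero hB0)
      have ho : IsOpen {q : E3 n | c • q.2 ∉ Bx n 2} :=
        ((Bx_compact 2).isClosed.isOpen_compl).preimage
          (by fun_prop : Continuous fun q : E3 n => c • q.2)
      filter_upwards [ho.mem_nhds hq] with y hy
      rw [hz _ hy, mul_zero]
    by_cases hq2 : 2 < N ∧ ‖(c • q.2).1‖ < 1 / 2 ∧ ‖(c • q.2).2‖ < 1 / 2
    · obtain ⟨hq3, hq4, hq5⟩ := hq2
      have hzz := hN2.resolve_left (by linarith)
      refine Bd.congr (f := fun _ => 0) ?_ (Bd.zero hB0)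
      have ho : IsOpen {q : E3 n | ‖(c • q.2).1‖ < 1 / 2 ∧ ‖(c • q.2).2‖ < 1 / 2} :=
        IsOpen.and (isOpen_lt (by fun_prop) continuous_const)
          (isOpen_lt (by fun_prop) continuous_const)
      filter_upwards [ho.mem_nhds ⟨hq4, hq5⟩] with y hy
      rw [hzz _ hy.1.le hy.2.le, mul_zero]
    have e : ∀ v : En n, ‖N ^ ρ • v‖ = N * ‖c • v‖ := fun v => by
      rw [hcs', mul_comm, mul_smul, norm_smul, Real.norm_of_nonneg hN0.le]
    simp only [Bx, Set.mem_prod, mem_closedBall_zero_iff, Prod.smul_fst, Prod.smul_snd] at hq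
    have h5 : 1 + ‖N ^ ρ • q.2.1‖ + ‖N ^ ρ • q.2.2‖ ≤ 5 * N := by
      rw [e, e]; nlinarith [hq.1, hq.2]
    have h6 : N / 2 ≤ 1 + ‖N ^ ρ • q.2.1‖ + ‖N ^ ρ • q.2.2‖ := by
      rw [e, e]
      rcases le_or_gt N 2 with h | h
      · have := mul_nonneg hN0.le (norm_nonneg (c • q.2.1))
        have := mul_nonneg hN0.le (norm_nonneg (c • q.2.2))
        linarith
      · simp only [h, true_and, not_and_or, not_lt, Prod.smul_fst, Prod.smul_snd] at hq2
        have := mul_nonneg hN0.le (norm_nonneg (c • q.2.1))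
        have := mul_nonneg hN0.le (norm_nonneg (c • q.2.2))
        rcases hq2 with h | h <;> nlinarith
    refine ((h N hN q h6 h5).mul hFs hPs (hPb q)).mono (le_of_eq ?_)
    ring

end Dyad

section Asm

open scoped FourierTransform

variable {n : ℕ}

/-- Dilation. -/
def dil (s : ℝ) (f : En n → ℂ) : En n → ℂ := fun y => f (s • y)

theorem eLp_dil {s : ℝ} (hs : 0 < s) (f : En n → ℂ) (q : ℝ≥0∞) :
    eLpNorm (dil s f) q volume =
      ENNReal.ofReal (s ^ (-(n : ℝ) * q⁻¹.toReal)) * eLpNorm f q volume := by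
  have hme : MeasurableEmbedding fun y : En n => s • y :=
    (Homeomorph.smulOfNeZero s hs.ne').measurableEmbedding
  have h1 : dil s f = f ∘ fun y : En n => s • y := rfl
  rw [h1, ← hme.eLpNorm_map_measure, Measure.map_addHaar_smul _ hs.ne',
    eLpNorm_smul_measure_of_ne_zero (by simp [hs.ne'] )]
  rw [smul_eq_mul, finrank_euclideanSpace_fin]
  congr 1
  rw [one_div, ENNReal.ofReal_rpow_of_pos (by positivity), abs_of_pos (by positivity),
    ← Real.rpow_natCast, ← Real.rpow_neg hs.le, ← Real.rpow_mul hs.le]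

theorem Nice.dil {f : En n → ℂ} (hf : Nice f) {s : ℝ} (hs : 0 < s) : Nice (dil s f) := by
  intro p
  refine ⟨?_, ?_⟩
  · have hme : Measure.QuasiMeasurePreserving (fun y : En n => s • y) := 
      ⟨measurable_const_smul s, by
        rw [Measure.map_addHaar_smul _ hs.ne']
        exact Measure.smul_absolutelyContinuous⟩
    exact (hf p).1.comp_quasiMeasurePreserving hme
  · rw [eLp_dil hs]
    exact ENNReal.mul_lt_top (by simp) (hf p).2

theorem ft_dil {s : ℝ} (hs : 0 < s) (f : En n → ℂ) (ξ : En n) :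
    ft f (s • ξ) = ((s ^ n)⁻¹ : ℝ) * ft (dil s⁻¹ f) ξ := by
  rw [ft_eq_ex, ft_eq_ex]
  have := Measure.integral_comp_smul (volume : Measure (En n))
    (fun y => ex (-⟪y, ξ⟫) * dil s⁻¹ f y) s
  rw [finrank_euclideanSpace_fin, abs_of_pos (by positivity)] at this
  rw [← Complex.real_smul, ← this]
  congr 1; funext y
  simp only [dil, smul_smul, inv_mul_cancel₀ hs.ne', one_smul, inner_smul_left, inner_smul_right]
  simp

theorem TT_dil {s : ℝ} (hs : 0 < s) (A : E3 n → ℂ) (f g : En n → ℂ) (x : En n) :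
    TT A (ft f) (ft g) x =
      TT (fun q => A (Ls n s q)) (ft (dil s⁻¹ f)) (ft (dil s⁻¹ g)) (s • x) := by
  unfold TT
  have hh : (volume : Measure (En n × En n)).IsAddHaarMeasure :=
    inferInstanceAs ((volume : Measure (En n)).prod (volume : Measure (En n))).IsAddHaarMeasure
  have := Measure.integral_comp_smul (volume : Measure (En n × En n))
    (fun w => A (x, w) * ex (⟪x, w.1⟫ + ⟪x, w.2⟫) * ft f w.1 * ft g w.2) s
  have hfr : Module.finrank ℝ (En n × En n) = n + n := by simp
  rw [hfr, abs_of_pos (by positivity)] at this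
  have h2 : ∀ z : ℂ, z = (s ^ (n + n) : ℝ) • ((s ^ (n + n))⁻¹ • z) := fun z => by
    rw [smul_smul, mul_inv_cancel₀ (by positivity), one_smul]
  rw [h2 (∫ w : En n × En n, _), ← this, ← integral_smul]
  congr 1; funext w
  simp only [Prod.smul_fst, Prod.smul_snd, ft_dil hs, Ls_apply, smul_smul,
    inv_mul_cancel₀ hs.ne', one_smul, inner_smul_left, inner_smul_right, Complex.real_smul]
  have : (s : ℂ) ≠ 0 := by exact_mod_cast hs.ne'
  push_cast
  simp only [conj_trivial]
  field_simp
  ring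

theorem schwartz_nice (f : 𝓢(En n, ℂ)) : Nice (f : En n → ℂ) := fun p => f.memLp p

theorem ft_schwartz_int (f : 𝓢(En n, ℂ)) : Integrable (ft (f : En n → ℂ)) := by
  have h : Integrable (fun ξ => (𝓕 f : 𝓢(En n, ℂ)) ((2 * π)⁻¹ • ξ)) :=
    ((𝓕 f : 𝓢(En n, ℂ)).integrable).comp_smul (by positivity)
  refine h.congr (Filter.Eventually.of_forall fun ξ => ?_)
  simp only
  rw [ft_eq_fourier, SchwartzMap.fourier_coe]

theorem TT_bint {A : E3 n → ℂ} (hA : Continuous A) {C : ℝ} (hC : ∀ q, ‖A q‖ ≤ C) {U V : En n → ℂ}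
    (hU : Integrable U) (hV : Integrable V) (x : En n) :
    Integrable (fun w : En n × En n => A (x, w) * ex (⟪x, w.1⟫ + ⟪x, w.2⟫) * U w.1 * V w.2) := by
  have h := hU.mul_prod hV
  have : Integrable (fun w : En n × En n =>
      (A (x, w) * ex (⟪x, w.1⟫ + ⟪x, w.2⟫)) * (U w.1 * V w.2)) := by
    refine Integrable.bdd_mul (c := C) h ?_ ?_
    · have := continuous_ex
      exact Continuous.aestronglyMeasurable (by fun_prop)
    · refine Filter.Eventually.of_forall fun w => ?_
      rw [norm_mul, norm_ex, mul_one]; exact hC _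
  simpa only [mul_assoc] using this

/-- One dyadic piece. -/
theorem piece_est (q₁ q₂ r : ℝ≥0∞) (h₁ : 1 ≤ q₁) (h₂ : 1 ≤ q₂) (hr0 : 0 < r) (hrt : r < ⊤)
    (hrel : r⁻¹ = q₁⁻¹ + q₂⁻¹) {ρ δ m : ℝ} (hδρ : δ ≤ ρ) (hρ1 : ρ ≤ 1)
    {F : E3 n → ℂ} (hF : Hor m ρ δ F)
    {Ψ : En n × En n → ℂ} (hΨ : Sm Ψ) (hz : ∀ w, w ∉ Bx n 2 → Ψ w = 0) :
    ∃ C : ℝ≥0∞, C ≠ ⊤ ∧ ∀ N : ℝ, 1 ≤ N →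
      (N ≤ 2 ∨ ∀ w, ‖w.1‖ ≤ 1 / 2 → ‖w.2‖ ≤ 1 / 2 → Ψ w = 0) →
      ∀ f g : En n → ℂ, Continuous f → Continuous g → Nice f → Nice g →
      eLpNorm (TT (fun q => F q * Ψ (N⁻¹ • q.2)) (ft f) (ft g)) r volume ≤
        C * ENNReal.ofReal (N ^ (m + (1 - ρ) * (n * kap q₁ q₂ r))) *
          (eLpNorm f q₁ volume * eLpNorm g q₂ volume) := by
  obtain ⟨C, hC, h⟩ := thmN n q₁ q₂ r h₁ h₂ hr0 hrt hrel
  obtain ⟨D, hD, hG⟩ := piece_Gl hδρ hρ1 (10 * n) hF hΨ hz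
  set κ := kap q₁ q₂ r
  refine ⟨C * ENNReal.ofReal (D * 2 ^ (n * κ)), ENNReal.mul_ne_top hC (by simp),
    fun N hN hN2 f g hf hg nf ng => ?_⟩
  have hN0 : 0 < N := by linarith
  set s := N ^ ρ with hs
  have hs0 : 0 < s := by positivity
  have hcs : N ^ (-(1 - ρ)) = N⁻¹ * s := by
    rw [hs, ← Real.rpow_neg_one, ← Real.rpow_add hN0]; congr 1; ring
  have hGl := hG N hN hN2
  have hR : 1 ≤ 2 * N ^ (1 - ρ) := by
    have := Real.one_le_rpow hN (by linarith : 0 ≤ 1 - ρ)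
    linarith
  have key := h _ _ _ hR hGl (dil s⁻¹ f) (dil s⁻¹ g) (by unfold dil; fun_prop)
    (by unfold dil; fun_prop) (nf.dil (by positivity)) (ng.dil (by positivity))
  have e1 : TT (fun q => F q * Ψ (N⁻¹ • q.2)) (ft f) (ft g) =
      dil s (TT (fun q => F (Ls n s q) * Ψ ((N ^ (-(1 - ρ)) : ℝ) • q.2)) (ft (dil s⁻¹ f))
        (ft (dil s⁻¹ g))) := by
    funext x
    rw [TT_dil hs0, dil]
    simp only [hcs, Ls_apply, smul_smul]
  rw [e1, eLp_dil hs0]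
  have hsum : ENNReal.ofReal (s ^ (-(n : ℝ) * r⁻¹.toReal)) *
      (ENNReal.ofReal (s⁻¹ ^ (-(n : ℝ) * q₁⁻¹.toReal)) *
        ENNReal.ofReal (s⁻¹ ^ (-(n : ℝ) * q₂⁻¹.toReal))) = 1 := by
    rw [← ENNReal.ofReal_mul (by positivity), ← ENNReal.ofReal_mul (by positivity),
      Real.inv_rpow hs0.le, Real.inv_rpow hs0.le, ← Real.rpow_neg hs0.le, ← Real.rpow_neg hs0.le,
      ← Real.rpow_add hs0, ← Real.rpow_add hs0]
    have f1 : q₁⁻¹ ≠ ⊤ := by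
      have := (zero_lt_one.trans_le h₁).ne'
      simpa using this
    have f2 : q₂⁻¹ ≠ ⊤ := by
      have := (zero_lt_one.trans_le h₂).ne'
      simpa using this
    have hc : r⁻¹.toReal = q₁⁻¹.toReal + q₂⁻¹.toReal := by rw [hrel, ENNReal.toReal_add f1 f2]
    rw [hc, show -(n : ℝ) * (q₁⁻¹.toReal + q₂⁻¹.toReal) + (-(-(n : ℝ) * q₁⁻¹.toReal) +
      -(-(n : ℝ) * q₂⁻¹.toReal)) = 0 by ring]
    simp
  have hB : ENNReal.ofReal (D * N ^ m * (2 * N ^ (1 - ρ)) ^ (n * κ)) =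
      ENNReal.ofReal (D * 2 ^ (n * κ)) * ENNReal.ofReal (N ^ (m + (1 - ρ) * (n * κ))) := by
    rw [← ENNReal.ofReal_mul (by positivity), Real.mul_rpow (by norm_num) (by positivity),
      ← Real.rpow_mul hN0.le, Real.rpow_add hN0]
    congr 1; ring
  rw [eLp_dil (inv_pos.2 hs0), eLp_dil (inv_pos.2 hs0), hB] at key
  refine (mul_le_mul_right key _).trans (le_of_eq ?_)
  rw [← mul_one (C * ENNReal.ofReal (D * 2 ^ (n * κ)) *
    ENNReal.ofReal (N ^ (m + (1 - ρ) * (n * κ))) * (eLpNorm f q₁ volume * eLpNorm g q₂ volume)),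
    ← hsum]
  ring

end Asm

section Fin

variable {n : ℕ}

theorem qtri {r : ℝ≥0∞} (hr0 : 0 < r) (hrt : r < ⊤) {f g : En n → ℂ}
    (hf : AEStronglyMeasurable f volume) (hg : AEStronglyMeasurable g volume) :
    eLpNorm (f + g) r volume ^ (min 1 r.toReal) ≤
      eLpNorm f r volume ^ (min 1 r.toReal) + eLpNorm g r volume ^ (min 1 r.toReal) := by
  have ht0 : 0 < r.toReal := ENNReal.toReal_pos hr0.ne' hrt.ne
  rcases le_total 1 r.toReal with h | h
  · rw [min_eq_left h]
    simp only [ENNReal.rpow_one]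
    refine eLpNorm_add_le hf hg ?_
    rw [← ENNReal.ofReal_toReal hrt.ne]
    exact ENNReal.one_le_ofReal.2 h
  · rw [min_eq_right h]
    have hnorm : ∀ (h : En n → ℂ), eLpNorm h r volume ^ r.toReal = ∫⁻ x, ‖h x‖ₑ ^ r.toReal := by
      intro h
      rw [eLpNorm_eq_lintegral_rpow_enorm_toReal hr0.ne' hrt.ne, ← ENNReal.rpow_mul,
        one_div_mul_cancel ht0.ne', ENNReal.rpow_one]
    rw [hnorm, hnorm, hnorm, ← lintegral_add_left' (hf.enorm.pow_const _)]
    refine lintegral_mono fun x => ?_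
    calc ‖f x + g x‖ₑ ^ r.toReal ≤ (‖f x‖ₑ + ‖g x‖ₑ) ^ r.toReal := by
          gcongr; exact enorm_add_le _ _
      _ ≤ _ := ENNReal.rpow_add_le_add_rpow _ _ ht0.le h

/-- The dyadic cut-offs. -/
def psj (j : ℕ) (w : En n × En n) : ℂ :=
  match j with
  | 0 => ph (((2 : ℝ) ^ 0)⁻¹ • w)
  | j + 1 => th (((2 : ℝ) ^ (j + 1))⁻¹ • w)

theorem psj_sum (J : ℕ) (w : En n × En n) :
    ph (((2 : ℝ) ^ J)⁻¹ • w) + psj (J + 1) w = ph (((2 : ℝ) ^ (J + 1))⁻¹ • w) := by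
  simp only [psj, th, smul_smul]
  rw [show (2 : ℝ) * (2 ^ (J + 1))⁻¹ = (2 ^ J)⁻¹ by rw [pow_succ]; field_simp]
  ring

theorem th_norm (w : En n × En n) : ‖th w‖ ≤ 2 := by
  have h1 := ph_norm w
  have h2 := ph_norm ((2 : ℝ) • w)
  exact (norm_sub_le _ _).trans (by linarith)

set_option maxHeartbeats 400000 in
theorem final (q₁ q₂ r : ℝ≥0∞) (h₁ : 1 ≤ q₁) (h₂ : 1 ≤ q₂) (hr0 : 0 < r) (hrt : r < ⊤)
    (hrel : r⁻¹ = q₁⁻¹ + q₂⁻¹) {ρ δ m : ℝ} (hδρ : δ ≤ ρ) (hρ1 : ρ ≤ 1)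
    (hm0 : m ≤ 0) (hm : m + (1 - ρ) * (n * kap q₁ q₂ r) < 0)
    {F : E3 n → ℂ} (hF : Hor m ρ δ F) :
    ∃ C : ℝ≥0∞, C ≠ ⊤ ∧ ∀ f g : 𝓢(En n, ℂ),
      eLpNorm (TT F (ft f) (ft g)) r volume ≤
        C * (eLpNorm f q₁ volume * eLpNorm g q₂ volume) := by
  obtain ⟨C0, hC0, k0⟩ := piece_est q₁ q₂ r h₁ h₂ hr0 hrt hrel hδρ hρ1 hF ph_sm
    (fun w hw => ph_zero hw)
  obtain ⟨C1, hC1, k1⟩ := piece_est q₁ q₂ r h₁ h₂ hr0 hrt hrel hδρ hρ1 hF th_sm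
    (fun w hw => th_zero hw)
  obtain ⟨M, hM, hFM'⟩ := hF.size
  have hFM : ∀ q, ‖F q‖ ≤ M := fun q => by
    refine (hFM' q).trans (mul_le_of_le_one_right hM ?_)
    refine Real.rpow_le_one_of_one_le_of_nonpos ?_ hm0
    have := norm_nonneg q.2.1
    have := norm_nonneg q.2.2
    linarith
  set e := m + (1 - ρ) * (n * kap q₁ q₂ r) with he
  set p := min 1 r.toReal with hp
  have hp0 : 0 < p := lt_min one_pos (ENNReal.toReal_pos hr0.ne' hrt.ne)
  set D := C0 + C1 with hDdef
  have hD : D ≠ ⊤ := ENNReal.add_ne_top.2 ⟨hC0, hC1⟩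
  set x : ℝ≥0∞ := ENNReal.ofReal (2 ^ e) ^ p with hx
  have hx1 : x < 1 := by
    refine ENNReal.rpow_lt_one ?_ hp0
    rw [ENNReal.ofReal_lt_one]
    exact Real.rpow_lt_one_of_one_lt_of_neg (by norm_num) hm
  have hS : ∑' j : ℕ, x ^ j ≠ ⊤ := by
    rw [ENNReal.tsum_geometric]
    exact ENNReal.inv_ne_top.2 (tsub_pos_of_lt hx1).ne'
  refine ⟨D * (∑' j : ℕ, x ^ j) ^ (1 / p), ENNReal.mul_ne_top hD
    (ENNReal.rpow_ne_top_of_nonneg (by positivity) hS), fun f g => ?_⟩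
  set NN := eLpNorm f q₁ volume * eLpNorm g q₂ volume with hNN
  have nf := schwartz_nice f
  have ng := schwartz_nice g
  have cU := ft_continuous nf.integrable
  have cV := ft_continuous ng.integrable
  have hFc := hF.1.continuous
  have cph : Continuous (ph (n := n)) := ph_sm.continuous
  have cth : Continuous (th (n := n)) := th_sm.continuous
  set T : ℕ → En n → ℂ := fun J => TT (fun q => F q * ph (((2 : ℝ) ^ J)⁻¹ • q.2)) (ft f) (ft g)
  set S : ℕ → En n → ℂ := fun J => TT (fun q => F q * psj J q.2) (ft f) (ft g)
  have cps : ∀ j, Continuous (psj (n := n) j) := fun j => by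
    cases j with
    | zero => exact cph.comp (by fun_prop)
    | succ j => exact cth.comp (by fun_prop)
  have hps : ∀ j, ∀ w, ‖psj (n := n) j w‖ ≤ 2 := fun j w => by
    cases j with
    | zero => exact (ph_norm _).trans (by norm_num)
    | succ j => exact th_norm _
  have mT : ∀ J, AEStronglyMeasurable (T J) volume := fun J =>
    (TT_meas (by fun_prop) cU cV).aestronglyMeasurable
  have mS : ∀ J, AEStronglyMeasurable (S J) volume := fun J =>
    (TT_meas (by have := cps J; fun_prop) cU cV).aestronglyMeasurable
  have iU := ft_schwartz_int f
  have iV := ft_schwartz_int g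
  have hpow : ∀ j : ℕ, ENNReal.ofReal (((2 : ℝ) ^ j) ^ e) ^ p = x ^ j := by
    intro j
    rw [hx, ← Real.rpow_natCast, ← Real.rpow_mul (by norm_num), mul_comm, Real.rpow_mul (by norm_num),
      Real.rpow_natCast, ENNReal.ofReal_pow (by positivity), ← ENNReal.rpow_natCast,
      ← ENNReal.rpow_natCast, ← ENNReal.rpow_mul, ← ENNReal.rpow_mul, mul_comm]
  have bS : ∀ j, eLpNorm (S j) r volume ^ p ≤ (D * NN) ^ p * x ^ j := by
    intro j
    rw [← hpow, ← ENNReal.mul_rpow_of_nonneg _ _ hp0.le]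
    refine ENNReal.rpow_le_rpow ?_ hp0.le
    cases j with
    | zero =>
      refine (k0 (2 ^ 0) (by norm_num) (Or.inl (by norm_num)) f g f.continuous g.continuous
        nf ng).trans ?_
      calc _ = C0 * NN * ENNReal.ofReal (((2 : ℝ) ^ 0) ^ e) := by ring
        _ ≤ _ := by gcongr; exact le_self_add
    | succ j =>
      refine (k1 (2 ^ (j + 1)) (one_le_pow₀ (by norm_num))
        (Or.inr fun w hw1 hw2 => th_zero2 hw1 hw2) f g f.continuous g.continuous
        nf ng).trans ?_
      calc _ = C1 * NN * ENNReal.ofReal (((2 : ℝ) ^ (j + 1)) ^ e) := by ring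
        _ ≤ _ := by gcongr; exact le_add_self
  have hTS : ∀ J, T (J + 1) = T J + S (J + 1) := by
    intro J
    funext y
    simp only [T, S, Pi.add_apply, TT]
    rw [← integral_add]
    · congr 1; funext w
      rw [← psj_sum J w]; ring
    · refine TT_bint (A := fun q => F q * ph (((2 : ℝ) ^ J)⁻¹ • q.2)) (by fun_prop)
        (C := M * 1) (fun q => ?_) iU iV y
      rw [norm_mul]
      exact mul_le_mul (hFM q) (ph_norm _) (norm_nonneg _) hM
    · refine TT_bint (A := fun q => F q * psj (J + 1) q.2)
        (by have := cps (J + 1); fun_prop) (C := M * 2) (fun q => ?_) iU iV y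
      rw [norm_mul]
      exact mul_le_mul (hFM q) (hps _ _) (norm_nonneg _) hM
  have hT0 : T 0 = S 0 := rfl
  have bT : ∀ J, eLpNorm (T J) r volume ^ p ≤ (D * NN) ^ p * ∑ j ∈ Finset.range (J + 1), x ^ j := by
    intro J
    induction J with
    | zero => simpa [hT0] using bS 0
    | succ J ih =>
      rw [hTS, Finset.sum_range_succ, mul_add]
      exact (qtri hr0 hrt (mT J) (mS _)).trans (add_le_add ih (bS _))
  have bT2 : ∀ J, eLpNorm (T J) r volume ≤ D * (∑' j : ℕ, x ^ j) ^ (1 / p) * NN := by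
    intro J
    have h := (bT J).trans (mul_le_mul_right (ENNReal.sum_le_tsum _) _)
    have h4 := ENNReal.rpow_le_rpow h (by positivity : 0 ≤ 1 / p)
    have hinv : ∀ x : ℝ≥0∞, (x ^ p) ^ (1 / p) = x := fun x => by
      rw [← ENNReal.rpow_mul, mul_one_div_cancel hp0.ne', ENNReal.rpow_one]
    rw [hinv, ENNReal.mul_rpow_of_nonneg _ _ (by positivity), hinv] at h4
    refine h4.trans (le_of_eq (by ring))
  have hlim : ∀ y, Filter.Tendsto (fun J => T J y) Filter.atTop (nhds (TT F (ft f) (ft g) y)) := by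
    intro y
    simp only [T, TT]
    have hI := TT_bint hFc hFM iU iV y
    refine tendsto_integral_of_dominated_convergence _ (fun J => ?_) hI.norm (fun J => ?_) ?_
    · have := continuous_ex
      exact Continuous.aestronglyMeasurable (by fun_prop)
    · refine Filter.Eventually.of_forall fun w => ?_
      simp only [norm_mul]
      gcongr
      exact mul_le_of_le_one_right (norm_nonneg _) (ph_norm _)
    · refine Filter.Eventually.of_forall fun w => ?_
      refine tendsto_const_nhds.congr' ?_
      have hN : Filter.Tendsto (fun J : ℕ => (2 : ℝ) ^ J) Filter.atTop Filter.atTop :=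
        tendsto_pow_atTop_atTop_of_one_lt (by norm_num)
      filter_upwards [hN.eventually_ge_atTop (‖w.1‖ + ‖w.2‖)] with J hJ
      have hpos : (0 : ℝ) < 2 ^ J := by positivity
      have a1 := norm_nonneg w.1
      have a2 := norm_nonneg w.2
      have hn : ∀ v : En n, ‖v‖ ≤ 2 ^ J → ‖((2 : ℝ) ^ J)⁻¹ • v‖ ≤ 1 := fun v hv => by
        rw [norm_smul, Real.norm_of_nonneg (by positivity), inv_mul_le_iff₀ hpos]; linarith
      have hone : ph (((2 : ℝ) ^ J)⁻¹ • w) = 1 :=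
        ph_one (w := ((2 : ℝ) ^ J)⁻¹ • w) (hn w.1 (by linarith)) (hn w.2 (by linarith))
      rw [hone, mul_one]
  refine (Lp.eLpNorm_lim_le_liminf_eLpNorm mT _ (Filter.Eventually.of_forall hlim)).trans ?_
  refine Filter.liminf_le_of_le ?_ ?_
  · exact ⟨0, Filter.Eventually.of_forall fun _ => zero_le⟩
  · intro b hb
    obtain ⟨J, hJ⟩ := hb.exists
    exact hJ.trans (bT2 J)

end Fin

/-- Theorem 5.20: improvement of the result of
Bényi–Bernicot–Maldonado–Naibo–Torres. -/
theorem statement19 {n : ℕ} (r q₁ q₂ : ℝ≥0∞) (hq₁ : 1 ≤ q₁) (hq₂ : 1 ≤ q₂)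
    (hr0 : 0 < r) (hr1 : r < ⊤) (hrel : r⁻¹ = q₁⁻¹ + q₂⁻¹)
    (m ρ δ : ℝ) (hρ0 : 0 < ρ) (hρ1 : ρ ≤ 1) (hδρ : δ ≤ ρ) (hδ : δ < 1)
    (hm : m < (n : ℝ) * (ρ - 1) *
      (max (max (1 / 2) (max q₁⁻¹.toReal q₂⁻¹.toReal)) (1 - r⁻¹.toReal) +
        (1 / 2) * max (r⁻¹.toReal - 1) 0))
    (a : En n → En n → En n → ℂ) (ha : HormS2 m ρ δ a) :
    ∃ C : ℝ, 0 < C ∧ ∀ f g : 𝓢(En n, ℂ),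
      eLpNorm (bfio a (fun x ξ => ⟪x, ξ⟫) (fun x η => ⟪x, η⟫) (⇑f) (⇑g)) r volume ≤
        ENNReal.ofReal C * eLpNorm (⇑f) q₁ volume * eLpNorm (⇑g) q₂ volume := by
  have hk := kap_le q₁ q₂ r hq₁ hq₂ hr0 hrel
  set K := max (max (1 / 2) (max q₁⁻¹.toReal q₂⁻¹.toReal)) (1 - r⁻¹.toReal) +
        (1 / 2) * max (r⁻¹.toReal - 1) 0 with hK
  have hK0 : 0 ≤ K := by
    have : (1 : ℝ) / 2 ≤ max (max (1 / 2) (max q₁⁻¹.toReal q₂⁻¹.toReal)) (1 - r⁻¹.toReal) :=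
      (le_max_left _ _).trans (le_max_left _ _)
    have : 0 ≤ max (r⁻¹.toReal - 1) 0 := le_max_right _ _
    rw [hK]; linarith
  have hn : (0 : ℝ) ≤ n * (1 - ρ) := mul_nonneg (Nat.cast_nonneg n) (by linarith)
  have h1 := mul_le_mul_of_nonneg_left hk hn
  have h2 := mul_nonneg hn hK0
  obtain ⟨C, hC, h⟩ := final q₁ q₂ r hq₁ hq₂ hr0 hr1 hrel hδρ hρ1 (m := m)
    (by linarith) (by linarith) ha.hor
  refine ⟨C.toReal + 1, by positivity, fun f g => ?_⟩
  rw [mul_assoc]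
  refine (h f g).trans (mul_le_mul_left ?_ _)
  rw [← ENNReal.ofReal_toReal hC]
  exact ENNReal.ofReal_le_ofReal (by simp)
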